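/- arXiv:2509.25432 — 2 statements merged into one kernel-verified Lean document; each statement's English description precedes it below -/
import Mathlib

section
/- Let $k$ be an algebraically closed field and let $C \subset \mathbb{P}^2_k$ be a smooth plane curve of degree $d \geq 4$. Then every $g^1_{d-1}$ on $C$ is of the form $\mathcal{O}_C(1)(-p)$ for some point $p \in C$: that is, if $\mathcal{L}$ is a line bundle on $C$ of degree $d-1$ with $h^0(C, \mathcal{L}) \geq 2$, then there exists a point $p \in C$ such that $\mathcal{L} \cong \mathcal{O}_C(1) \otimes \mathcal{O}_C(-p)$. Equivalently, every divisor of degree $d-1$ on $C$ with $\ell(D) \geq 2$ is linearly equivalent to $H - p$ for some $p \in C$, where $H$ is the intersection divisor of $C$ with a line in $\mathbb{P}^2_k$. -/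
/-!
Framework: a smooth plane curve of degree `d` over an algebraically closed field `k` is
`C = V(f) ⊆ ℙ²_k` for `f ∈ k[X₀,X₁,X₂]` homogeneous of degree `d` whose only common zero
with its partial derivatives is the origin.  We realize the points of `C`, the order of
vanishing at a point of `C` of a homogeneous polynomial, Riemann–Roch spaces `L(D)` of
divisors on `C` (inside the fraction field `F` of the homogeneous coordinate ring of `C`,
as the degree-zero fractions `g/h` with `div(g/h) + D ≥ 0`), and `h⁰(C, O_C(D)) = dim L(D)`.
-/

noncomputable section PlaneCurve

variable {k : Type*} [Field k]

/-- The points of the plane curve `V(f) ⊆ ℙ²_k`: points of the projectivization of `k³`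
whose (fixed) representative vector is a zero of `f`.  (For homogeneous `f` this is
independent of the representative.) -/
def PlanePoint (f : MvPolynomial (Fin 3) k) : Type _ :=
  { p : Projectivization k (Fin 3 → k) // MvPolynomial.eval p.rep f = 0 }

open Classical in
/-- The inhomogeneous polynomial `ℓ - 1`, where `ℓ` is a linear form with `ℓ(v) = 1`;
the hyperplane `ℓ = 1` is an affine chart of `ℙ²` containing the point `[v]`. -/
def slicePoly (v : Fin 3 → k) : MvPolynomial (Fin 3) k :=
  if hv : ∃ i, v i ≠ 0 then
    MvPolynomial.C (v hv.choose)⁻¹ * MvPolynomial.X hv.choose - 1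
  else 0

/-- The order of vanishing, at the point `p` of the curve `C = V(f)`, of the restriction
to `C` of a homogeneous polynomial `g`: in the affine chart `ℓ = 1` of `ℙ²` containing `p`,
it is the largest `n` such that, locally at `p` (i.e., after multiplying by some polynomial
not vanishing at `p`), `g` lies in the `n`-th power of the maximal ideal of `p` on the
affine curve `{f = 0, ℓ = 1}`. -/
def ordAt (f : MvPolynomial (Fin 3) k) (p : PlanePoint f) (g : MvPolynomial (Fin 3) k) : ℕ :=
  sSup { n : ℕ | ∃ h : MvPolynomial (Fin 3) k, MvPolynomial.eval p.1.rep h ≠ 0 ∧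
    h * g ∈ Ideal.span {f, slicePoly p.1.rep} +
      (RingHom.ker (MvPolynomial.eval p.1.rep)) ^ n }

variable (F : Type*) [CommRing F]

/-- The Riemann–Roch space `L(D) = H⁰(C, O_C(D))` of a divisor `D` on the smooth plane
curve `C = V(f)`, realized inside the fraction field `F` of the homogeneous coordinate ring
`k[X₀,X₁,X₂]/(f)` of `C`: it consists of `0` together with all degree-zero fractions `g/h`
(`g`, `h` homogeneous of the same degree, neither divisible by `f`) with `div(g/h) + D ≥ 0`. -/
def RRspace (f : MvPolynomial (Fin 3) k)
    [Algebra (MvPolynomial (Fin 3) k ⧸ Ideal.span {f}) F]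
    (D : PlanePoint f → ℤ) : Set F :=
  {φ | φ = 0 ∨ ∃ (e : ℕ) (g h : MvPolynomial (Fin 3) k),
    g.IsHomogeneous e ∧ h.IsHomogeneous e ∧ ¬ f ∣ g ∧ ¬ f ∣ h ∧
    φ * algebraMap (MvPolynomial (Fin 3) k ⧸ Ideal.span {f}) F
          (Ideal.Quotient.mk (Ideal.span {f}) h)
      = algebraMap (MvPolynomial (Fin 3) k ⧸ Ideal.span {f}) F
          (Ideal.Quotient.mk (Ideal.span {f}) g) ∧
    ∀ p : PlanePoint f, 0 ≤ (ordAt f p g : ℤ) - (ordAt f p h : ℤ) + D p}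

/-- `h⁰(C, O_C(D))`: the dimension over `k` of the Riemann–Roch space of the divisor `D`. -/
def h0 (f : MvPolynomial (Fin 3) k)
    [Algebra (MvPolynomial (Fin 3) k ⧸ Ideal.span {f}) F] [Algebra k F]
    (D : PlanePoint f → ℤ) : ℕ :=
  Module.finrank k (Submodule.span k (RRspace F f D))

end PlaneCurve

section PartA

theorem abs_val {k S : Type*} [Field k] [CommRing S] [IsNoetherianRing S] [Algebra k S]
    (I m : Ideal S) [hI : I.IsPrime] [hmm : m.IsMaximal] (hIm : I ≤ m) (s : S) (hs : s ∈ m)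
    (hsI : s ∉ I) (hm : m ≤ I ⊔ Ideal.span {s} ⊔ m ^ 2)
    (hk : ∀ x : S, ∃ c : k, x - algebraMap k S c ∈ m) :
    ∃ val : S → ℕ∞,
      (∀ a b, val (a * b) = val a + val b) ∧ (∀ a b, min (val a) (val b) ≤ val (a + b)) ∧
      (∀ (n : ℕ) g, (n : ℕ∞) ≤ val g ↔ ∃ h, h ∉ m ∧ h * g ∈ I + m ^ n) ∧
      (∀ g, val g = ⊤ ↔ g ∈ I) ∧ val s = 1 ∧
      (∀ (n : ℕ) a b, val a = n → (n : ℕ∞) ≤ val b →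
        ∃ c : k, ((n + 1 : ℕ) : ℕ∞) ≤ val (b - algebraMap k S c * a)) := by
  let π : S →+* S ⧸ I := Ideal.Quotient.mk I
  have hπ : Function.Surjective π := Ideal.Quotient.mk_surjective
  have hker : RingHom.ker π = I := Ideal.mk_ker
  let q : Ideal (S ⧸ I) := m.map π
  have hcomap : q.comap π = m := by
    rw [Ideal.comap_map_of_surjective _ hπ, ← RingHom.ker_eq_comap_bot, hker, sup_eq_left.2 hIm]
  have hmemq : ∀ x : S, π x ∈ q ↔ x ∈ m := fun x => by
    conv_rhs => rw [← hcomap]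
    rfl
  have hqm : q.IsMaximal := by
    refine (Ideal.map_eq_top_or_isMaximal_of_surjective π hπ hmm).resolve_left ?_
    intro h
    have h1 : π 1 ∈ q := by
      change π 1 ∈ m.map π
      rw [h]; trivial
    rw [hmemq] at h1
    exact hmm.ne_top ((Ideal.eq_top_iff_one _).2 h1)
  have hqp : q.IsPrime := hqm.isPrime
  let O := Localization.AtPrime q
  let φ : S →+* O := (algebraMap (S ⧸ I) O).comp π
  have hinj : Function.Injective (algebraMap (S ⧸ I) O) :=
    IsLocalization.injective O q.primeCompl_le_nonZeroDivisors
  have hφ0 : ∀ g, φ g = 0 ↔ g ∈ I := fun g => by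
    change algebraMap (S ⧸ I) O (π g) = 0 ↔ _
    rw [map_eq_zero_iff _ hinj]
    exact Ideal.Quotient.eq_zero_iff_mem
  have : IsDomain O := IsLocalization.isDomain_localization q.primeCompl_le_nonZeroDivisors
  have : IsNoetherianRing O := IsLocalization.isNoetherianRing q.primeCompl O inferInstance
  have hmax : IsLocalRing.maximalIdeal O = q.map (algebraMap (S ⧸ I) O) :=
    (IsLocalization.AtPrime.map_eq_maximalIdeal q O).symm
  have hmax2 : IsLocalRing.maximalIdeal O = m.map φ := by
    rw [hmax, Ideal.map_map]
  have hIbot : I.map φ = ⊥ := by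
    rw [Ideal.map_eq_bot_iff_le_ker]
    intro x hx
    exact (hφ0 x).2 hx
  -- principal
  have hprin : IsLocalRing.maximalIdeal O = Ideal.span {φ s} := by
    apply le_antisymm
    · refine Submodule.le_of_le_smul_of_le_jacobson_bot (I := IsLocalRing.maximalIdeal O)
        (IsNoetherian.noetherian _) (IsLocalRing.maximalIdeal_le_jacobson _) ?_
      have := Ideal.map_mono (f := φ) hm
      rw [Ideal.map_sup, Ideal.map_sup, hIbot, Ideal.map_pow, ← hmax2, Ideal.map_span,
        Set.image_singleton, bot_sup_eq, pow_two] at this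
      exact this
    · rw [Ideal.span_singleton_le_iff_mem, hmax2]
      exact Ideal.mem_map_of_mem _ hs
  have hs0 : φ s ≠ 0 := fun h => hsI ((hφ0 s).1 h)
  have hnf : ¬ IsField O := by
    rw [IsLocalRing.isField_iff_maximalIdeal_eq, hprin, Ideal.span_singleton_eq_bot]
    exact hs0
  have : IsDiscreteValuationRing O :=
    by
    have h1 : (IsLocalRing.maximalIdeal O).IsPrincipal := ⟨⟨φ s, hprin⟩⟩
    exact ((IsDiscreteValuationRing.TFAE O hnf).out 0 4).2 h1
  have hirr : Irreducible (φ s) :=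
    (IsDiscreteValuationRing.irreducible_iff_uniformizer _).2 hprin
  have hle : ∀ (n : ℕ) (x : O), (n : ℕ∞) ≤ IsDiscreteValuationRing.addVal O x ↔
      x ∈ IsLocalRing.maximalIdeal O ^ n := by
    intro n x
    rw [hprin, Ideal.span_singleton_pow, Ideal.mem_span_singleton,
      ← IsDiscreteValuationRing.addVal_le_iff_dvd, IsDiscreteValuationRing.addVal_pow,
      IsDiscreteValuationRing.addVal_uniformizer hirr]
    simp
  have hmem : ∀ (n : ℕ) (g : S), φ g ∈ IsLocalRing.maximalIdeal O ^ n ↔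
      ∃ h, h ∉ m ∧ h * g ∈ I + m ^ n := by
    intro n g
    rw [hmax, ← Ideal.map_pow]
    change algebraMap (S ⧸ I) O (π g) ∈ _ ↔ _
    rw [IsLocalization.algebraMap_mem_map_algebraMap_iff q.primeCompl O]
    have key : ∀ x : S, π x ∈ q ^ n ↔ x ∈ I + m ^ n := by
      intro x
      change π x ∈ (m.map π) ^ n ↔ _
      rw [← Ideal.map_pow, ← Ideal.mem_comap, Ideal.comap_map_of_surjective _ hπ,
        ← RingHom.ker_eq_comap_bot, hker, Submodule.add_eq_sup, sup_comm]
    constructor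
    · rintro ⟨h, hh, hx⟩
      obtain ⟨h, rfl⟩ := hπ h
      refine ⟨h, fun hc => hh ((hmemq h).2 hc), ?_⟩
      rw [← map_mul, key] at hx
      exact hx
    · rintro ⟨h, hh, hx⟩
      refine ⟨π h, fun hc => hh ((hmemq h).1 hc), ?_⟩
      rw [← map_mul, key]
      exact hx
  refine ⟨fun g => IsDiscreteValuationRing.addVal O (φ g), ?_, ?_, ?_, ?_, ?_, ?_⟩
  · intro a b
    simp only [map_mul, IsDiscreteValuationRing.addVal_mul]
  · intro a b
    simp only [map_add]
    exact IsDiscreteValuationRing.addVal_add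
  · intro n g
    rw [hle, hmem]
  · intro g
    rw [IsDiscreteValuationRing.addVal_eq_top_iff, hφ0]
  · exact IsDiscreteValuationRing.addVal_uniformizer hirr
  · intro n a b ha hb
    change IsDiscreteValuationRing.addVal O (φ a) = n at ha
    have hdvd : φ a ∣ φ b := by
      rw [← IsDiscreteValuationRing.addVal_le_iff_dvd, ha]; exact hb
    obtain ⟨r, hr⟩ := hdvd
    obtain ⟨⟨x, y⟩, hxy⟩ := IsLocalization.surj q.primeCompl r
    obtain ⟨x, rfl⟩ := hπ x
    obtain ⟨y, hy⟩ := y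
    obtain ⟨y, rfl⟩ := hπ y
    have hy' : y ∉ m := fun h => hy ((hmemq y).2 h)
    change r * φ y = φ x at hxy
    obtain ⟨cx, hcx⟩ := hk x
    obtain ⟨cy, hcy⟩ := hk y
    have hcy0 : cy ≠ 0 := by
      rintro rfl
      simp at hcy
      exact hy' hcy
    refine ⟨cx / cy, ?_⟩
    have hmm' : x - algebraMap k S (cx / cy) * y ∈ m := by
      have : x - algebraMap k S (cx / cy) * y = (x - algebraMap k S cx) -
          algebraMap k S (cx / cy) * (y - algebraMap k S cy) := by
        rw [mul_sub, ← map_mul, div_mul_cancel₀ _ hcy0]; ring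
      rw [this]
      exact m.sub_mem hcx (m.mul_mem_left _ hcy)
    have e1 : φ y * φ (b - algebraMap k S (cx / cy) * a)
        = φ (x - algebraMap k S (cx / cy) * y) * φ a := by
      simp only [map_sub, map_mul, hr, ← hxy]; ring
    have v1 : IsDiscreteValuationRing.addVal O (φ y) = 0 := by
      have hu : ¬ (((1 : ℕ) : ℕ∞) ≤ IsDiscreteValuationRing.addVal O (φ y)) := by
        rw [hle, pow_one, hmax]
        change ¬ (algebraMap (S ⧸ I) O (π y) ∈ _)
        have := IsLocalization.AtPrime.to_map_mem_maximal_iff O q (π y)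
        rw [← hmax, this, hmemq]
        exact hy'
      rw [Nat.cast_one, Order.one_le_iff_ne_zero, not_not] at hu
      exact hu
    have v2 : ((1 : ℕ) : ℕ∞) ≤
        IsDiscreteValuationRing.addVal O (φ (x - algebraMap k S (cx / cy) * y)) := by
      rw [hle, pow_one, hmax2]
      exact Ideal.mem_map_of_mem _ hmm'
    have e2 := congrArg (IsDiscreteValuationRing.addVal O) e1
    rw [IsDiscreteValuationRing.addVal_mul, IsDiscreteValuationRing.addVal_mul, v1, zero_add,
      ha] at e2
    change _ ≤ IsDiscreteValuationRing.addVal O (φ (b - algebraMap k S (cx / cy) * a))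
    rw [e2, Nat.cast_add, add_comm]
    gcongr

end PartA

section PartB

open MvPolynomial

theorem homog_aeval_scale {k A : Type*} [Field k] [CommRing A] [Algebra k A] {n : ℕ}
    {g : MvPolynomial (Fin n) k} {e : ℕ} (hg : g.IsHomogeneous e) (t : A) (y : Fin n → A) :
    aeval (fun j => t * y j) g = t ^ e * aeval y g := by
  rw [aeval_def, aeval_def, eval₂_eq', eval₂_eq', Finset.mul_sum]
  refine Finset.sum_congr rfl fun d hd => ?_
  have h1 : ∑ i, d i = e := by
    have := hg.degree_eq_sum_deg_support hd
    rw [this]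
    symm
    apply Finset.sum_subset (Finset.subset_univ _)
    intro x _ hx
    exact Finsupp.notMem_support_iff.1 hx
  simp only [mul_pow, Finset.prod_mul_distrib, Finset.prod_pow_eq_pow_sum, h1]
  ring

theorem homog_dvd_eq_zero {k : Type*} [Field k] {n : ℕ} {f g : MvPolynomial (Fin n) k} {d e : ℕ}
    (hf : f.IsHomogeneous d) (hg : g.IsHomogeneous e) (hlt : e < d) (h : f ∣ g) : g = 0 := by
  by_contra hne
  have h1 := totalDegree_le_of_dvd_of_isDomain h hne
  have hf0 : f ≠ 0 := by
    rintro rfl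
    exact hne (zero_dvd_iff.1 h)
  rw [hf.totalDegree hf0, hg.totalDegree hne] at h1
  omega

theorem slice_ideal {k : Type*} [Field k] {f : MvPolynomial (Fin 3) k} {d : ℕ}
    (hf : f.IsHomogeneous d) (hd : 2 ≤ d) (hp : Prime f) (i : Fin 3) (c : k) (hc : c ≠ 0) :
    (Ideal.span {f, C c * X i - 1}).IsPrime ∧
    ∀ (g : MvPolynomial (Fin 3) k) (e : ℕ), g.IsHomogeneous e →
      g ∈ Ideal.span {f, C c * X i - 1} → f ∣ g := by
  have hfp : (Ideal.span {f}).IsPrime := (Ideal.span_singleton_prime hp.ne_zero).2 hp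
  let R := MvPolynomial (Fin 3) k ⧸ Ideal.span {f}
  have : IsDomain R := Ideal.Quotient.isDomain _
  let K := FractionRing R
  let ψ : MvPolynomial (Fin 3) k →ₐ[k] K :=
    (IsScalarTower.toAlgHom k R K).comp (Ideal.Quotient.mkₐ k (Ideal.span {f}))
  have hψ : ∀ g, ψ g = 0 ↔ f ∣ g := by
    intro g
    change algebraMap R K (Ideal.Quotient.mk _ g) = 0 ↔ _
    rw [map_eq_zero_iff _ (IsFractionRing.injective R K), Ideal.Quotient.eq_zero_iff_mem,
      Ideal.mem_span_singleton]
  let l : MvPolynomial (Fin 3) k := C c * X i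
  have hl : l.IsHomogeneous 1 := isHomogeneous_C_mul_X c i
  have hl0 : l ≠ 0 := mul_ne_zero (by simpa using hc) (X_ne_zero i)
  have hψl : ψ l ≠ 0 := fun h => hl0 (homog_dvd_eq_zero hf hl (by omega) ((hψ l).1 h))
  let θ : MvPolynomial (Fin 3) k →ₐ[k] K := aeval (fun j => (ψ l)⁻¹ * ψ (X j))
  have hθ : ∀ g e, g.IsHomogeneous e → θ g = ((ψ l)⁻¹) ^ e * ψ g := by
    intro g e hg
    change aeval _ g = _
    rw [homog_aeval_scale hg]
    congr 1
    have : aeval (fun j => ψ (X j)) = ψ := (algHom_ext (fun j => by simp))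
    rw [this]
  have hθ0 : ∀ g e, g.IsHomogeneous e → (θ g = 0 ↔ f ∣ g) := by
    intro g e hg
    rw [hθ g e hg, mul_eq_zero, hψ]
    constructor
    · rintro (h | h)
      · exact absurd h (pow_ne_zero _ (inv_ne_zero hψl))
      · exact h
    · exact Or.inr
  have hθl : θ (C c * X i - 1) = 0 := by
    rw [map_sub, map_one]
    change θ l - 1 = 0
    rw [hθ l 1 hl, pow_one, inv_mul_cancel₀ hψl, sub_self]
  have hker : RingHom.ker θ = Ideal.span {f, C c * X i - 1} := by
    apply le_antisymm
    · intro w hw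
      rw [RingHom.mem_ker] at hw
      set N := w.totalDegree
      let W := ∑ e ∈ Finset.range (N + 1), homogeneousComponent e w * l ^ (N - e)
      have hW : W.IsHomogeneous N := by
        apply IsHomogeneous.sum
        intro e he
        have h1 := (homogeneousComponent_isHomogeneous e w).mul (hl.pow (N - e))
        have : e + 1 * (N - e) = N := by
          have := Finset.mem_range.1 he
          omega
        rwa [this] at h1
      have hlI : l - 1 ∈ Ideal.span {f, C c * X i - 1} :=
        Ideal.subset_span (by right; rfl)
      have hWw : W - w ∈ Ideal.span {l - 1} := by
        have e1 : w = ∑ e ∈ Finset.range (N + 1), homogeneousComponent e w :=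
          (sum_homogeneousComponent w).symm
        have e2 : W - w = ∑ e ∈ Finset.range (N + 1), 
            homogeneousComponent e w * (l ^ (N - e) - 1) := by
          simp only [mul_sub, mul_one, Finset.sum_sub_distrib]
          rw [← e1]
        rw [e2]
        refine Ideal.sum_mem _ fun e _ => Ideal.mul_mem_left _ _ ?_
        rw [Ideal.mem_span_singleton]
        simpa using sub_dvd_pow_sub_pow l 1 (N - e)
      have hWk : θ W = 0 := by
        obtain ⟨r, hr⟩ := Ideal.mem_span_singleton.1 hWw
        have : W = w + (l - 1) * r := by rw [← hr]; ring
        rw [this, map_add, hw, map_mul]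
        change 0 + θ (C c * X i - 1) * _ = 0
        rw [hθl]; simp
      have hfW := (hθ0 W N hW).1 hWk
      have : w = W - (W - w) := by ring
      rw [this]
      refine Ideal.sub_mem _ ?_ ?_
      · exact Ideal.mem_of_dvd _ hfW (Ideal.subset_span (by left; rfl))
      · obtain ⟨r, hr⟩ := Ideal.mem_span_singleton.1 hWw
        rw [hr]
        exact Ideal.mul_mem_right _ _ hlI
    · rw [Ideal.span_le]
      rintro x (rfl | rfl)
      · exact (hθ0 _ d hf).2 dvd_rfl
      · exact hθl
  refine ⟨?_, ?_⟩
  · rw [← hker]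
    exact RingHom.ker_isPrime θ
  · intro g e hg hgI
    rw [← hker] at hgI
    exact (hθ0 g e hg).1 hgI

/-- first order Taylor expansion -/
theorem taylor_one {k : Type*} [Field k] {n : ℕ} (v : Fin n → k) (g : MvPolynomial (Fin n) k) :
    g - C (eval v g) - ∑ j, C (eval v (pderiv j g)) * (X j - C (v j)) ∈
      (RingHom.ker (eval v)) ^ 2 := by
  have hX : ∀ j, (X j - C (v j) : MvPolynomial (Fin n) k) ∈ RingHom.ker (eval v) := fun j => by
    simp [RingHom.mem_ker]
  have hL : ∀ g : MvPolynomial (Fin n) k,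
      ∑ j, C (eval v (pderiv j g)) * (X j - C (v j)) ∈ RingHom.ker (eval v) := fun g =>
    Ideal.sum_mem _ fun j _ => Ideal.mul_mem_left _ _ (hX j)
  have hE : ∀ g : MvPolynomial (Fin n) k, g - C (eval v g) ∈ RingHom.ker (eval v) := fun g => by
    simp [RingHom.mem_ker]
  induction g using MvPolynomial.induction_on with
  | C a => simp
  | add p q hp hq =>
    convert! Ideal.add_mem _ hp hq using 1
    simp only [map_add, add_mul, Finset.sum_add_distrib]
    ring
  | mul_X p i hp =>
    have e1 : ∑ j, C (eval v (pderiv j (p * X i))) * (X j - C (v j)) =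
        C (v i) * ∑ j, C (eval v (pderiv j p)) * (X j - C (v j)) +
          C (eval v p) * (X i - C (v i)) := by
      rw [Finset.mul_sum]
      have : C (eval v p) * (X i - C (v i)) = ∑ j, (if i = j then
          C (eval v p) * (X j - C (v j)) else (0 : MvPolynomial (Fin n) k)) := by simp
      rw [this, ← Finset.sum_add_distrib]
      refine Finset.sum_congr rfl fun j _ => ?_
      simp only [Derivation.leibniz, pderiv_X, smul_eq_mul, map_add, map_mul, eval_X]
      by_cases h : i = j
      · subst h; simp; ring
      · simp [h]; ring
    rw [e1]
    have e2 : p * X i - C (eval v (p * X i)) -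
        (C (v i) * ∑ j, C (eval v (pderiv j p)) * (X j - C (v j)) +
          C (eval v p) * (X i - C (v i))) =
        C (v i) * (p - C (eval v p) - ∑ j, C (eval v (pderiv j p)) * (X j - C (v j))) +
         (p - C (eval v p)) * (X i - C (v i)) := by
      simp only [map_mul, eval_X]; ring
    rw [e2]
    refine Ideal.add_mem _ (Ideal.mul_mem_left _ _ hp) ?_
    rw [pow_two]
    exact Ideal.mul_mem_mul (hE p) (hX i)

theorem linform_homog {k : Type*} [Field k] {n : ℕ} (b : Fin n → k) :
    (∑ j, C (b j) * X j : MvPolynomial (Fin n) k).IsHomogeneous 1 :=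
  IsHomogeneous.sum _ _ _ fun j _ => isHomogeneous_C_mul_X _ _

theorem linform_ne_zero {k : Type*} [Field k] {n : ℕ} (b : Fin n → k) (hb : b ≠ 0) :
    (∑ j, C (b j) * X j : MvPolynomial (Fin n) k) ≠ 0 := by
  intro h
  apply hb
  ext i
  have := congrArg (eval (Pi.single i 1)) h
  simpa [Pi.single_apply] using this

structure LocVal {k : Type*} [Field k] (f : MvPolynomial (Fin 3) k) (q : PlanePoint f) where
  val : MvPolynomial (Fin 3) k → ℕ∞
  val_mul : ∀ a b, val (a * b) = val a + val b
  val_add : ∀ a b, min (val a) (val b) ≤ val (a + b)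
  val_pos : ∀ g, 1 ≤ val g ↔ eval q.1.rep g = 0
  val_top : ∀ g e, g.IsHomogeneous e → (val g = ⊤ ↔ f ∣ g)
  val_f : ∀ g, f ∣ g → val g = ⊤
  step : ∀ (n : ℕ) a b, val a = n → (n : ℕ∞) ≤ val b →
    ∃ c : k, ((n + 1 : ℕ) : ℕ∞) ≤ val (b - C c * a)
  unif : ∃ s : MvPolynomial (Fin 3) k, s.IsHomogeneous 1 ∧ val s = 1
  ord : ∀ g, val g ≠ ⊤ → (ordAt f q g : ℕ∞) = val g

theorem exists_LocVal {k : Type*} [Field k] {f : MvPolynomial (Fin 3) k} {d : ℕ}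
    (hf : f.IsHomogeneous d) (hd : 2 ≤ d) (hp : Prime f)
    (hsm : ∀ v : Fin 3 → k, eval v f = 0 → (∀ i : Fin 3, eval v (pderiv i f) = 0) → v = 0)
    (q : PlanePoint f) : Nonempty (LocVal f q) := by
  classical
  set v := q.1.rep with hv
  have hv0 : v ≠ 0 := q.1.rep_nonzero
  have hfv : eval v f = 0 := q.2
  have hex : ∃ i, v i ≠ 0 := by
    by_contra h
    push Not at h
    exact hv0 (funext h)
  have hslice : slicePoly v = C (v hex.choose)⁻¹ * X hex.choose - 1 := by
    unfold slicePoly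
    rw [dif_pos hex]
  have hvi : v hex.choose ≠ 0 := hex.choose_spec
  generalize hex.choose = i at hslice hvi
  set c := (v i)⁻¹ with hc
  have hc0 : c ≠ 0 := inv_ne_zero hvi
  obtain ⟨hIp, hIh⟩ := slice_ideal hf hd hp i c hc0
  set I := Ideal.span {f, C c * X i - 1} with hIdef
  set m := RingHom.ker (eval v) with hm
  have hfI : f ∈ I := Ideal.subset_span (by left; rfl)
  have hlI : C c * X i - 1 ∈ I := Ideal.subset_span (by right; rfl)
  have hmax : m.IsMaximal := RingHom.ker_isMaximal_of_surjective (eval v)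
    (fun a => ⟨C a, by simp⟩)
  have hIm : I ≤ m := by
    rw [hIdef, Ideal.span_le]
    rintro x (rfl | rfl)
    · exact hfv
    · change eval v _ = 0
      simp [hc, hvi]
  -- gradient
  set a : Fin 3 → k := fun j => eval v (pderiv j f) with ha
  have ha0 : a ≠ 0 := fun h => hv0 (hsm v hfv (fun j => congrFun h j))
  let δ : (Fin 3 → k) →ₗ[k] k := ∑ j, v j • LinearMap.proj j
  have hδ : ∀ b, δ b = ∑ j, v j * b j := fun b => by simp [δ]
  have hδa : δ a = 0 := by
    have h1 := congrArg (eval v) hf.sum_X_mul_pderiv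
    rw [hδ]
    simpa [hfv] using h1
  have hδi : δ (Pi.single i c) = 1 := by
    rw [hδ]; simp [Pi.single_apply, hc, hvi]
  have hδ0 : δ ≠ 0 := by
    intro h; rw [h] at hδi; simp at hδi
  have hdimU : Module.finrank k (LinearMap.ker δ) = 2 := by
    have h1 := δ.finrank_range_add_finrank_ker
    have h2 : LinearMap.range δ = ⊤ := LinearMap.range_eq_top.2 (LinearMap.surjective hδ0)
    rw [h2] at h1
    simp at h1
    omega
  obtain ⟨b, hbU, hba⟩ : ∃ b ∈ LinearMap.ker δ, b ∉ Submodule.span k {a} := by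
    by_contra h
    push Not at h
    have h1 : LinearMap.ker δ ≤ Submodule.span k {a} := h
    have h2 := Submodule.finrank_mono h1
    rw [hdimU, finrank_span_singleton ha0] at h2
    omega
  have hli : LinearIndependent k ![a, b] := by
    rw [LinearIndependent.pair_iff' ha0]
    intro t ht
    exact hba (Submodule.mem_span_singleton.2 ⟨t, ht⟩)
  have hspan : Submodule.span k (Set.range ![a, b]) = LinearMap.ker δ := by
    apply Submodule.eq_of_le_of_finrank_eq
    · rw [Submodule.span_le]
      rintro x ⟨j, rfl⟩
      fin_cases j
      · exact hδa
      · exact hbU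
    · rw [hdimU, finrank_span_eq_card hli]; rfl
  set s : MvPolynomial (Fin 3) k := ∑ j, C (b j) * X j with hs
  have hs1 : s.IsHomogeneous 1 := linform_homog b
  have hb0 : b ≠ 0 := by
    rintro rfl
    exact hba (Submodule.zero_mem _)
  have hs0 : s ≠ 0 := linform_ne_zero b hb0
  have hsv : eval v s = 0 := by
    have : δ b = 0 := hbU
    rw [hδ] at this
    rw [hs]; simpa [mul_comm] using this
  have hsI : s ∉ I := fun h => hs0 (homog_dvd_eq_zero hf hs1 (by omega) (hIh s 1 hs1 h))
  -- the tangent space condition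
  let Λ : (Fin 3 → k) → MvPolynomial (Fin 3) k := fun w => ∑ j, C (w j) * (X j - C (v j))
  have hΛadd : ∀ w w', Λ (w + w') = Λ w + Λ w' := fun w w' => by
    simp [Λ, add_mul, Finset.sum_add_distrib]
  have hΛsmul : ∀ (t : k) w, Λ (t • w) = C t * Λ w := fun t w => by
    simp [Λ, Finset.mul_sum, mul_assoc]
  set J := I ⊔ Ideal.span {s} ⊔ m ^ 2 with hJ
  have hIJ : I ≤ J := le_sup_left.trans le_sup_left
  have hm2J : m ^ 2 ≤ J := le_sup_right
  have hsJ : s ∈ J := (le_sup_right.trans le_sup_left : Ideal.span {s} ≤ J)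
    (Ideal.mem_span_singleton_self s)
  have hΛf : ∀ g ∈ J, eval v g = 0 → Λ (fun j => eval v (pderiv j g)) ∈ J := by
    intro g hg hgv
    have h1 := hm2J (taylor_one v g)
    rw [hgv] at h1
    have h2 := J.sub_mem hg h1
    simpa [Λ] using h2
  have hΛa : Λ a ∈ J := hΛf f (hIJ hfI) hfv
  have hΛb : Λ b ∈ J := by
    have := hΛf s hsJ hsv
    convert! this using 2
    ext j
    simp [hs, Derivation.leibniz, pderiv_X, Pi.single_apply]
  have hΛi : Λ (Pi.single i c) ∈ J := by
    have := hΛf (C c * X i - 1) (hIJ hlI) (by simp [hc, hvi])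
    convert! this using 2
    ext j
    simp [Derivation.leibniz, pderiv_X, Pi.single_apply]
    by_cases h : i = j
    · simp [h]
    · simp [h, Ne.symm h]
  have hΛall : ∀ w, Λ w ∈ J := by
    intro w
    have h1 : w - δ w • Pi.single i c ∈ LinearMap.ker δ := by
      rw [LinearMap.mem_ker, map_sub, map_smul, hδi]; simp
    rw [← hspan, Matrix.range_cons, Matrix.range_cons, Matrix.range_empty, Set.union_empty,
      Set.singleton_union, Submodule.mem_span_pair] at h1
    obtain ⟨x, y, hxy⟩ := h1
    have h2 : w = (x • a + y • b) + δ w • Pi.single i c := by rw [hxy]; simp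
    rw [h2, hΛadd, hΛadd, hΛsmul, hΛsmul, hΛsmul]
    exact J.add_mem (J.add_mem (J.mul_mem_left _ hΛa) (J.mul_mem_left _ hΛb))
      (J.mul_mem_left _ hΛi)
  have hmJ : m ≤ J := by
    intro g hg
    have hgv : eval v g = 0 := hg
    have h1 := hm2J (taylor_one v g)
    rw [hgv] at h1
    have h2 := J.add_mem h1 (hΛall (fun j => eval v (pderiv j g)))
    simpa [Λ] using h2
  obtain ⟨val, h1, h2, h3, h4, h5, h6⟩ := abs_val (k := k) I m hIm s hsv hsI hmJ
    (fun x => ⟨eval v x, by change eval v _ = 0; simp [algebraMap_eq]⟩)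
  have h3' : ∀ (n : ℕ) g, (n : ℕ∞) ≤ val g ↔ ∃ h, eval v h ≠ 0 ∧
      h * g ∈ Ideal.span {f, slicePoly v} + m ^ n := by
    intro n g
    rw [h3, hslice]
    rfl
  refine ⟨⟨val, h1, h2, ?_, ?_, ?_, ?_, ⟨s, hs1, h5⟩, ?_⟩⟩
  · intro g
    have := h3 1 g
    rw [Nat.cast_one] at this
    rw [this, pow_one]
    constructor
    · rintro ⟨h, hh, hx⟩
      rw [Submodule.add_eq_sup, sup_eq_right.2 hIm] at hx
      exact (hmax.isPrime.mem_or_mem hx).resolve_left hh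
    · intro hg
      refine ⟨1, fun h => hmax.ne_top ((Ideal.eq_top_iff_one _).2 h), ?_⟩
      rw [Submodule.add_eq_sup, sup_eq_right.2 hIm, one_mul]
      exact hg
  · intro g e hg
    rw [h4]
    exact ⟨hIh g e hg, fun h => Ideal.mem_of_dvd _ h hfI⟩
  · intro g h
    rw [h4]
    exact Ideal.mem_of_dvd _ h hfI
  · exact h6
  · intro g hg
    obtain ⟨N, hN⟩ := ENat.ne_top_iff_exists.1 hg
    rw [← hN]
    have hset : { n : ℕ | ∃ h : MvPolynomial (Fin 3) k, eval v h ≠ 0 ∧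
        h * g ∈ Ideal.span {f, slicePoly v} + m ^ n } = Set.Iic N := by
      ext n
      rw [Set.mem_setOf_eq, ← h3', ← hN, Set.mem_Iic, Nat.cast_le]
    have : ordAt f q g = N := by
      unfold ordAt
      rw [← hv, ← hm, hset]
      exact csSup_Iic
    rw [this]

end PartB

section PartC

open MvPolynomial

theorem finrank_homog (k : Type*) [Field k] (N n : ℕ) :
    Module.finrank k (homogeneousSubmodule (Fin N) k n) = N.multichoose n := by
  classical
  rw [homogeneousSubmodule_eq_finsupp_supported]
  rw [LinearEquiv.finrank_eq (AddMonoidAlgebra.supportedEquivFinsupp (R := k) (S := k)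
    {d : Fin N →₀ ℕ | d.degree = n})]
  have hset : {d : Fin N →₀ ℕ | d.degree = n} =
      ((Finset.univ : Finset (Fin N)).finsuppAntidiag n : Set (Fin N →₀ ℕ)) := by
    ext d
    simp [Finset.mem_finsuppAntidiag, Finsupp.degree_eq_sum]
  rw [hset]
  have := Finset.card_finsuppAntidiag_nat_eq_multichoose (s := (Finset.univ : Finset (Fin N))) n
  rw [Finset.card_univ, Fintype.card_fin] at this
  rw [← this]
  rw [Module.finrank_finsupp_self]
  simp

instance homog_fd (k : Type*) [Field k] (N n : ℕ) :
    Module.Finite k (homogeneousSubmodule (Fin N) k n) :=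
  Module.Finite.iff_fg.2 (homogeneousSubmodule_fg _ _ n)

theorem finrank_homog_two (k : Type*) [Field k] (n : ℕ) :
    Module.finrank k (homogeneousSubmodule (Fin 2) k n) = n + 1 := by
  rw [finrank_homog, Nat.multichoose_two]

theorem finrank_homog_three (k : Type*) [Field k] (n : ℕ) :
    2 * Module.finrank k (homogeneousSubmodule (Fin 3) k n) = (n + 2) * (n + 1) := by
  rw [finrank_homog, Nat.multichoose_eq]
  have : 3 + n - 1 = n + 2 := by omega
  rw [this, ← Nat.choose_symm (by omega : n ≤ n + 2)]
  have : n + 2 - n = 2 := by omega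
  rw [this, Nat.choose_two_right, mul_comm, Nat.div_mul_cancel]
  · rfl
  · have := Nat.even_mul_pred_self (n + 2)
    exact this.two_dvd

theorem homogenize_split {k : Type*} [Field k] [IsAlgClosed k] (n : ℕ) :
    ∀ p : Polynomial k, p.natDegree ≤ n → ∃ (c : k) (L : Fin n → Fin 2 → k), (∀ i, L i ≠ 0) ∧
      p.homogenize n = C c * ∏ i, (C (L i 0) * X 0 + C (L i 1) * X 1) := by
  induction n with
  | zero =>
    intro p hp
    rw [Polynomial.eq_C_of_natDegree_le_zero hp]
    exact ⟨p.coeff 0, Fin.elim0, fun i => i.elim0, by simp⟩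
  | succ n ih =>
    intro p hp
    by_cases h0 : p.natDegree = 0
    · rw [Polynomial.eq_C_of_natDegree_eq_zero h0]
      refine ⟨p.coeff 0, fun _ => ![0, 1], fun i h => by simpa using congrFun h 1, ?_⟩
      simp
    · obtain ⟨r, hr⟩ := IsAlgClosed.exists_root p (by
        intro h; exact h0 (Polynomial.natDegree_eq_of_degree_eq_some h))
      obtain ⟨p', rfl⟩ := Polynomial.dvd_iff_isRoot.2 hr
      have hp0 : p' ≠ 0 := by rintro rfl; simp at h0
      have hdeg : p'.natDegree ≤ n := by
        rw [Polynomial.natDegree_mul (Polynomial.X_sub_C_ne_zero r) hp0,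
          Polynomial.natDegree_X_sub_C] at hp
        omega
      obtain ⟨c, L, hL, hE⟩ := ih p' hdeg
      refine ⟨c, Fin.cons ![1, -r] L, ?_, ?_⟩
      · intro i
        refine Fin.cases ?_ (fun i => ?_) i
        · intro h; simpa using congrFun h 0
        · simpa using hL i
      · have hm := Polynomial.homogenize_mul (Polynomial.X - Polynomial.C r) p' (m := 1) (n := n)
          (by simp) hdeg
        rw [add_comm 1 n] at hm
        rw [hm, hE, Fin.prod_univ_succ]
        simp only [Fin.cons_zero, Fin.cons_succ, Polynomial.homogenize_sub,
          Polynomial.homogenize_C, Polynomial.homogenize_X one_ne_zero]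
        simp
        ring

theorem binary_split {k : Type*} [Field k] [IsAlgClosed k] {n : ℕ} {G : MvPolynomial (Fin 2) k}
    (hG : G.IsHomogeneous n) : ∃ (c : k) (L : Fin n → Fin 2 → k), (∀ i, L i ≠ 0) ∧
      G = C c * ∏ i, (C (L i 0) * X 0 + C (L i 1) * X 1) := by
  have h1 := Polynomial.homogenize_eq_of_isHomogeneous hG rfl
  have h2 : (aeval ![Polynomial.X, 1] G : Polynomial k).natDegree ≤ n := by
    rw [aeval_def, eval₂_eq']
    refine Polynomial.natDegree_sum_le_of_forall_le _ _ fun m hm => ?_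
    have h3 := hG.degree_eq_sum_deg_support hm
    have h4 : m 0 ≤ n := by
      rw [h3]
      by_cases h : 0 ∈ m.support
      · exact Finset.single_le_sum (f := fun i => m i) (fun _ _ => Nat.zero_le _) h
      · rw [Finsupp.notMem_support_iff.1 h]; omega
    simp only [Fin.prod_univ_two, Matrix.cons_val_zero, Matrix.cons_val_one, one_pow, mul_one]
    exact (Polynomial.natDegree_C_mul_X_pow_le _ _).trans h4
  obtain ⟨c, L, hL, hE⟩ := homogenize_split n _ h2
  exact ⟨c, L, hL, by rw [← h1, hE]⟩

theorem homog_factor {k : Type*} [Field k] {N n : ℕ} {p q : MvPolynomial (Fin N) k}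
    (h : (p * q).IsHomogeneous n) (h0 : p * q ≠ 0) :
    ∃ a b, p.IsHomogeneous a ∧ q.IsHomogeneous b ∧ a + b = n := by
  let Ψ : MvPolynomial (Fin N) k →ₐ[k] Polynomial (MvPolynomial (Fin N) k) :=
    aeval (fun j => Polynomial.X * Polynomial.C (X j))
  have hΨ : ∀ g e, g.IsHomogeneous e → Ψ g = Polynomial.X ^ e * Polynomial.C g := by
    intro g e hg
    change aeval _ g = _
    rw [homog_aeval_scale hg]
    congr 1
    have : aeval (fun j => Polynomial.C (X j)) =
      (Polynomial.CAlgHom (R := k) (A := MvPolynomial (Fin N) k)) := algHom_ext (fun j => by simp)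
    rw [this]; rfl
  have hcoeff : ∀ g e, (Ψ g).coeff e = homogeneousComponent e g := by
    intro g e
    conv_lhs => rw [← sum_homogeneousComponent g]
    rw [map_sum, Polynomial.finsetSum_coeff]
    simp only [hΨ _ _ (homogeneousComponent_isHomogeneous _ g), Polynomial.coeff_X_pow_mul',
      Polynomial.coeff_C]
    rw [Finset.sum_eq_single e]
    · simp
    · intro b _ hb
      by_cases hbe : b ≤ e
      · rw [if_pos hbe, if_neg (by omega)]
      · rw [if_neg hbe]
    · intro he
      rw [homogeneousComponent_eq_zero _ _ (by simpa using he)]; simp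
  have key : ∀ g : MvPolynomial (Fin N) k, g ≠ 0 → (Ψ g).natDegree = (Ψ g).natTrailingDegree →
      g.IsHomogeneous (Ψ g).natDegree := by
    intro g _ hdeg
    have hz : ∀ e, e ≠ (Ψ g).natDegree → homogeneousComponent e g = 0 := by
      intro e he
      rw [← hcoeff]
      rcases lt_or_gt_of_ne he with h | h
      · exact Polynomial.coeff_eq_zero_of_lt_natTrailingDegree (hdeg ▸ h)
      · exact Polynomial.coeff_eq_zero_of_natDegree_lt h
    have : g = homogeneousComponent (Ψ g).natDegree g := by
      conv_lhs => rw [← sum_homogeneousComponent g]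
      rw [Finset.sum_eq_single (Ψ g).natDegree]
      · intro b _ hb; exact hz b hb
      · intro he
        exact homogeneousComponent_eq_zero _ _ (by simpa using he)
    generalize (Ψ g).natDegree = D at this ⊢
    exact (congrArg (fun x => x.IsHomogeneous D) this).mpr
      (homogeneousComponent_isHomogeneous D g)
  have hinj : ∀ g, g ≠ 0 → Ψ g ≠ 0 := by
    intro g hg hz
    apply hg
    rw [← sum_homogeneousComponent g]
    refine Finset.sum_eq_zero fun e _ => ?_
    rw [← hcoeff, hz]; simp
  have hp0 : p ≠ 0 := left_ne_zero_of_mul h0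
  have hq0 : q ≠ 0 := right_ne_zero_of_mul h0
  have e1 : Ψ p * Ψ q = Polynomial.X ^ n * Polynomial.C (p * q) := by
    rw [← map_mul, hΨ _ n h]
  have d1 := congrArg Polynomial.natDegree e1
  have d2 := congrArg Polynomial.natTrailingDegree e1
  rw [Polynomial.natDegree_mul (hinj p hp0) (hinj q hq0), mul_comm (Polynomial.X ^ n),
    Polynomial.natDegree_C_mul_X_pow _ _ h0] at d1
  rw [Polynomial.natTrailingDegree_mul (hinj p hp0) (hinj q hq0),
    mul_comm (Polynomial.X ^ n), Polynomial.C_mul_X_pow_eq_monomial,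
    Polynomial.natTrailingDegree_monomial h0] at d2
  have i1 := Polynomial.natTrailingDegree_le_natDegree (Ψ p)
  have i2 := Polynomial.natTrailingDegree_le_natDegree (Ψ q)
  exact ⟨_, _, key p hp0 (by omega), key q hq0 (by omega), d1⟩

/-- multiples of `a` by forms of degree `n` -/
noncomputable def mulSub {k : Type*} [Field k] (a : MvPolynomial (Fin 3) k) (n : ℕ) :
    Submodule k (MvPolynomial (Fin 3) k) :=
  (homogeneousSubmodule (Fin 3) k n).map (LinearMap.mulLeft k a)

theorem mem_mulSub {k : Type*} [Field k] {a : MvPolynomial (Fin 3) k} {n : ℕ}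
    {x : MvPolynomial (Fin 3) k} : x ∈ mulSub a n ↔ ∃ y, y.IsHomogeneous n ∧ a * y = x := by
  simp [mulSub, Submodule.mem_map]

theorem finrank_mulSub {k : Type*} [Field k] {a : MvPolynomial (Fin 3) k} (ha : a ≠ 0) (n : ℕ) :
    Module.finrank k (mulSub a n) = Module.finrank k (homogeneousSubmodule (Fin 3) k n) := by
  apply LinearEquiv.finrank_eq
  exact (Submodule.equivMapOfInjective _ (fun x y h => mul_left_cancel₀ ha h) _).symm

instance mulSub_fd {k : Type*} [Field k] (a : MvPolynomial (Fin 3) k) (n : ℕ) :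
    Module.Finite k (mulSub a n) := by
  unfold mulSub
  infer_instance

theorem finrank_ideal_part {k : Type*} [Field k] {a b : MvPolynomial (Fin 3) k} {α β : ℕ}
    (ha : a.IsHomogeneous α) (hb : b.IsHomogeneous β) (ha0 : a ≠ 0) (hb0 : b ≠ 0)
    (hab : IsRelPrime a b) (N : ℕ) :
    Module.finrank k ↥(mulSub a (N + β) ⊔ mulSub b (N + α)) + α * β =
      Module.finrank k (homogeneousSubmodule (Fin 3) k (N + α + β)) := by
  have hinf : mulSub a (N + β) ⊓ mulSub b (N + α) = mulSub (a * b) N := by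
    ext x
    rw [Submodule.mem_inf, mem_mulSub, mem_mulSub, mem_mulSub]
    constructor
    · rintro ⟨⟨y, hy, rfl⟩, ⟨z, hz, hzy⟩⟩
      have : b ∣ a * y := ⟨z, hzy.symm⟩
      obtain ⟨t, rfl⟩ := hab.symm.dvd_of_dvd_mul_left this
      by_cases ht : t = 0
      · subst ht
        exact ⟨0, isHomogeneous_zero _ _ _, by simp⟩
      · obtain ⟨e1, e2, h1, h2, h3⟩ := homog_factor hy (mul_ne_zero hb0 ht)
        have := h1.inj_right hb hb0
        have : e2 = N := by omega
        subst this
        exact ⟨t, h2, by ring⟩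
    · rintro ⟨y, hy, rfl⟩
      refine ⟨⟨b * y, ?_, by ring⟩, ⟨a * y, ?_, by ring⟩⟩
      · rw [add_comm]; exact hb.mul hy
      · rw [add_comm]; exact ha.mul hy
  have h1 := Submodule.finrank_sup_add_finrank_inf_eq (mulSub a (N + β)) (mulSub b (N + α))
  rw [hinf, finrank_mulSub ha0, finrank_mulSub hb0, finrank_mulSub (mul_ne_zero ha0 hb0)] at h1
  have e1 := finrank_homog_three k N
  have e2 := finrank_homog_three k (N + α)
  have e3 := finrank_homog_three k (N + β)
  have e4 := finrank_homog_three k (N + α + β)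
  nlinarith

theorem ideal_part_le {k : Type*} [Field k] {a b : MvPolynomial (Fin 3) k} {α β : ℕ}
    (ha : a.IsHomogeneous α) (hb : b.IsHomogeneous β) (N : ℕ) :
    mulSub a (N + β) ⊔ mulSub b (N + α) ≤ homogeneousSubmodule (Fin 3) k (N + α + β) := by
  apply sup_le
  · intro x hx
    obtain ⟨y, hy, rfl⟩ := mem_mulSub.1 hx
    have := ha.mul hy
    rwa [show α + (N + β) = N + α + β by ring] at this
  · intro x hx
    obtain ⟨y, hy, rfl⟩ := mem_mulSub.1 hx
    have := hb.mul hy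
    rwa [show β + (N + α) = N + α + β by ring] at this

/-- A form restricted to a line splits into linear factors. -/
theorem line_split {k : Type*} [Field k] [IsAlgClosed k] {f : MvPolynomial (Fin 3) k} {d : ℕ}
    (hf : f.IsHomogeneous d) (b : Fin 3 → k) (hb : b ≠ 0) :
    ∃ (c : k) (L : Fin d → Fin 3 → k) (w : MvPolynomial (Fin 3) k),
      f = C c * ∏ i, (∑ j, C (L i j) * X j) + (∑ j, C (b j) * X j) * w := by
  obtain ⟨i, hi⟩ : ∃ i, b i ≠ 0 := by
    by_contra h
    push Not at h
    exact hb (funext h)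
  set l : MvPolynomial (Fin 3) k := ∑ j, C (b j) * X j with hl
  have hne1 : i + 1 ≠ i := by fin_cases i <;> decide
  have hne2 : i + 2 ≠ i := by fin_cases i <;> decide
  have hne3 : i + 2 ≠ i + 1 := by fin_cases i <;> decide
  have hsum : ∀ (g : Fin 3 → MvPolynomial (Fin 3) k),
      ∑ j, g j = g i + g (i + 1) + g (i + 2) := by
    intro g
    rw [Fin.sum_univ_three]
    fin_cases i
    · rfl
    · change g 0 + g 1 + g 2 = g 1 + g 2 + g 0
      abel
    · change g 0 + g 1 + g 2 = g 2 + g 0 + g 1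
      abel
  have hcases : ∀ j : Fin 3, j = i ∨ j = i + 1 ∨ j = i + 2 := by
    exact (by decide : ∀ i j : Fin 3, j = i ∨ j = i + 1 ∨ j = i + 2) i
  let σ : Fin 3 → MvPolynomial (Fin 2) k := fun j =>
    if j = i then C (- b (i + 1) / b i) * X 0 + C (- b (i + 2) / b i) * X 1
    else if j = i + 1 then X 0 else X 1
  have hσ : ∀ j, (σ j).IsHomogeneous 1 := by
    intro j
    simp only [σ]
    split_ifs
    · exact (isHomogeneous_C_mul_X _ _).add (isHomogeneous_C_mul_X _ _)
    · exact isHomogeneous_X _ _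
    · exact isHomogeneous_X _ _
  have hG : (aeval σ f).IsHomogeneous d := by
    have := hf.aeval σ hσ
    rwa [one_mul] at this
  obtain ⟨c, L, _, hE⟩ := binary_split hG
  let τ : MvPolynomial (Fin 2) k →ₐ[k] MvPolynomial (Fin 3) k := aeval ![X (i + 1), X (i + 2)]
  have hτ : f - τ (aeval σ f) ∈ Ideal.span {l} := by
    rw [← Ideal.Quotient.eq]
    change (Ideal.Quotient.mkₐ k (Ideal.span {l})) f =
      ((Ideal.Quotient.mkₐ k (Ideal.span {l})).comp (τ.comp (aeval σ))) f
    congr 1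
    apply algHom_ext
    intro j
    change Ideal.Quotient.mk _ (X j) = Ideal.Quotient.mk _ (τ (aeval σ (X j)))
    rw [Ideal.Quotient.eq, aeval_X, Ideal.mem_span_singleton]
    rcases hcases j with rfl | rfl | rfl
    · refine ⟨C (b j)⁻¹, ?_⟩
      rw [hl, hsum]
      simp only [σ, τ, if_true, map_add, map_mul, algHom_C, aeval_X, Matrix.cons_val_zero,
        Matrix.cons_val_one, algebraMap_eq]
      have : (C (b j) * C (b j)⁻¹ : MvPolynomial (Fin 3) k) = 1 := by
        rw [← C_mul, mul_inv_cancel₀ hi, C_1]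
      simp only [div_eq_mul_inv, C_mul, C_neg]
      linear_combination (-X j) * this
    · simp [σ, τ, hne1]
    · simp [σ, τ, hne2, hne3]
  obtain ⟨w, hw⟩ := Ideal.mem_span_singleton.1 hτ
  refine ⟨c, fun t j => if j = i then 0 else if j = i + 1 then L t 0 else L t 1, w, ?_⟩
  rw [← hw, hE]
  have : ∀ t, (∑ j, C (if j = i then 0 else if j = i + 1 then L t 0 else L t 1) * X j :
      MvPolynomial (Fin 3) k) = τ (C (L t 0) * X 0 + C (L t 1) * X 1) := by
    intro t
    rw [hsum]
    simp [τ, hne1, hne2, hne3]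
  simp only [this]
  rw [map_mul, map_prod]
  simp [algHom_C]

end PartC

section PartD

open MvPolynomial

section U

variable {k : Type*} [Field k]

theorem exists_lin {u v : Fin 3 → k} (hv : v ∉ Submodule.span k {u}) :
    ∃ l : MvPolynomial (Fin 3) k, l.IsHomogeneous 1 ∧ eval u l = 0 ∧ eval v l ≠ 0 := by
  obtain ⟨φ, h1, h2⟩ := Submodule.exists_le_ker_of_notMem hv
  have key : ∀ x : Fin 3 → k, eval x (∑ j, C (φ (Pi.single j 1)) * X j) = φ x := by
    intro x
    conv_rhs => rw [pi_eq_sum_univ' x]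
    simp [map_sum, mul_comm]
  refine ⟨∑ j, C (φ (Pi.single j 1)) * X j, linform_homog _, ?_, ?_⟩
  · rw [key]
    exact h2 (Submodule.mem_span_singleton_self u)
  · rw [key]; exact h1

theorem point_notMem {f : MvPolynomial (Fin 3) k} {r q : PlanePoint f} (h : r ≠ q) :
    q.1.rep ∉ Submodule.span k {r.1.rep} := by
  intro hm
  obtain ⟨c, hc⟩ := Submodule.mem_span_singleton.1 hm
  apply h
  apply Subtype.ext
  rw [← Projectivization.mk_rep r.1, ← Projectivization.mk_rep q.1, eq_comm,
    Projectivization.mk_eq_mk_iff']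
  exact ⟨c, hc⟩

theorem eval_smul_homog {g : MvPolynomial (Fin 3) k} {e : ℕ} (hg : g.IsHomogeneous e) (c : k)
    (v : Fin 3 → k) : eval (c • v) g = c ^ e * eval v g := by
  have := homog_aeval_scale hg c v
  have e : (c • v) = fun j => c * v j := rfl
  rw [e]
  simpa [aeval_eq_eval] using this

theorem P_notMem {f : MvPolynomial (Fin 3) k} {d : ℕ} (hf : f.IsHomogeneous d) {P : Fin 3 → k}
    (hP : eval P f ≠ 0) (r : PlanePoint f) : P ∉ Submodule.span k {r.1.rep} := by
  intro hm
  obtain ⟨c, rfl⟩ := Submodule.mem_span_singleton.1 hm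
  rw [eval_smul_homog hf, r.2, mul_zero] at hP
  exact hP rfl

variable {f : MvPolynomial (Fin 3) k}

theorem LocVal.val_zero_iff {q : PlanePoint f} (w : LocVal f q) (g) :
    w.val g = 0 ↔ eval q.1.rep g ≠ 0 := by
  rw [Ne, ← w.val_pos, ENat.one_le_iff_ne_zero, not_not]

theorem LocVal.val_z {q : PlanePoint f} (w : LocVal f q) : w.val 0 = ⊤ :=
  w.val_f 0 (dvd_zero f)

theorem LocVal.val_smul {q : PlanePoint f} (w : LocVal f q) (c : k) (g) :
    w.val g ≤ w.val (c • g) := by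
  rw [smul_eq_C_mul, w.val_mul]
  exact le_add_self

theorem LocVal.val_neg {q : PlanePoint f} (w : LocVal f q) (g) :
    w.val (-g) = w.val g := by
  have h : ∀ g, w.val g ≤ w.val (-g) := fun g => by simpa using w.val_smul (-1) g
  refine le_antisymm ?_ (h g)
  simpa using h (-g)

theorem LocVal.val_add_top {q : PlanePoint f} (w : LocVal f q) {a b} (h : w.val a = ⊤) :
    w.val (a + b) = w.val b := by
  refine le_antisymm ?_ ?_
  · have := w.val_add (-a) (a + b)
    rw [w.val_neg, h] at this
    simpa using this
  · have := w.val_add a b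
    rw [h] at this
    simpa using this

theorem LocVal.val_congr {q : PlanePoint f} (w : LocVal f q) {a b} (h : f ∣ a - b) :
    w.val a = w.val b := by
  have := w.val_add_top (b := b) (w.val_f _ h)
  rwa [sub_add_cancel] at this

theorem LocVal.val_pow {q : PlanePoint f} (w : LocVal f q) {a} (h : w.val a = 0) (n : ℕ) :
    w.val (a ^ n) = 0 := by
  rw [w.val_zero_iff] at *
  rw [map_pow]; exact pow_ne_zero _ h

/-- forms of degree `M` vanishing to order at least `n` -/
def WSub (w : ∀ q, LocVal f q) (n : PlanePoint f →₀ ℕ) (M : ℕ) :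
    Submodule k (MvPolynomial (Fin 3) k) where
  carrier := {g | g.IsHomogeneous M ∧ ∀ q, (n q : ℕ∞) ≤ (w q).val g}
  add_mem' := by
    rintro a b ⟨h1, h2⟩ ⟨h3, h4⟩
    exact ⟨h1.add h3, fun q => (le_min (h2 q) (h4 q)).trans ((w q).val_add a b)⟩
  zero_mem' := ⟨isHomogeneous_zero _ _ _, fun q => by rw [(w q).val_z]; exact le_top⟩
  smul_mem' := by
    rintro c a ⟨h1, h2⟩
    refine ⟨?_, fun q => (h2 q).trans ((w q).val_smul c a)⟩
    exact (homogeneousSubmodule (Fin 3) k M).smul_mem c h1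

theorem WSub_le (w : ∀ q, LocVal f q) (n : PlanePoint f →₀ ℕ) (M : ℕ) :
    WSub w n M ≤ homogeneousSubmodule (Fin 3) k M := fun _ h => h.1

instance WSub_fd (w : ∀ q, LocVal f q) (n : PlanePoint f →₀ ℕ) (M : ℕ) :
    Module.Finite k (WSub w n M) :=
  Submodule.finiteDimensional_of_le (WSub_le w n M)

theorem finsupp_ind {α : Type*} {p : (α →₀ ℕ) → Prop} (h0 : p 0)
    (hs : ∀ n a, p n → p (n + Finsupp.single a 1)) (n : α →₀ ℕ) : p n := by
  refine Finsupp.induction n h0 ?_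
  intro a b g _ _ ih
  rw [add_comm]
  clear * - hs ih
  induction b with
  | zero => simpa using ih
  | succ b ihb =>
    rw [Finsupp.single_add, ← add_assoc]
    exact hs _ _ ihb

theorem wit_point (w : ∀ q, LocVal f q) (q : PlanePoint f) (n : PlanePoint f →₀ ℕ) :
    ∃ g : MvPolynomial (Fin 3) k, g.IsHomogeneous n.degree ∧ (w q).val g = n q ∧
      ∀ r, (n r : ℕ∞) ≤ (w r).val g := by
  classical
  induction n using finsupp_ind with
  | h0 =>
    refine ⟨1, by simpa using isHomogeneous_one _ _, ?_, by simp⟩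
    rw [Finsupp.zero_apply, Nat.cast_zero, (w q).val_zero_iff]; simp
  | hs n r ih =>
    obtain ⟨g, h1, h2, h3⟩ := ih
    obtain ⟨l, l1, l2, l3⟩ : ∃ l : MvPolynomial (Fin 3) k, l.IsHomogeneous 1 ∧
        1 ≤ (w r).val l ∧ (w q).val l = (Finsupp.single r 1 q : ℕ) := by
      by_cases hr : r = q
      · subst hr
        obtain ⟨s, s1, s2⟩ := (w r).unif
        exact ⟨s, s1, s2.ge, by simp [s2]⟩
      · obtain ⟨l, l1, l2, l3⟩ := exists_lin (point_notMem hr)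
        refine ⟨l, l1, ((w r).val_pos l).2 l2, ?_⟩
        rw [Finsupp.single_eq_of_ne (Ne.symm hr), Nat.cast_zero, (w q).val_zero_iff]
        exact l3
    refine ⟨g * l, ?_, ?_, ?_⟩
    · rw [map_add, Finsupp.degree_single]; exact h1.mul l1
    · rw [(w q).val_mul, h2, l3, Finsupp.add_apply, Nat.cast_add]
    · intro s
      rw [(w s).val_mul, Finsupp.add_apply, Nat.cast_add]
      refine add_le_add (h3 s) ?_
      by_cases hs : s = r
      · subst hs; simpa using l2
      · rw [Finsupp.single_eq_of_ne hs]; simp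

theorem wit_P (w : ∀ q, LocVal f q) {d : ℕ} (hf : f.IsHomogeneous d) {P : Fin 3 → k}
    (hP : eval P f ≠ 0) (n : PlanePoint f →₀ ℕ) :
    ∃ g : MvPolynomial (Fin 3) k, g.IsHomogeneous n.degree ∧ eval P g ≠ 0 ∧
      ∀ r, (n r : ℕ∞) ≤ (w r).val g := by
  classical
  induction n using finsupp_ind with
  | h0 =>
    exact ⟨1, by simpa using isHomogeneous_one _ _, by simp, by simp⟩
  | hs n r ih =>
    obtain ⟨g, h1, h2, h3⟩ := ih
    obtain ⟨l, l1, l2, l3⟩ := exists_lin (P_notMem hf hP r)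
    refine ⟨g * l, ?_, ?_, ?_⟩
    · rw [map_add, Finsupp.degree_single]; exact h1.mul l1
    · rw [map_mul]; exact mul_ne_zero h2 l3
    · intro s
      rw [(w s).val_mul, Finsupp.add_apply, Nat.cast_add]
      refine add_le_add (h3 s) ?_
      by_cases hs : s = r
      · subst hs; simpa using ((w s).val_pos l).2 l2
      · rw [Finsupp.single_eq_of_ne hs]; simp

theorem exists_lin_ne {v : Fin 3 → k} (hv : v ≠ 0) :
    ∃ l : MvPolynomial (Fin 3) k, l.IsHomogeneous 1 ∧ eval v l ≠ 0 := by
  obtain ⟨l, h1, _, h2⟩ := exists_lin (u := 0) (v := v) (by simpa using hv)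
  exact ⟨l, h1, h2⟩

theorem U1 (w : ∀ q, LocVal f q) (M : ℕ) (n : PlanePoint f →₀ ℕ) (hn : n.degree ≤ M) :
    Module.finrank k (WSub w n M) + n.degree ≤
      Module.finrank k (homogeneousSubmodule (Fin 3) k M) := by
  classical
  induction n using finsupp_ind with
  | h0 =>
    simpa using Submodule.finrank_mono (WSub_le w 0 M)
  | hs n r ih =>
    rw [map_add, Finsupp.degree_single] at hn ⊢
    have := ih (by omega)
    have hlt : WSub w (n + Finsupp.single r 1) M < WSub w n M := by
      rw [SetLike.lt_iff_le_and_exists]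
      constructor
      · rintro g ⟨h1, h2⟩
        refine ⟨h1, fun q => le_trans ?_ (h2 q)⟩
        rw [Finsupp.add_apply, Nat.cast_add]
        exact le_self_add
      · obtain ⟨g, h1, h2, h3⟩ := wit_point w r n
        obtain ⟨l, l1, l2⟩ := exists_lin_ne r.1.rep_nonzero
        have hv := (w r).val_pow (((w r).val_zero_iff l).2 l2) (M - n.degree)
        refine ⟨g * l ^ (M - n.degree), ⟨?_, fun q => ?_⟩, ?_⟩
        · have := h1.mul (l1.pow (M - n.degree))
          rwa [show n.degree + 1 * (M - n.degree) = M by omega] at this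
        · rw [(w q).val_mul]
          exact (h3 q).trans le_self_add
        · rintro ⟨_, h5⟩
          have := h5 r
          rw [(w r).val_mul, hv, h2, add_zero, Finsupp.add_apply, Finsupp.single_eq_same] at this
          have := Nat.cast_le.1 this
          omega
    have := Submodule.finrank_lt_finrank_of_lt hlt
    omega

theorem U2 (w : ∀ q, LocVal f q) {d : ℕ} (hf : f.IsHomogeneous d) {P : Fin 3 → k}
    (hP : eval P f ≠ 0) (hP0 : P ≠ 0) (M : ℕ) (n : PlanePoint f →₀ ℕ) (hn : n.degree ≤ M)
    (W : Submodule k (MvPolynomial (Fin 3) k)) (hW : W ≤ WSub w n M)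
    (hWP : ∀ g ∈ W, eval P g = 0) :
    Module.finrank k W + n.degree + 1 ≤
      Module.finrank k (homogeneousSubmodule (Fin 3) k M) := by
  have hlt : W < WSub w n M := by
    rw [SetLike.lt_iff_le_and_exists]
    refine ⟨hW, ?_⟩
    obtain ⟨g, h1, h2, h3⟩ := wit_P w hf hP n
    obtain ⟨l, l1, l2⟩ := exists_lin_ne hP0
    have hv : eval P (g * l ^ (M - n.degree)) ≠ 0 := by
      rw [map_mul, map_pow]
      exact mul_ne_zero h2 (pow_ne_zero _ l2)
    refine ⟨g * l ^ (M - n.degree), ⟨?_, fun q => ?_⟩, fun h => hv (hWP _ h)⟩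
    · have := h1.mul (l1.pow (M - n.degree))
      rwa [show n.degree + 1 * (M - n.degree) = M by omega] at this
    · rw [(w q).val_mul]
      exact (h3 q).trans le_self_add
  have := Submodule.finrank_lt_finrank_of_lt hlt
  have := U1 w M n hn
  omega

theorem ideal_le_WSub (w : ∀ q, LocVal f q) {a b : MvPolynomial (Fin 3) k} {α β : ℕ}
    (ha : a.IsHomogeneous α) (hb : b.IsHomogeneous β) (n : PlanePoint f →₀ ℕ)
    (hna : ∀ q, (n q : ℕ∞) ≤ (w q).val a) (hnb : ∀ q, (n q : ℕ∞) ≤ (w q).val b) (N : ℕ) :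
    mulSub a (N + β) ⊔ mulSub b (N + α) ≤ WSub w n (N + α + β) := by
  intro x hx
  refine ⟨ideal_part_le ha hb N hx, ?_⟩
  intro q
  obtain ⟨y, hy, z, hz, rfl⟩ := Submodule.mem_sup.1 hx
  obtain ⟨y, _, rfl⟩ := mem_mulSub.1 hy
  obtain ⟨z, _, rfl⟩ := mem_mulSub.1 hz
  refine le_trans (le_min ?_ ?_) ((w q).val_add _ _)
  · rw [(w q).val_mul]; exact (hna q).trans le_self_add
  · rw [(w q).val_mul]; exact (hnb q).trans le_self_add

theorem bez_upper (w : ∀ q, LocVal f q) {a b : MvPolynomial (Fin 3) k} {α β : ℕ}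
    (ha : a.IsHomogeneous α) (hb : b.IsHomogeneous β) (ha0 : a ≠ 0) (hb0 : b ≠ 0)
    (hab : IsRelPrime a b) (n : PlanePoint f →₀ ℕ)
    (hna : ∀ q, (n q : ℕ∞) ≤ (w q).val a) (hnb : ∀ q, (n q : ℕ∞) ≤ (w q).val b) :
    n.degree ≤ α * β := by
  have h1 := finrank_ideal_part ha hb ha0 hb0 hab n.degree
  have h2 := U1 w (n.degree + α + β) n (by omega)
  have h3 := Submodule.finrank_mono (ideal_le_WSub w ha hb n hna hnb n.degree)
  omega

theorem bez_upper_P (w : ∀ q, LocVal f q) {d : ℕ} (hf : f.IsHomogeneous d) {P : Fin 3 → k}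
    (hP : eval P f ≠ 0) (hP0 : P ≠ 0) {a b : MvPolynomial (Fin 3) k} {α β : ℕ}
    (ha : a.IsHomogeneous α) (hb : b.IsHomogeneous β) (ha0 : a ≠ 0) (hb0 : b ≠ 0)
    (hab : IsRelPrime a b) (n : PlanePoint f →₀ ℕ)
    (hna : ∀ q, (n q : ℕ∞) ≤ (w q).val a) (hnb : ∀ q, (n q : ℕ∞) ≤ (w q).val b)
    (hPa : eval P a = 0) (hPb : eval P b = 0) :
    n.degree + 1 ≤ α * β := by
  have h1 := finrank_ideal_part ha hb ha0 hb0 hab n.degree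
  have h2 := U2 w hf hP hP0 (n.degree + α + β) n (by omega) _
    (ideal_le_WSub w ha hb n hna hnb n.degree) (by
      intro g hg
      obtain ⟨y, hy, z, hz, rfl⟩ := Submodule.mem_sup.1 hg
      obtain ⟨y, _, rfl⟩ := mem_mulSub.1 hy
      obtain ⟨z, _, rfl⟩ := mem_mulSub.1 hz
      simp [hPa, hPb])
  omega

end U

end PartD

section PartE

open MvPolynomial

section V

variable {k : Type*} [Field k] {f : MvPolynomial (Fin 3) k}

open Classical in
/-- the divisor cut out by a form -/
noncomputable def dv (f g : MvPolynomial (Fin 3) k) : PlanePoint f →₀ ℕ :=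
  if h : (Function.support (fun q => ordAt f q g)).Finite then Finsupp.ofSupportFinite _ h else 0

theorem ord_val (w : ∀ q, LocVal f q) {g : MvPolynomial (Fin 3) k} {e : ℕ}
    (hg : g.IsHomogeneous e) (hfg : ¬ f ∣ g) (q : PlanePoint f) :
    (ordAt f q g : ℕ∞) = (w q).val g := by
  apply (w q).ord
  rwa [Ne, (w q).val_top g e hg]

theorem dv_ord (w : ∀ q, LocVal f q) {d : ℕ} (hf : f.IsHomogeneous d) (hp : Prime f)
    {g : MvPolynomial (Fin 3) k} {e : ℕ}
    (hg : g.IsHomogeneous e) (hfg : ¬ f ∣ g) (q : PlanePoint f) :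
    dv f g q = ordAt f q g := by
  classical
  have hfin : (Function.support (fun q => ordAt f q g)).Finite := by
    by_contra hinf
    obtain ⟨T, hT, hcard⟩ := Set.Infinite.exists_subset_card_eq hinf (d * e + 1)
    have hg0 : g ≠ 0 := by rintro rfl; exact hfg (dvd_zero f)
    have := bez_upper w hf hg hp.ne_zero hg0 (hp.irreducible.isRelPrime_iff_not_dvd.2 hfg)
      (∑ t ∈ T, Finsupp.single t 1) (fun q => by rw [(w q).val_f f dvd_rfl]; exact le_top) (by
        intro q
        rw [Finsupp.finsetSum_apply]
        simp only [Finsupp.single_apply]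
        rw [Finset.sum_ite_eq']
        split_ifs with hq
        · have := hT hq
          rw [← ord_val w hg hfg, Nat.cast_le]
          exact Nat.one_le_iff_ne_zero.2 this
        · simp)
    rw [map_sum] at this
    simp [Finsupp.degree_single, hcard] at this
  rw [dv, dif_pos hfin]
  rfl

theorem dv_val (w : ∀ q, LocVal f q) {d : ℕ} (hf : f.IsHomogeneous d) (hp : Prime f)
    {g : MvPolynomial (Fin 3) k} {e : ℕ}
    (hg : g.IsHomogeneous e) (hfg : ¬ f ∣ g) (q : PlanePoint f) :
    (dv f g q : ℕ∞) = (w q).val g := by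
  rw [dv_ord w hf hp hg hfg, ord_val w hg hfg]

theorem dv_congr (w : ∀ q, LocVal f q) {d : ℕ} (hf : f.IsHomogeneous d) (hp : Prime f)
    {g h : MvPolynomial (Fin 3) k} {e e' : ℕ}
    (hg : g.IsHomogeneous e) (hfg : ¬ f ∣ g)
    (hh : h.IsHomogeneous e') (hfh : ¬ f ∣ h) (hgh : f ∣ g - h) :
    dv f g = dv f h := by
  ext q
  rw [← Nat.cast_inj (R := ℕ∞), dv_val w hf hp hg hfg, dv_val w hf hp hh hfh]
  exact (w q).val_congr hgh

theorem dv_mul (w : ∀ q, LocVal f q) {d : ℕ} (hf : f.IsHomogeneous d) (hp : Prime f)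
    {g h : MvPolynomial (Fin 3) k} {e e' : ℕ}
    (hg : g.IsHomogeneous e) (hfg : ¬ f ∣ g)
    (hh : h.IsHomogeneous e') (hfh : ¬ f ∣ h) :
    dv f (g * h) = dv f g + dv f h := by
  ext q
  rw [← Nat.cast_inj (R := ℕ∞), Finsupp.add_apply, Nat.cast_add, dv_val w hf hp hg hfg,
    dv_val w hf hp hh hfh, dv_val w hf hp (hg.mul hh) (by
      intro hd; rcases hp.dvd_or_dvd hd with h | h
      · exact hfg h
      · exact hfh h), (w q).val_mul]

theorem dv_le (w : ∀ q, LocVal f q) {d : ℕ} (hf : f.IsHomogeneous d) (hp : Prime f)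
    {g : MvPolynomial (Fin 3) k} {e : ℕ} (hg : g.IsHomogeneous e) (hfg : ¬ f ∣ g) :
    (dv f g).degree ≤ d * e := by
  have hg0 : g ≠ 0 := by rintro rfl; exact hfg (dvd_zero f)
  exact bez_upper w hf hg hp.ne_zero hg0 (hp.irreducible.isRelPrime_iff_not_dvd.2 hfg)
      (dv f g) (fun q => by rw [(w q).val_f f dvd_rfl]; exact le_top)
      (fun q => (dv_val w hf hp hg hfg q).le)

theorem two_lines_zero (a b : Fin 3 → k) : ∃ v : Fin 3 → k, v ≠ 0 ∧ ∑ j, a j * v j = 0 ∧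
    ∑ j, b j * v j = 0 := by
  let φ : (Fin 3 → k) →ₗ[k] (Fin 2 → k) := Matrix.mulVecLin !![a 0, a 1, a 2; b 0, b 1, b 2]
  have : φ.ker ≠ ⊥ := by
    apply LinearMap.ker_ne_bot_of_finrank_lt
    simp
  obtain ⟨v, hv, hv0⟩ := Submodule.exists_mem_ne_zero_of_ne_bot this
  refine ⟨v, hv0, ?_, ?_⟩
  · have := congrFun (LinearMap.mem_ker.1 hv) 0
    simpa [φ, Matrix.mulVec, dotProduct, Fin.sum_univ_three] using this
  · have := congrFun (LinearMap.mem_ker.1 hv) 1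
    simpa [φ, Matrix.mulVec, dotProduct, Fin.sum_univ_three] using this

theorem mk_point {d : ℕ} (hf : f.IsHomogeneous d) {v : Fin 3 → k} (hv : v ≠ 0)
    (h : eval v f = 0) : ∃ (q : PlanePoint f) (c : k), q.1.rep = c • v := by
  obtain ⟨a, ha⟩ := Projectivization.exists_smul_eq_mk_rep k v hv
  have ha' : (Projectivization.mk k v hv).rep = (a : k) • v := ha.symm
  exact ⟨⟨Projectivization.mk k v hv, by rw [ha', eval_smul_homog hf, h, mul_zero]⟩, a, ha'⟩

theorem line_lower [IsAlgClosed k] (w : ∀ q, LocVal f q) {d : ℕ} (hf : f.IsHomogeneous d)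
    (hd : 2 ≤ d) (hp : Prime f)
    (hsm : ∀ v : Fin 3 → k, eval v f = 0 → (∀ i : Fin 3, eval v (pderiv i f) = 0) → v = 0)
    {b : Fin 3 → k} (hb : b ≠ 0) : d ≤ (dv f (∑ j, C (b j) * X j)).degree := by
  classical
  obtain ⟨c, L, u, hE⟩ := line_split hf b hb
  set l : MvPolynomial (Fin 3) k := ∑ j, C (b j) * X j with hl
  have hl1 : l.IsHomogeneous 1 := linform_homog b
  have hl0 : l ≠ 0 := linform_ne_zero b hb
  have hfl : ¬ f ∣ l := fun h => hl0 (homog_dvd_eq_zero hf hl1 (by omega) h)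
  have evl : ∀ (a : Fin 3 → k) v, eval v (∑ j, C (a j) * X j) = ∑ j, a j * v j := by
    intro a v; simp [map_sum]
  have hq : ∀ i, ∃ q : PlanePoint f, eval q.1.rep l = 0 ∧
      eval q.1.rep (∑ j, C (L i j) * X j) = 0 := by
    intro i
    obtain ⟨v, hv, h1, h2⟩ := two_lines_zero b (L i)
    have hfv : eval v f = 0 := by
      rw [hE, map_add, map_mul, map_mul, map_prod, Finset.prod_eq_zero (Finset.mem_univ i)
        (by rw [evl, h2]), hl, evl, h1]
      simp
    obtain ⟨q, c, hqc⟩ := mk_point hf hv hfv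
    refine ⟨q, ?_, ?_⟩
    · rw [hqc, eval_smul_homog hl1, hl, evl, h1, mul_zero]
    · rw [hqc, eval_smul_homog (linform_homog (L i)), evl, h2, mul_zero]
  choose q hq1 hq2 using hq
  let n : PlanePoint f →₀ ℕ := ∑ i, Finsupp.single (q i) 1
  have hn : n.degree = d := by
    simp only [n, map_sum, Finsupp.degree_single]
    simp
  rw [← hn]
  apply Finsupp.degree_mono
  intro p
  have hnp : n p = (Finset.univ.filter (fun i => q i = p)).card := by
    simp only [n, Finsupp.finsetSum_apply, Finsupp.single_apply]
    rw [Finset.sum_boole]; simp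
  rw [hnp, ← Nat.cast_le (α := ℕ∞), dv_val w hf hp hl1 hfl]
  set I := Finset.univ.filter (fun i => q i = p) with hI
  have hmem : ∀ i, i ∈ I ↔ q i = p := fun i => by simp [hI]
  rcases Nat.lt_or_ge 1 I.card with hc | hc
  · obtain ⟨i, hi, i', hi', hne⟩ := Finset.one_lt_card.1 hc
    rw [hmem] at hi hi'
    have hu : (w p).val u = 0 := by
      rw [(w p).val_zero_iff]
      intro hu
      apply p.1.rep_nonzero
      apply hsm _ p.2
      intro j
      have hprod : (∏ i, (∑ j, C (L i j) * X j) : MvPolynomial (Fin 3) k) =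
          (∑ j, C (L i j) * X j) * ((∑ j, C (L i' j) * X j) *
            ∏ t ∈ (Finset.univ.erase i).erase i', (∑ j, C (L t j) * X j)) := by
        rw [Finset.mul_prod_erase _ (fun t => (∑ j, C (L t j) * X j : MvPolynomial (Fin 3) k)) (by simp [hne.symm]),
          Finset.mul_prod_erase _ (fun t => (∑ j, C (L t j) * X j : MvPolynomial (Fin 3) k)) (by simp)]
      have z1 := hq2 i
      have z2 := hq2 i'
      have z3 := hq1 i
      rw [hi] at z1 z3
      rw [hi'] at z2
      refine (congrArg (fun x => eval p.1.rep (pderiv j x)) hE).trans ?_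
      rw [hprod]
      simp only [map_add, Derivation.leibniz, smul_eq_mul, map_mul, z1, z2, z3, hu]
      simp
    have h1 : (w p).val (l * u) = (w p).val l := by rw [(w p).val_mul, hu, add_zero]
    have h2 : (w p).val (l * u) = (w p).val (C c * ∏ i, (∑ j, C (L i j) * X j)) := by
      rw [← (w p).val_neg (C c * _)]
      apply (w p).val_congr
      rw [sub_neg_eq_add, add_comm, ← hE]
    rw [← h1, h2, (w p).val_mul]
    refine le_trans ?_ le_add_self
    have h3 : ∀ J : Finset (Fin d), ((J.filter (fun i => q i = p)).card : ℕ∞) ≤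
        (w p).val (∏ i ∈ J, (∑ j, C (L i j) * X j)) := by
      intro J
      induction J using Finset.induction_on with
      | empty => simp
      | insert a J ha ih =>
        rw [Finset.prod_insert ha, (w p).val_mul, Finset.filter_insert]
        split_ifs with hap
        · rw [Finset.card_insert_of_notMem (by simp [ha]), Nat.cast_add, add_comm]
          refine add_le_add ?_ ih
          rw [Nat.cast_one, (w p).val_pos, ← hap]
          exact hq2 a
        · exact ih.trans le_add_self
    exact h3 Finset.univ
  · rcases Nat.eq_zero_or_pos I.card with h0 | h0
    · rw [h0]; simp
    · obtain ⟨i, hi⟩ := Finset.card_pos.1 h0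
      rw [hmem] at hi
      rw [show I.card = 1 by omega, Nat.cast_one, (w p).val_pos, ← hi]
      exact hq1 i

theorem line_deg [IsAlgClosed k] (w : ∀ q, LocVal f q) {d : ℕ} (hf : f.IsHomogeneous d)
    (hd : 2 ≤ d) (hp : Prime f)
    (hsm : ∀ v : Fin 3 → k, eval v f = 0 → (∀ i : Fin 3, eval v (pderiv i f) = 0) → v = 0)
    {n : ℕ} (L : Fin n → Fin 3 → k) (hL : ∀ i, L i ≠ 0) (J : Finset (Fin n)) :
    ¬ f ∣ ∏ i ∈ J, (∑ j, C (L i j) * X j) ∧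
    (∏ i ∈ J, (∑ j, C (L i j) * X j) : MvPolynomial (Fin 3) k).IsHomogeneous J.card ∧
    d * J.card ≤ (dv f (∏ i ∈ J, (∑ j, C (L i j) * X j))).degree := by
  classical
  induction J using Finset.induction_on with
  | empty =>
    simp only [Finset.prod_empty, Finset.card_empty]
    exact ⟨fun h => hp.not_unit (isUnit_of_dvd_one h), isHomogeneous_one _ _, by simp⟩
  | insert a J ha ih =>
    obtain ⟨h1, h2, h3⟩ := ih
    have hl1 := linform_homog (L a)
    have hfl : ¬ f ∣ ∑ j, C (L a j) * X j :=
      fun h => linform_ne_zero _ (hL a) (homog_dvd_eq_zero hf hl1 (by omega) h)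
    rw [Finset.prod_insert ha, Finset.card_insert_of_notMem ha]
    refine ⟨fun h => (hp.dvd_or_dvd h).elim hfl h1, ?_, ?_⟩
    · rw [add_comm]; exact hl1.mul h2
    · rw [dv_mul w hf hp hl1 hfl h2 h1, map_add]
      have := line_lower w hf hd hp hsm (hL a)
      rw [mul_add]; omega

theorem bezout [IsAlgClosed k] (w : ∀ q, LocVal f q) {d : ℕ} (hf : f.IsHomogeneous d)
    (hd : 2 ≤ d) (hp : Prime f)
    (hsm : ∀ v : Fin 3 → k, eval v f = 0 → (∀ i : Fin 3, eval v (pderiv i f) = 0) → v = 0)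
    {g : MvPolynomial (Fin 3) k} {e : ℕ} (hg : g.IsHomogeneous e) (hfg : ¬ f ∣ g) :
    (dv f g).degree = d * e := by
  have hg0 : g ≠ 0 := by rintro rfl; exact hfg (dvd_zero f)
  obtain ⟨N, hN⟩ : ∃ N, N = d * e := ⟨_, rfl⟩
  have h1 := finrank_ideal_part hf hg hp.ne_zero hg0
    (hp.irreducible.isRelPrime_iff_not_dvd.2 hfg) N
  let ι : MvPolynomial (Fin 2) k →ₐ[k] MvPolynomial (Fin 3) k := rename (Fin.castLE (by omega))
  have hι : Function.Injective ι := rename_injective _ (Fin.castLE_injective _)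
  let Bin := (homogeneousSubmodule (Fin 2) k (N + d + e)).map ι.toLinearMap
  have hB : Module.finrank k Bin = N + d + e + 1 := by
    rw [← finrank_homog_two k]
    exact LinearEquiv.finrank_eq (Submodule.equivMapOfInjective _ hι _).symm
  have hBle : Bin ≤ homogeneousSubmodule (Fin 3) k (N + d + e) := by
    rintro _ ⟨x, hx, rfl⟩
    exact IsHomogeneous.rename_isHomogeneous hx
  have hne : Bin ⊓ (mulSub f (N + e) ⊔ mulSub g (N + d)) ≠ ⊥ := by
    intro hbot
    have h2 := Submodule.finrank_sup_add_finrank_inf_eq Bin (mulSub f (N + e) ⊔ mulSub g (N + d))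
    rw [hbot, finrank_bot] at h2
    have h3 := Submodule.finrank_mono (sup_le hBle (ideal_part_le hf hg N))
    omega
  obtain ⟨B, hBm, hB0⟩ := Submodule.exists_mem_ne_zero_of_ne_bot hne
  obtain ⟨⟨x, hx, hxB⟩, hBI⟩ := hBm
  obtain ⟨c, L, hL, hE⟩ := binary_split (n := N + d + e) hx
  have hc : c ≠ 0 := by
    rintro rfl
    apply hB0
    rw [← hxB, hE]; simp
  let L' : Fin (N + d + e) → Fin 3 → k := fun i => ![L i 0, L i 1, 0]
  have hL' : ∀ i, L' i ≠ 0 := by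
    intro i h
    apply hL i
    ext j
    fin_cases j
    · simpa [L'] using congrFun h 0
    · simpa [L'] using congrFun h 1
  have hBE : B = C c * ∏ i, (∑ j, C (L' i j) * X j) := by
    rw [← hxB, hE]
    change ι _ = _
    rw [map_mul, map_prod]
    congr 1
    · simp [ι]
    · refine Finset.prod_congr rfl fun i _ => ?_
      simp [ι, L', Fin.sum_univ_three]
  obtain ⟨l1, l2, l3⟩ := line_deg w hf hd hp hsm L' hL' Finset.univ
  rw [Finset.card_univ, Fintype.card_fin] at l2 l3
  have hBhom : B.IsHomogeneous (N + d + e) := hBle ⟨x, hx, hxB⟩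
  have hcu : IsUnit (C c : MvPolynomial (Fin 3) k) := (isUnit_iff_ne_zero.2 hc).map C
  have hCc : ¬ f ∣ (C c : MvPolynomial (Fin 3) k) := fun h => hp.not_unit (isUnit_of_dvd_unit h hcu)
  have hfB : ¬ f ∣ B := by
    rw [hBE]
    exact fun h => (hp.dvd_or_dvd h).elim hCc l1
  have hdB : d * (N + d + e) ≤ (dv f B).degree := by
    rw [hBE, dv_mul w hf hp (isHomogeneous_C _ c) hCc l2 l1, map_add]
    omega
  obtain ⟨y, hy, z, hz, hyz⟩ := Submodule.mem_sup.1 hBI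
  obtain ⟨y, _, rfl⟩ := mem_mulSub.1 hy
  obtain ⟨z, hz', rfl⟩ := mem_mulSub.1 hz
  have hfz : ¬ f ∣ g * z := by
    intro h
    apply hfB
    rw [← hyz]
    exact dvd_add (dvd_mul_right _ _) h
  have hfz' : ¬ f ∣ z := fun h => hfz (dvd_mul_of_dvd_right h g)
  have e1 : dv f B = dv f (g * z) :=
    dv_congr w hf hp hBhom hfB (hg.mul hz') hfz ⟨y, by rw [← hyz]; ring⟩
  rw [e1, dv_mul w hf hp hg hfg hz' hfz', map_add] at hdB
  have u1 := dv_le w hf hp hg hfg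
  have u2 := dv_le w hf hp hz' hfz'
  have : d * (N + d + e) = d * (N + d) + d * e := by ring
  omega

end V

end PartE

section PartG

open MvPolynomial

section M

variable {k : Type*} [Field k] {f : MvPolynomial (Fin 3) k}

theorem codim_one {E : Type*} [AddCommGroup E] [Module k E] (W W1 : Submodule k E)
    [Module.Finite k W1] (x0 : E) (h : ∀ x ∈ W, ∃ c : k, x - c • x0 ∈ W1) :
    Module.finrank k W ≤ Module.finrank k W1 + 1 := by
  have h1 : W ≤ W1 ⊔ Submodule.span k {x0} := by
    intro x hx
    obtain ⟨c, hc⟩ := h x hx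
    exact Submodule.mem_sup.2 ⟨_, hc, c • x0,
      Submodule.smul_mem _ c (Submodule.mem_span_singleton_self x0), by simp⟩
  have h2 := Submodule.finrank_mono h1
  have h3 := Submodule.finrank_add_le_finrank_add_finrank W1 (Submodule.span k {x0})
  have h4 := finrank_span_le_card (R := k) ({x0} : Set E)
  simp at h4
  omega

theorem cond_point {E : Type*} [AddCommGroup E] [Module k E]
    (Φ : E →ₗ[k] MvPolynomial (Fin 3) k) {q : PlanePoint f} (w : LocVal f q) (N : ℕ) :
    ∀ (n : ℕ) (W : Submodule k E) [Module.Finite k W], (∀ x ∈ W, (n : ℕ∞) ≤ w.val (Φ x)) →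
    ∃ W' ≤ W, (∀ x ∈ W', ((n + N : ℕ) : ℕ∞) ≤ w.val (Φ x)) ∧
      Module.finrank k W ≤ Module.finrank k W' + N := by
  induction N with
  | zero => intro n W _ h; exact ⟨W, le_rfl, by simpa using h, by simp⟩
  | succ N ih =>
    intro n W _ h
    let W1 : Submodule k E :=
      { carrier := {x | x ∈ W ∧ ((n + 1 : ℕ) : ℕ∞) ≤ w.val (Φ x)}
        add_mem' := by
          rintro a b ⟨h1, h2⟩ ⟨h3, h4⟩
          refine ⟨W.add_mem h1 h3, ?_⟩
          rw [map_add]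
          exact (le_min h2 h4).trans (w.val_add _ _)
        zero_mem' := ⟨W.zero_mem, by rw [map_zero, w.val_z]; exact le_top⟩
        smul_mem' := by
          rintro c a ⟨h1, h2⟩
          refine ⟨W.smul_mem c h1, ?_⟩
          rw [map_smul]
          exact h2.trans (w.val_smul c _) }
    have hle : W1 ≤ W := fun x hx => hx.1
    haveI : Module.Finite k W1 := Submodule.finiteDimensional_of_le hle
    obtain ⟨W', h1, h2, h3⟩ := ih (n + 1) W1 (fun x hx => hx.2)
    refine ⟨W', h1.trans hle, ?_, ?_⟩
    · intro x hx
      have := h2 x hx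
      rwa [show n + 1 + N = n + (N + 1) by ring] at this
    · have : Module.finrank k W ≤ Module.finrank k W1 + 1 := by
        by_cases hx : ∃ x0 ∈ W, w.val (Φ x0) = n
        · obtain ⟨x0, hx0, hv⟩ := hx
          apply codim_one W W1 x0
          intro x hx
          obtain ⟨c, hc⟩ := w.step n (Φ x0) (Φ x) hv (h x hx)
          refine ⟨c, W.sub_mem hx (W.smul_mem c hx0), ?_⟩
          rwa [map_sub, map_smul, smul_eq_C_mul]
        · push Not at hx
          have : W ≤ W1 := by
            intro x hxW
            refine ⟨hxW, ?_⟩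
            have := lt_of_le_of_ne (h x hxW) (hx x hxW).symm
            rw [Nat.cast_add, Nat.cast_one]
            exact Order.add_one_le_of_lt this
          have := Submodule.finrank_mono this
          omega
      omega

theorem cond_functional {E : Type*} [AddCommGroup E] [Module k E]
    (φ : E →ₗ[k] k) (W : Submodule k E) [Module.Finite k W] :
    ∃ W' ≤ W, (∀ x ∈ W', φ x = 0) ∧ Module.finrank k W ≤ Module.finrank k W' + 1 := by
  refine ⟨W ⊓ φ.ker, inf_le_left, fun x hx => hx.2, ?_⟩
  by_cases h : ∃ x0 ∈ W, φ x0 ≠ 0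
  · obtain ⟨x0, hx0, h0⟩ := h
    apply codim_one W (W ⊓ φ.ker) x0
    intro x hx
    refine ⟨φ x / φ x0, W.sub_mem hx (W.smul_mem _ hx0), ?_⟩
    change _ = _
    simp [h0]
  · push Not at h
    have : W ≤ W ⊓ φ.ker := fun x hx => ⟨hx, h x hx⟩
    have := Submodule.finrank_mono this
    omega

theorem homog_zero_C {g : MvPolynomial (Fin 3) k} (hg : g.IsHomogeneous 0) : ∃ c, g = C c :=
  ⟨_, (totalDegree_eq_zero_iff_eq_C).1 ((totalDegree_zero_iff_isHomogeneous _).2 hg)⟩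

theorem exists_P [Infinite k] (hf0 : f ≠ 0) {d : ℕ} (hf : f.IsHomogeneous d) (hd : 0 < d) :
    ∃ P : Fin 3 → k, P ≠ 0 ∧ eval P f ≠ 0 := by
  by_contra h
  push Not at h
  apply hf0
  apply MvPolynomial.funext
  intro P
  rw [map_zero]
  by_cases hP : P = 0
  · have := eval_smul_homog hf 0 P
    rw [zero_pow (by omega), zero_mul, zero_smul] at this
    rw [hP]; exact this
  · exact h P hP

/-- existence of a relation of degree `d - 1` -/
theorem exists_rel [IsAlgClosed k] (w : ∀ q, LocVal f q) {d : ℕ} (hf : f.IsHomogeneous d)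
    (hd : 4 ≤ d) (hp : Prime f)
    (hsm : ∀ v : Fin 3 → k, eval v f = 0 → (∀ i : Fin 3, eval v (pderiv i f) = 0) → v = 0)
    {a b : MvPolynomial (Fin 3) k} {m : ℕ} (ha : a.IsHomogeneous m) (hb : b.IsHomogeneous m)
    (Z : PlanePoint f →₀ ℕ) (hZa : ∀ q, (Z q : ℕ∞) ≤ (w q).val a)
    (hZb : ∀ q, (Z q : ℕ∞) ≤ (w q).val b) (hZ : m * d ≤ Z.degree + (d - 1))
    (q0 : PlanePoint f) (P : Fin 3 → k) :
    ∃ u v : MvPolynomial (Fin 3) k, u.IsHomogeneous (d - 1) ∧ v.IsHomogeneous (d - 1) ∧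
      ¬ (u = 0 ∧ v = 0) ∧ eval P u = 0 ∧ eval P v = 0 ∧ f ∣ u * b - v * a := by
  classical
  let V := homogeneousSubmodule (Fin 3) k (d - 1)
  let W : Submodule k (MvPolynomial (Fin 3) k × MvPolynomial (Fin 3) k) := V.prod V
  let eW : W ≃ₗ[k] (V × V) :=
    { toFun := fun x => (⟨x.1.1, x.2.1⟩, ⟨x.1.2, x.2.2⟩)
      invFun := fun y => ⟨(y.1.1, y.2.1), y.1.2, y.2.2⟩
      map_add' := fun _ _ => rfl
      map_smul' := fun _ _ => rfl
      left_inv := fun _ => rfl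
      right_inv := fun _ => rfl }
  have hW : Module.finrank k W = (d + 1) * d := by
    have e1 : Module.finrank k W = Module.finrank k (V × V) :=
      LinearEquiv.finrank_eq eW
    have := finrank_homog_three k (d - 1)
    rw [e1, Module.finrank_prod, ← two_mul, this]
    congr 1 <;> omega
  haveI : Module.Finite k W := Module.Finite.equiv eW.symm
  let evP : MvPolynomial (Fin 3) k →ₗ[k] k := (aeval P).toLinearMap
  have hevP : ∀ x, evP x = eval P x := fun x => by simp [evP, aeval_eq_eval]
  obtain ⟨W1, hW1, h1, d1⟩ := cond_functional (evP ∘ₗ LinearMap.fst k _ _) W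
  haveI : Module.Finite k W1 := Submodule.finiteDimensional_of_le hW1
  obtain ⟨W2, hW2, h2, d2⟩ := cond_functional (evP ∘ₗ LinearMap.snd k _ _) W1
  haveI : Module.Finite k W2 := Submodule.finiteDimensional_of_le hW2
  let Φ : MvPolynomial (Fin 3) k × MvPolynomial (Fin 3) k →ₗ[k] MvPolynomial (Fin 3) k :=
    LinearMap.mulRight k b ∘ₗ LinearMap.fst k _ _ - LinearMap.mulRight k a ∘ₗ LinearMap.snd k _ _
  have hΦ : ∀ x, Φ x = x.1 * b - x.2 * a := fun x => rfl
  have hval : ∀ q x, (Z q : ℕ∞) ≤ (w q).val (Φ x) := by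
    intro q x
    rw [hΦ, sub_eq_add_neg]
    refine le_trans (le_min ?_ ?_) ((w q).val_add _ _)
    · rw [(w q).val_mul]; exact (hZb q).trans le_add_self
    · rw [(w q).val_neg, (w q).val_mul]; exact (hZa q).trans le_add_self
  obtain ⟨W3, hW3, h3, d3⟩ := cond_point Φ (w q0) (d * d) (Z q0) W2 (fun x _ => hval q0 x)
  have hne : W3 ≠ ⊥ := by
    intro hbot
    rw [hbot, finrank_bot] at d3
    nlinarith
  obtain ⟨x, hx, hx0⟩ := Submodule.exists_mem_ne_zero_of_ne_bot hne
  have hxW : x ∈ W := hW1 (hW2 (hW3 hx))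
  have hu : x.1.IsHomogeneous (d - 1) := hxW.1
  have hv : x.2.IsHomogeneous (d - 1) := hxW.2
  refine ⟨x.1, x.2, hu, hv, fun h => hx0 (Prod.ext h.1 h.2), ?_, ?_, ?_⟩
  · rw [← hevP]; exact h1 x (hW2 (hW3 hx))
  · rw [← hevP]; exact h2 x (hW3 hx)
  · by_contra hnd
    have hhom : (x.1 * b - x.2 * a).IsHomogeneous (d - 1 + m) := (hu.mul hb).sub (hv.mul ha)
    have hB := bezout w hf (by omega) hp hsm hhom hnd
    have hle : Z + Finsupp.single q0 (d * d) ≤ dv f (x.1 * b - x.2 * a) := by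
      intro q
      rw [← Nat.cast_le (α := ℕ∞), dv_val w hf hp hhom hnd, Finsupp.add_apply]
      by_cases hq : q = q0
      · subst hq
        rw [Finsupp.single_eq_same]
        exact h3 x hx
      · rw [Finsupp.single_eq_of_ne hq, add_zero]
        exact hval q x
    have := Finsupp.degree_mono hle
    rw [map_add, Finsupp.degree_single, hB, mul_add] at this
    obtain ⟨t, rfl⟩ : ∃ t, d = t + 1 := ⟨d - 1, by omega⟩
    simp only [Nat.add_sub_cancel] at *
    nlinarith

theorem core [IsAlgClosed k] (w : ∀ q, LocVal f q) {d : ℕ} (hf : f.IsHomogeneous d)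
    (hd : 4 ≤ d) (hp : Prime f)
    (hsm : ∀ v : Fin 3 → k, eval v f = 0 → (∀ i : Fin 3, eval v (pderiv i f) = 0) → v = 0)
    {a b : MvPolynomial (Fin 3) k} {m : ℕ} (ha : a.IsHomogeneous m) (hb : b.IsHomogeneous m)
    (hfa : ¬ f ∣ a) (hfb : ¬ f ∣ b) (D' E : PlanePoint f →₀ ℕ) (hD' : D'.degree = d - 1)
    (hDE : dv f b + D' = dv f a + E) :
    (∃ c1 c2 : k, c1 ≠ 0 ∧ c2 ≠ 0 ∧ f ∣ C c1 * b - C c2 * a) ∨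
    (∃ (p : PlanePoint f) (l : MvPolynomial (Fin 3) k), l.IsHomogeneous 1 ∧ l ≠ 0 ∧ ¬ f ∣ l ∧
      dv f l = Finsupp.single p 1 + D') := by
  classical
  haveI : Infinite k := IsAlgClosed.instInfinite
  obtain ⟨P, hP0, hP⟩ := exists_P hp.ne_zero hf (by omega)
  obtain ⟨q0, -⟩ : ∃ q0, D' q0 ≠ 0 := by
    by_contra h
    push Not at h
    have : D' = 0 := Finsupp.ext h
    rw [this, map_zero] at hD'
    omega
  have hle1 : dv f a ≤ dv f a ⊓ dv f b + D' := by
    intro q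
    have := DFunLike.congr_fun hDE q
    simp only [Finsupp.add_apply, Finsupp.inf_apply] at *
    omega
  have hZdeg := Finsupp.degree_mono hle1
  rw [map_add, bezout w hf (by omega) hp hsm ha hfa, hD', mul_comm d] at hZdeg
  obtain ⟨u, v, hu, hv, huv, hPu, hPv, hrel⟩ := exists_rel w hf hd hp hsm ha hb
    (dv f a ⊓ dv f b)
    (fun q => by
      rw [← dv_val w hf hp ha hfa, Nat.cast_le]; exact inf_le_left)
    (fun q => by
      rw [← dv_val w hf hp hb hfb, Nat.cast_le]; exact inf_le_right) hZdeg q0 P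
  have hv0 : v ≠ 0 := by
    rintro rfl
    rw [zero_mul, sub_zero] at hrel
    rcases hp.dvd_or_dvd hrel with h | h
    · exact huv ⟨homog_dvd_eq_zero hf hu (by omega) h, rfl⟩
    · exact hfb h
  have hu0 : u ≠ 0 := by
    rintro rfl
    rw [zero_mul, zero_sub, dvd_neg] at hrel
    rcases hp.dvd_or_dvd hrel with h | h
    · exact hv0 (homog_dvd_eq_zero hf hv (by omega) h)
    · exact hfa h
  obtain ⟨u', v', c', hrp, hcu, hcv⟩ :=
    UniqueFactorizationMonoid.exists_reduced_factors u hu0 v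
  subst hcu
  subst hcv
  obtain ⟨γ, m', hγ, hm', hsum⟩ := homog_factor hu hu0
  obtain ⟨γ2, m2, hγ2, hm2, hsum2⟩ := homog_factor hv hv0
  have hc0 : c' ≠ 0 := left_ne_zero_of_mul hu0
  have hu'0 : u' ≠ 0 := right_ne_zero_of_mul hu0
  have hv'0 : v' ≠ 0 := right_ne_zero_of_mul hv0
  have := hγ2.inj_right hγ hc0
  obtain rfl : m2 = m' := by omega
  have hfc : ¬ f ∣ c' := fun h => hc0 (homog_dvd_eq_zero hf hγ (by omega) h)
  have hfu : ¬ f ∣ u' := fun h => hu'0 (homog_dvd_eq_zero hf hm' (by omega) h)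
  have hfv : ¬ f ∣ v' := fun h => hv'0 (homog_dvd_eq_zero hf hm2 (by omega) h)
  have hrel' : f ∣ u' * b - v' * a := by
    rw [show c' * u' * b - c' * v' * a = c' * (u' * b - v' * a) by ring] at hrel
    exact (hp.dvd_or_dvd hrel).resolve_left hfc
  have hdvrel : dv f u' + dv f b = dv f v' + dv f a := by
    rw [← dv_mul w hf hp hm' hfu hb hfb, ← dv_mul w hf hp hm2 hfv ha hfa]
    exact dv_congr w hf hp (hm'.mul hb) (fun h => (hp.dvd_or_dvd h).elim hfu hfb)
      (hm2.mul ha) (fun h => (hp.dvd_or_dvd h).elim hfv hfa) hrel'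
  have hle2 : dv f u' ≤ dv f u' ⊓ dv f v' + D' := by
    intro q
    have h1 := DFunLike.congr_fun hDE q
    have h2 := DFunLike.congr_fun hdvrel q
    simp only [Finsupp.add_apply, Finsupp.inf_apply] at *
    omega
  have hdeg2 := Finsupp.degree_mono hle2
  rw [map_add, bezout w hf (by omega) hp hsm hm' hfu, hD'] at hdeg2
  have hna : ∀ q, (((dv f u' ⊓ dv f v') q : ℕ) : ℕ∞) ≤ (w q).val u' := fun q => by
    rw [← dv_val w hf hp hm' hfu, Nat.cast_le]; exact inf_le_left
  have hnb : ∀ q, (((dv f u' ⊓ dv f v') q : ℕ) : ℕ∞) ≤ (w q).val v' := fun q => by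
    rw [← dv_val w hf hp hm2 hfv, Nat.cast_le]; exact inf_le_right
  have hup := bez_upper w hm' hm2 hu'0 hv'0 hrp _ hna hnb
  have hm1 : m2 ≤ 1 := by
    by_contra hgt
    obtain ⟨t, rfl⟩ : ∃ t, m2 = t + 2 := ⟨m2 - 2, by omega⟩
    obtain ⟨s, rfl⟩ : ∃ s, d = s + 4 := ⟨d - 4, by omega⟩
    have hst : t = s + 1 := by
      have h1 : s ≤ t - 1 ∧ 1 ≤ t := by
        constructor
        · by_contra hh
          have : t ≤ s := by omega
          simp only [Nat.add_sub_cancel, show s + 4 - 1 = s + 3 by omega] at *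
          nlinarith
        · by_contra hh
          have : t = 0 := by omega
          subst this
          omega
      omega
    have hγ0 : γ = 0 := by omega
    subst hγ0
    obtain ⟨c, rfl⟩ := homog_zero_C hγ
    have hc : c ≠ 0 := by rintro rfl; simp at hc0
    rw [map_mul, eval_C] at hPu hPv
    have := bez_upper_P w hf hP hP0 hm' hm2 hu'0 hv'0 hrp _ hna hnb
      ((mul_eq_zero.1 hPu).resolve_left hc) ((mul_eq_zero.1 hPv).resolve_left hc)
    subst hst
    simp only [show s + 4 - 1 = s + 3 by omega] at *
    nlinarith
  rcases Nat.le_one_iff_eq_zero_or_eq_one.1 hm1 with rfl | rfl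
  · left
    obtain ⟨c1, rfl⟩ := homog_zero_C hm'
    obtain ⟨c2, rfl⟩ := homog_zero_C hm2
    exact ⟨c1, c2, by rintro rfl; simp at hu'0, by rintro rfl; simp at hv'0, hrel'⟩
  · right
    have hZ1 : (dv f u' ⊓ dv f v').degree = 1 := by omega
    obtain ⟨p, hpZ⟩ : ∃ p, dv f u' ⊓ dv f v' = Finsupp.single p 1 := by
      have : (dv f u' ⊓ dv f v') ∈ {x : PlanePoint f →₀ ℕ | x.degree = 1} := hZ1
      rw [← Set.mem_preimage, ← Finsupp.range_single_one] at this
      obtain ⟨p, hp⟩ := this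
      exact ⟨p, hp.symm⟩
    refine ⟨p, u', hm', hu'0, hfu, ?_⟩
    rw [← hpZ]
    obtain ⟨r, hr⟩ := exists_add_of_le hle2
    have hr' := congrArg Finsupp.degree hr
    rw [map_add, map_add, bezout w hf (by omega) hp hsm hm' hfu, hD', hZ1] at hr'
    have : r.degree = 0 := by omega
    rw [Finsupp.degree_eq_zero_iff] at this
    rw [hr, this, add_zero]

end M

end PartG

section Lift

theorem lift_div {α : Type*} (X : α →₀ ℤ) (hX : ∀ q, 0 ≤ X q) :
    ∃ Y : α →₀ ℕ, (∀ q, (Y q : ℤ) = X q) ∧ (Y.degree : ℤ) = X.degree := by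
  refine ⟨X.mapRange Int.toNat rfl, fun q => ?_, ?_⟩
  · rw [Finsupp.mapRange_apply]; exact Int.toNat_of_nonneg (hX q)
  · rw [Finsupp.degree_apply, Finsupp.degree_apply, Nat.cast_sum]
    rw [Finset.sum_subset (Finsupp.support_mapRange (f := Int.toNat) (hf := rfl) (g := X))]
    · refine Finset.sum_congr rfl fun q _ => ?_
      rw [Finsupp.mapRange_apply]; exact Int.toNat_of_nonneg (hX q)
    · intro q _ hq
      rw [Finsupp.notMem_support_iff.1 hq]; rfl

theorem cast_div {α : Type*} (Y : α →₀ ℕ) :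
    ∃ X : α →₀ ℤ, (∀ q, X q = (Y q : ℤ)) ∧ X.degree = (Y.degree : ℤ) := by
  have h := lift_div (Y.mapRange (fun n : ℕ => (n : ℤ)) rfl) (fun q => by simp)
  obtain ⟨Y', h1, h2⟩ := h
  have : Y' = Y := by
    ext q
    have := h1 q
    rw [Finsupp.mapRange_apply] at this
    exact_mod_cast this
  subst this
  exact ⟨_, fun q => (h1 q).symm, h2.symm⟩

end Lift

open Classical in
/-- On a smooth plane curve `C ⊆ ℙ²_k` of degree `d ≥ 4` over an algebraically closed field,
every `g¹_{d-1}` is of the form `O_C(1)(-p)`: every divisor `D` of degree `d - 1` with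
`ℓ(D) ≥ 2` is linearly equivalent to `H - p` for some point `p ∈ C`, where `H` is the
intersection divisor of `C` with a line (i.e. `D - (H - p)` is the divisor of a rational
function `g/h` on `C`). -/
theorem g1_d_sub_one_is_line_section_minus_point
    (k : Type*) [Field k] [IsAlgClosed k]
    (d : ℕ) (hd : 4 ≤ d) (f : MvPolynomial (Fin 3) k) (hf : f.IsHomogeneous d)
    (hsm : ∀ v : Fin 3 → k, MvPolynomial.eval v f = 0 →
      (∀ i : Fin 3, MvPolynomial.eval v (MvPolynomial.pderiv i f) = 0) → v = 0)
    (F : Type*) [Field F]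
    [Algebra (MvPolynomial (Fin 3) k ⧸ Ideal.span {f}) F]
    [IsFractionRing (MvPolynomial (Fin 3) k ⧸ Ideal.span {f}) F]
    [Algebra k F] [IsScalarTower k (MvPolynomial (Fin 3) k ⧸ Ideal.span {f}) F]
    (D : PlanePoint f →₀ ℤ) (hdeg : D.sum (fun _ n => n) = (d : ℤ) - 1)
    (h2 : 2 ≤ h0 F f (fun q => D q)) :
    ∃ (p : PlanePoint f) (l g h : MvPolynomial (Fin 3) k) (e : ℕ),
      l.IsHomogeneous 1 ∧ l ≠ 0 ∧
      g.IsHomogeneous e ∧ h.IsHomogeneous e ∧ ¬ f ∣ g ∧ ¬ f ∣ h ∧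
      ∀ q : PlanePoint f,
        (D q : ℤ) - (ordAt f q l : ℤ) + (if q = p then 1 else 0)
          = (ordAt f q g : ℤ) - (ordAt f q h : ℤ) := by
  have hf0 : f ≠ 0 := by
    rintro rfl
    have := hsm (fun _ => 1) (by simp) (by simp)
    exact one_ne_zero (congrFun this 0)
  have hp : Prime f := by
    have hdom : IsDomain (MvPolynomial (Fin 3) k ⧸ Ideal.span {f}) :=
      (IsFractionRing.injective (MvPolynomial (Fin 3) k ⧸ Ideal.span {f}) F).isDomain
        (algebraMap _ F)
    rw [Ideal.Quotient.isDomain_iff_prime, Ideal.span_singleton_prime hf0] at hdom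
    exact hdom
  have w : ∀ q, LocVal f q := fun q => (exists_LocVal hf (by omega) hp hsm q).some
  -- two independent sections
  obtain ⟨φ1, hφ1, hφ10⟩ : ∃ φ ∈ RRspace F f (fun q => D q), φ ≠ 0 := by
    by_contra h
    push Not at h
    have : Submodule.span k (RRspace F f (fun q => D q)) = ⊥ := Submodule.span_eq_bot.2 h
    rw [h0, this, finrank_bot] at h2
    omega
  obtain ⟨φ2, hφ2, hφ12⟩ : ∃ φ ∈ RRspace F f (fun q => D q), φ ∉ Submodule.span k {φ1} := by
    by_contra h
    push Not at h
    have h3 := Submodule.finrank_mono (Submodule.span_le.2 h)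
    have h4 := finrank_span_le_card (R := k) ({φ1} : Set F)
    simp only [Set.toFinset_singleton, Finset.card_singleton] at h4
    rw [h0] at h2
    omega
  have hφ20 : φ2 ≠ 0 := by
    rintro rfl
    exact hφ12 (Submodule.zero_mem _)
  obtain ⟨e1, g1, h1, hg1, hh1, hfg1, hfh1, heq1, hD1⟩ := hφ1.resolve_left hφ10
  obtain ⟨e2, g2, h2', hg2, hh2, hfg2, hfh2, heq2, hD2⟩ := hφ2.resolve_left hφ20
  obtain ⟨G1, G1q, G1d⟩ := cast_div (dv f g1)
  obtain ⟨G2, G2q, G2d⟩ := cast_div (dv f g2)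
  obtain ⟨H1, H1q, H1d⟩ := cast_div (dv f h1)
  obtain ⟨H2, H2q, H2d⟩ := cast_div (dv f h2')
  have bz := fun {g : MvPolynomial (Fin 3) k} {e : ℕ} (hg : g.IsHomogeneous e) (hfg : ¬ f ∣ g) =>
    bezout w hf (by omega) hp hsm hg hfg
  rw [bz hg1 hfg1] at G1d
  rw [bz hh1 hfh1] at H1d
  obtain ⟨D', D'q, D'd⟩ := lift_div (D + G1 - H1) (fun q => by
    have := hD1 q
    beta_reduce at this
    rw [← dv_ord w hf hp hg1 hfg1, ← dv_ord w hf hp hh1 hfh1] at this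
    rw [Finsupp.sub_apply, Finsupp.add_apply, G1q, H1q]
    omega)
  obtain ⟨E, Eq, -⟩ := lift_div (D + G2 - H2) (fun q => by
    have := hD2 q
    beta_reduce at this
    rw [← dv_ord w hf hp hg2 hfg2, ← dv_ord w hf hp hh2 hfh2] at this
    rw [Finsupp.sub_apply, Finsupp.add_apply, G2q, H2q]
    omega)
  have hDd : D.degree = (d : ℤ) - 1 := hdeg
  rw [map_sub, map_add, hDd, G1d, H1d] at D'd
  have hD'd : D'.degree = d - 1 := by omega
  have hfa : ¬ f ∣ h2' * g1 := fun h => (hp.dvd_or_dvd h).elim hfh2 hfg1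
  have hfb : ¬ f ∣ g2 * h1 := fun h => (hp.dvd_or_dvd h).elim hfg2 hfh1
  have hDE : dv f (g2 * h1) + D' = dv f (h2' * g1) + E := by
    rw [dv_mul w hf hp hg2 hfg2 hh1 hfh1, dv_mul w hf hp hh2 hfh2 hg1 hfg1]
    ext q
    have a1 := D'q q
    have a2 := Eq q
    simp only [Finsupp.add_apply, Finsupp.sub_apply, G1q, G2q, H1q, H2q] at a1 a2 ⊢
    omega
  rcases core w hf hd hp hsm (hh2.mul hg1) (hg2.mul hh1) hfa hfb D' E hD'd hDE with
    ⟨c1, c2, hc1, hc2, hdvd⟩ | ⟨p, l, hl1, hl0, hfl, hdl⟩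
  · exfalso
    apply hφ12
    let ψ : MvPolynomial (Fin 3) k →+* F :=
      (algebraMap (MvPolynomial (Fin 3) k ⧸ Ideal.span {f}) F).comp
        (Ideal.Quotient.mk (Ideal.span {f}))
    have hψ : ∀ x, ψ x = 0 ↔ f ∣ x := by
      intro x
      change algebraMap _ F (Ideal.Quotient.mk (Ideal.span {f}) x) = 0 ↔ _
      rw [IsFractionRing.to_map_eq_zero_iff, Ideal.Quotient.eq_zero_iff_mem,
        Ideal.mem_span_singleton]
    have hψC : ∀ c : k, ψ (MvPolynomial.C c) = algebraMap k F c := by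
      intro c
      rw [IsScalarTower.algebraMap_apply k (MvPolynomial (Fin 3) k ⧸ Ideal.span {f}) F]
      rfl
    have E1 : φ1 * ψ h1 = ψ g1 := heq1
    have E2 : φ2 * ψ h2' = ψ g2 := heq2
    have E3 := (hψ _).2 hdvd
    have n1 : ψ h1 ≠ 0 := fun h => hfh1 ((hψ _).1 h)
    have n2 : ψ h2' ≠ 0 := fun h => hfh2 ((hψ _).1 h)
    have n3 : algebraMap k F c1 ≠ 0 := fun h => hc1 ((map_eq_zero _).1 h)
    simp only [map_sub, map_mul, hψC] at E3
    have E4 : algebraMap k F c1 * φ2 = algebraMap k F c2 * φ1 := by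
      apply mul_right_cancel₀ (mul_ne_zero n1 n2)
      linear_combination E3 - algebraMap k F c2 * ψ h2' * E1
        + algebraMap k F c1 * ψ h1 * E2
    refine Submodule.mem_span_singleton.2 ⟨c2 / c1, ?_⟩
    rw [Algebra.smul_def, map_div₀]
    field_simp
    linear_combination -E4
  · refine ⟨p, l, h1, g1, e1, hl1, hl0, hh1, hg1, hfh1, hfg1, fun q => ?_⟩
    rw [← dv_ord w hf hp hl1 hfl, ← dv_ord w hf hp hg1 hfg1, ← dv_ord w hf hp hh1 hfh1, hdl]
    have a1 := D'q q
    simp only [Finsupp.add_apply, Finsupp.sub_apply, G1q, H1q, Finsupp.single_apply] at a1 ⊢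
    by_cases hqp : q = p
    · subst hqp
      simp only [if_true]
      push_cast
      omega
    · rw [if_neg hqp, if_neg (Ne.symm hqp)]
      push_cast
      omega
end

section
/- Let $k$ be an algebraically closed field and let $C \subset \mathbb{P}^2_k$ be a smooth plane curve of degree $d \geq 4$. Then $C$ has at most one $g^2_d$, and it is a complete linear series: if $\mathcal{L}$ is any line bundle on $C$ of degree $d$ with $h^0(C, \mathcal{L}) \geq 3$, then $\mathcal{L} \cong \mathcal{O}_C(1)$ and $h^0(C, \mathcal{L}) = 3$. -/
namespace PCurve
open MvPolynomial

section Algebra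
variable {k : Type*} [Field k]

theorem eval_smul_hom {σ : Type*} {n : ℕ} {p : MvPolynomial σ k} (hp : p.IsHomogeneous n) {A : Type*}
    [CommRing A] [Algebra k A] (c : A) (v : σ → A) :
    aeval (fun i => c * v i) p = c ^ n * aeval v p := by
  classical
  rw [aeval_def, aeval_def, eval₂_eq, eval₂_eq, Finset.mul_sum]
  refine Finset.sum_congr rfl fun m hm => ?_
  have h1 : m.degree = n := hp.degree_eq_sum_deg_support hm ▸ rfl
  have h2 : ∏ i ∈ m.support, (c * v i) ^ m i = c ^ n * ∏ i ∈ m.support, v i ^ m i := by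
    simp_rw [mul_pow]
    rw [Finset.prod_mul_distrib, Finset.prod_pow_eq_pow_sum, ← h1]
    rfl
  rw [h2]; ring

theorem hcomp_mul {σ : Type*} {e : ℕ} {g : MvPolynomial σ k} (hg : g.IsHomogeneous e)
    (a : MvPolynomial σ k) (i : ℕ) :
    homogeneousComponent (i + e) (a * g) = homogeneousComponent i a * g := by
  conv_lhs => rw [← sum_homogeneousComponent a, Finset.sum_mul, map_sum]
  have : ∀ j, homogeneousComponent (i + e) (homogeneousComponent j a * g)
      = if j = i then homogeneousComponent j a * g else 0 := by
    intro j
    rw [homogeneousComponent_of_mem ((homogeneousComponent_isHomogeneous j a).mul hg)]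
    simp [eq_comm]
  simp_rw [this]
  rw [Finset.sum_ite_eq']
  split_ifs with h
  · rfl
  · rw [homogeneousComponent_eq_zero, zero_mul]
    simpa using h

theorem hcomp_mul_lt {σ : Type*} {e : ℕ} {g : MvPolynomial σ k} (hg : g.IsHomogeneous e)
    (a : MvPolynomial σ k) (i : ℕ) (h : i < e) :
    homogeneousComponent i (a * g) = 0 := by
  conv_lhs => rw [← sum_homogeneousComponent a, Finset.sum_mul, map_sum]
  refine Finset.sum_eq_zero fun j _ => ?_
  rw [homogeneousComponent_of_mem ((homogeneousComponent_isHomogeneous j a).mul hg)]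
  rw [if_neg (by omega)]

theorem dvd_hcomp_mul {σ : Type*} {e : ℕ} {g : MvPolynomial σ k} (hg : g.IsHomogeneous e)
    (a : MvPolynomial σ k) (n : ℕ) : g ∣ homogeneousComponent n (a * g) := by
  rcases lt_or_ge n e with h | h
  · rw [hcomp_mul_lt hg a n h]; exact dvd_zero _
  · obtain ⟨i, rfl⟩ := Nat.exists_eq_add_of_le' h
    rw [hcomp_mul hg]; exact dvd_mul_left _ _

/-- homogeneous coefficient -/
theorem span_pair_hom {σ : Type*} {d b e : ℕ} {f h p : MvPolynomial σ k}
    (hf : f.IsHomogeneous d) (hh : h.IsHomogeneous b) (hp : p.IsHomogeneous (e + b))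
    (hmem : p ∈ Ideal.span {f, h}) :
    ∃ c : MvPolynomial σ k, c.IsHomogeneous e ∧ f ∣ p - c * h := by
  obtain ⟨x, y, hxy⟩ := Ideal.mem_span_pair.1 hmem
  refine ⟨homogeneousComponent e y, homogeneousComponent_isHomogeneous _ _, ?_⟩
  have h1 := congrArg (homogeneousComponent (e + b)) hxy
  rw [map_add, homogeneousComponent_eq_self hp, hcomp_mul hh] at h1
  rw [← h1, add_sub_cancel_right]
  exact dvd_hcomp_mul hf _ _

theorem span_pair_comp {σ : Type*} {d b e : ℕ} {f h g a : MvPolynomial σ k}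
    (hf : f.IsHomogeneous d) (hh : h.IsHomogeneous b) (hg : g.IsHomogeneous e)
    (hmem : a * g ∈ Ideal.span {f, h}) (i : ℕ) :
    homogeneousComponent i a * g ∈ Ideal.span {f, h} := by
  obtain ⟨x, y, hxy⟩ := Ideal.mem_span_pair.1 hmem
  rw [← hcomp_mul hg, ← hxy, map_add]
  refine add_mem ?_ ?_
  · exact Ideal.mem_of_dvd _ (dvd_hcomp_mul hf _ _) (Ideal.subset_span (by simp))
  · exact Ideal.mem_of_dvd _ (dvd_hcomp_mul hh _ _) (Ideal.subset_span (by simp))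

/-- Homogenization with respect to a linear form. -/
theorem exists_homogenize {σ : Type*} {l : MvPolynomial σ k} (hl : l.IsHomogeneous 1)
    (p : MvPolynomial σ k) : ∃ N0 : ℕ, ∀ N, N0 ≤ N → ∃ q : MvPolynomial σ k, q.IsHomogeneous N ∧
      (l - 1) ∣ q - p := by
  refine ⟨p.totalDegree, fun N hN =>
    ⟨∑ i ∈ Finset.range (p.totalDegree + 1), l ^ (N - i) * homogeneousComponent i p, ?_, ?_⟩⟩
  · refine IsHomogeneous.sum _ _ _ fun i hi => ?_
    have hi' : i ≤ N := by have := Finset.mem_range.1 hi; omega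
    have := (hl.pow (N - i)).mul (homogeneousComponent_isHomogeneous i p)
    rwa [one_mul, Nat.sub_add_cancel hi'] at this
  · conv => 
      rhs; rhs
      rw [← sum_homogeneousComponent p]
    rw [← Finset.sum_sub_distrib]
    refine Finset.dvd_sum fun i _ => ?_
    have : l ^ (N - i) * homogeneousComponent i p - homogeneousComponent i p
      = (l ^ (N - i) - 1) * homogeneousComponent i p := by ring
    rw [this]
    exact Dvd.dvd.mul_right (by simpa using sub_dvd_pow_sub_pow l 1 (N - i)) _

theorem hom_dvd_zero [Infinite k] {σ : Type*} {l : MvPolynomial σ k} (hl : l.IsHomogeneous 1) (hl0 : l ≠ 0)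
    {N : ℕ} {q : MvPolynomial σ k} (hq : q.IsHomogeneous N) (h : (l - 1) ∣ q) : q = 0 := by
  have : l * q = 0 := by
    apply MvPolynomial.funext
    intro x
    rw [map_mul, map_zero]
    by_cases hx : eval x l = 0
    · rw [hx, zero_mul]
    · have h1 := eval_smul_hom hq (eval x l)⁻¹ x
      have h2 := eval_smul_hom hl (eval x l)⁻¹ x
      change eval _ _ = _ * eval _ _ at h1 h2
      obtain ⟨r, rfl⟩ := h
      rw [pow_one, inv_mul_cancel₀ hx] at h2
      rw [map_mul, map_sub, h2] at h1
      simp only [map_one, sub_self, zero_mul] at h1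
      have := (mul_eq_zero.1 h1.symm).resolve_left (pow_ne_zero _ (inv_ne_zero hx))
      rw [this, mul_zero]
  exact (mul_eq_zero.1 this).resolve_left hl0

theorem not_dvd_of_deg {σ : Type*} {d e : ℕ} {f g : MvPolynomial σ k} (hf : f.IsHomogeneous d)
    (hg : g.IsHomogeneous e) (hg0 : g ≠ 0) (h : e < d) : ¬ f ∣ g := by
  rintro ⟨r, rfl⟩
  have h1 := hcomp_mul_lt hf r e h
  rw [mul_comm, homogeneousComponent_eq_self hg] at h1
  exact hg0 h1

/-- the Koszul step -/
theorem koszul_step {f h g : MvPolynomial (Fin 3) k} (hfp : Prime f) (hfh : ¬ f ∣ h)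
    (hX : ∀ i, X i * g ∈ Ideal.span {f, h}) : g ∈ Ideal.span {f, h} := by
  have hX' : ∀ i, ∃ a b, a * f + b * h = X i * g := fun i => Ideal.mem_span_pair.1 (hX i)
  choose a b hab using hX'
  have hf0 : f ≠ 0 := hfp.ne_zero
  have hXp : ∀ i : Fin 3, Prime (X i : MvPolynomial (Fin 3) k) := fun i => X_prime
  have hXd : ∀ i j : Fin 3, i ≠ j → ¬ (X i : MvPolynomial (Fin 3) k) ∣ X j := by
    intro i j hij hd
    exact hij (X_dvd_X.1 hd)
  have key : ∀ i j, ∃ c, X j * a i - X i * a j = c * h ∧ X j * b i - X i * b j = - c * f := by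
    intro i j
    have e : (X j * a i - X i * a j) * f = - (X j * b i - X i * b j) * h := by
      linear_combination X j * hab i - X i * hab j
    have : f ∣ (X j * b i - X i * b j) * h := ⟨-(X j * a i - X i * a j), by linear_combination e⟩
    obtain ⟨c, hc⟩ := (hfp.dvd_or_dvd this).resolve_right hfh
    refine ⟨-c, ?_, by rw [hc]; ring⟩
    apply mul_right_cancel₀ hf0
    rw [e, hc]; ring
  obtain ⟨c01, h01, h01'⟩ := key 0 1
  obtain ⟨c12, h12, h12'⟩ := key 1 2
  obtain ⟨c20, h20, h20'⟩ := key 2 0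
  have hcyc : X 2 * c01 + X 0 * c12 + X 1 * c20 = 0 := by
    apply mul_right_cancel₀ hf0
    linear_combination X 2 * h01' + X 0 * h12' + X 1 * h20'
  have hmem : ∃ e0 e1, c01 = X 1 * e0 - X 0 * e1 := by
    have h1 : X 2 * c01 ∈ Ideal.span ((X : Fin 3 → MvPolynomial (Fin 3) k) '' {0, 1}) := by
      have : X 2 * c01 = X 0 * (- c12) + X 1 * (-c20) := by linear_combination hcyc
      rw [this]
      exact add_mem (Ideal.mul_mem_right _ _ (Ideal.subset_span ⟨0, by simp, rfl⟩))
        (Ideal.mul_mem_right _ _ (Ideal.subset_span ⟨1, by simp, rfl⟩))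
    have h2 : c01 ∈ Ideal.span ((X : Fin 3 → MvPolynomial (Fin 3) k) '' {0, 1}) := by
      rw [MvPolynomial.mem_ideal_span_X_image] at h1 ⊢
      intro m hm
      obtain ⟨i, hi, hi2⟩ := h1 (Finsupp.single 2 1 + m) (by
        rw [mem_support_iff, coeff_X_mul]; exact mem_support_iff.1 hm)
      refine ⟨i, hi, ?_⟩
      rcases hi with rfl | rfl <;> simpa using hi2
    rw [Set.image_pair, Ideal.mem_span_pair] at h2
    obtain ⟨x, y, hxy⟩ := h2
    exact ⟨y, -x, by rw [← hxy]; ring⟩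
  obtain ⟨e0, e1, he⟩ := hmem
  have h3 : X 1 * (c20 + X 2 * e0) = X 0 * (X 2 * e1 - c12) := by
    rw [he] at hcyc; linear_combination hcyc
  obtain ⟨e2, he2⟩ : X 0 ∣ (c20 + X 2 * e0) :=
    ((hXp 0).dvd_or_dvd (Dvd.intro _ h3.symm)).resolve_left (hXd 0 1 (by decide))
  have he2' : X 2 * e1 - c12 = X 1 * e2 := by
    apply mul_left_cancel₀ (hXp 0).ne_zero
    rw [← h3, he2]; ring
  have h4 : X 1 * (a 0 - e0 * h) = X 0 * (a 1 - e1 * h) := by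
    rw [he] at h01; linear_combination h01
  have h4b : X 1 * (b 0 + e0 * f) = X 0 * (b 1 + e1 * f) := by
    rw [he] at h01'; linear_combination h01'
  obtain ⟨x, hx⟩ : X 0 ∣ (a 0 - e0 * h) :=
    ((hXp 0).dvd_or_dvd (Dvd.intro _ h4.symm)).resolve_left (hXd 0 1 (by decide))
  obtain ⟨y, hy⟩ : X 0 ∣ (b 0 + e0 * f) :=
    ((hXp 0).dvd_or_dvd (Dvd.intro _ h4b.symm)).resolve_left (hXd 0 1 (by decide))
  rw [Ideal.mem_span_pair]
  refine ⟨x, y, mul_left_cancel₀ (hXp 0).ne_zero ?_⟩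
  linear_combination hab 0 - f * hx - h * hy

theorem koszul_pow {f h : MvPolynomial (Fin 3) k} (hfp : Prime f) (hfh : ¬ f ∣ h) :
    ∀ (N a b c : ℕ), a + b + c ≤ N → ∀ g : MvPolynomial (Fin 3) k,
      X 0 ^ a * g ∈ Ideal.span {f, h} → X 1 ^ b * g ∈ Ideal.span {f, h} →
      X 2 ^ c * g ∈ Ideal.span {f, h} → g ∈ Ideal.span {f, h} := by
  intro N
  induction N with
  | zero =>
    intro a b c habc g h0 _ _
    have : a = 0 := by omega
    subst this; simpa using h0
  | succ N ih =>
    intro a b c habc g h0 h1 h2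
    rcases a with _ | a
    · simpa using h0
    rcases b with _ | b
    · simpa using h1
    rcases c with _ | c
    · simpa using h2
    apply koszul_step hfp hfh
    intro i
    fin_cases i
    · refine ih a (b+1) (c+1) (by omega) _ ?_ ?_ ?_
      · convert h0 using 1; simp; ring
      · convert Ideal.mul_mem_left _ (X 0) h1 using 1; simp; ring
      · convert Ideal.mul_mem_left _ (X 0) h2 using 1; simp; ring
    · refine ih (a+1) b (c+1) (by omega) _ ?_ ?_ ?_
      · convert Ideal.mul_mem_left _ (X 1) h0 using 1; simp; ring
      · convert h1 using 1; simp; ring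
      · convert Ideal.mul_mem_left _ (X 1) h2 using 1; simp; ring
    · refine ih (a+1) (b+1) c (by omega) _ ?_ ?_ ?_
      · convert Ideal.mul_mem_left _ (X 2) h0 using 1; simp; ring
      · convert Ideal.mul_mem_left _ (X 2) h1 using 1; simp; ring
      · convert h2 using 1; simp; ring

end Algebra
end PCurve
namespace PCurve
open MvPolynomial

section Local
variable {k : Type*} [Field k]

/-- Local data of a smooth point `v` of the cone `f = 0`. -/
structure Loc (f : MvPolynomial (Fin 3) k) (v : Fin 3 → k)
    (l M T u w : MvPolynomial (Fin 3) k) : Prop where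
  hl : l.IsHomogeneous 1
  hlv : eval v l = 1
  hM : M.IsHomogeneous 1
  hM0 : M ≠ 0
  hMv : eval v M = 0
  hTv : eval v T = 0
  hT : T.IsHomogeneous 1
  huv : eval v u ≠ 0
  hu : u * T = f + w * M
  red : ∀ a : MvPolynomial (Fin 3) k, a - aeval (fun i => C (v i) * l) a ∈ Ideal.span {T, M}
  red1 : ∀ a : MvPolynomial (Fin 3) k, a - C (eval v a) ∈ Ideal.span {l - 1, T, M}

theorem red_of_X (q : Fin 3 → MvPolynomial (Fin 3) k)
    (I : Ideal (MvPolynomial (Fin 3) k)) (h : ∀ i, X i - q i ∈ I) (a : MvPolynomial (Fin 3) k) :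
    a - aeval q a ∈ I := by
  rw [← Ideal.Quotient.mk_eq_mk_iff_sub_mem]
  have : (Ideal.Quotient.mkₐ k I) = (Ideal.Quotient.mkₐ k I).comp (aeval q) := by
    apply MvPolynomial.algHom_ext
    intro i
    simp only [AlgHom.comp_apply, aeval_X, Ideal.Quotient.mkₐ_eq_mk]
    exact Ideal.Quotient.mk_eq_mk_iff_sub_mem _ _ |>.2 (h i)
  exact congrArg (fun φ => φ a) this

theorem aeval_C (v : Fin 3 → k) (a : MvPolynomial (Fin 3) k) :
    aeval (fun i => (C (v i) : MvPolynomial (Fin 3) k)) a = C (eval v a) := by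
  have : (aeval (fun i => (C (v i) : MvPolynomial (Fin 3) k)))
      = (Algebra.ofId k (MvPolynomial (Fin 3) k)).comp (aeval v) := by
    apply MvPolynomial.algHom_ext
    intro i
    simp [Algebra.ofId_apply, MvPolynomial.algebraMap_eq]
  exact congrArg (fun φ => φ a) this

theorem exists_loc {d : ℕ} {f : MvPolynomial (Fin 3) k} (hf : f.IsHomogeneous d) {v : Fin 3 → k}
    (hfv : eval v f = 0) (hsm : ∃ i, eval v (pderiv i f) ≠ 0) {i0 : Fin 3} (hv : v i0 ≠ 0) :
    ∃ M T u w, Loc f v (C (v i0)⁻¹ * X i0) M T u w := by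
  set l : MvPolynomial (Fin 3) k := C (v i0)⁻¹ * X i0 with hl
  have hlh : l.IsHomogeneous 1 := by
    simpa using (isHomogeneous_X k i0).C_mul (v i0)⁻¹
  have hlv : eval v l = 1 := by simp [hl, hv]
  set y : Fin 3 → MvPolynomial (Fin 3) k := fun j => X j - C (v j) * l with hy
  have hyh : ∀ j, (y j).IsHomogeneous 1 := fun j =>
    (isHomogeneous_X k j).sub (by simpa using hlh.C_mul (v j))
  have hyv : ∀ j, eval v (y j) = 0 := by intro j; simp [hy, hlv]
  have hy0 : ∀ j, j ≠ i0 → y j ≠ 0 := by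
    intro j hj h0
    have := congrArg (eval (Pi.single j (1 : k))) h0
    simp [hy, hl, hj.symm] at this
  have hyi : y i0 = 0 := by
    simp only [hy, hl]
    rw [← mul_assoc, ← C_mul, mul_inv_cancel₀ hv]; simp
  obtain ⟨j1, j2, hj1, hj2, hcov⟩ : ∃ j1 j2 : Fin 3, j1 ≠ i0 ∧ j2 ≠ i0 ∧
      ∀ i, i = i0 ∨ i = j1 ∨ i = j2 := by
    have : ∀ i0 : Fin 3, ∃ j1 j2 : Fin 3, j1 ≠ i0 ∧ j2 ≠ i0 ∧
      ∀ i, i = i0 ∨ i = j1 ∨ i = j2 := by decide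
    exact this i0
  have hX : ∀ i, y i ∈ Ideal.span {y j1, y j2} := by
    intro i
    rcases hcov i with rfl | rfl | rfl
    · rw [hyi]; exact zero_mem _
    · exact Ideal.subset_span (by simp)
    · exact Ideal.subset_span (by simp)
  have red : ∀ a : MvPolynomial (Fin 3) k,
      a - aeval (fun i => C (v i) * l) a ∈ Ideal.span {y j1, y j2} :=
    fun a => red_of_X _ _ hX a
  have red1 : ∀ a : MvPolynomial (Fin 3) k, a - C (eval v a) ∈ Ideal.span {l - 1, y j1, y j2} := by
    intro a
    rw [← aeval_C]
    apply red_of_X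
    intro i
    have : X i - C (v i) = y i + C (v i) * (l - 1) := by simp only [hy]; ring
    rw [this]
    exact add_mem (Ideal.span_mono (by simp) (hX i))
      (Ideal.mul_mem_left _ _ (Ideal.subset_span (by simp)))
  have hfm : f ∈ Ideal.span {y j1, y j2} := by
    have h1 := red f
    have h2 := eval_smul_hom hf l (fun i => (C (v i) : MvPolynomial (Fin 3) k))
    rw [aeval_C, hfv, C_0, mul_zero] at h2
    have h3 : (fun i => l * C (v i)) = (fun i => C (v i) * l) := by funext i; ring
    rw [h3] at h2
    rwa [h2, sub_zero] at h1
  obtain ⟨a1, a2, ha⟩ := Ideal.mem_span_pair.1 hfm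
  obtain ⟨i, hi⟩ := hsm
  rw [← ha, map_add, Derivation.leibniz, Derivation.leibniz] at hi
  simp only [smul_eq_mul, map_add, map_mul, hyv, zero_mul, add_zero] at hi
  by_cases h1 : eval v a1 = 0
  · have h2 : eval v a2 ≠ 0 := by
      intro h2; apply hi; rw [h1, h2]; ring
    refine ⟨y j1, y j2, a2, -a1, hlh, hlv, hyh _, hy0 _ hj1, hyv _, hyv _, hyh _, h2, ?_, ?_, ?_⟩
    · rw [← ha]; ring
    · rw [Set.pair_comm]; exact red
    · rw [Set.pair_comm]; exact red1
  · refine ⟨y j2, y j1, a1, -a2, hlh, hlv, hyh _, hy0 _ hj2, hyv _, hyv _, hyh _, h1, ?_, red, red1⟩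
    rw [← ha]; ring

/-- `g` vanishes to order `n` along the line through `v` of the cone. -/
def W (f : MvPolynomial (Fin 3) k) (v : Fin 3 → k) (M : MvPolynomial (Fin 3) k) (n : ℕ)
    (g : MvPolynomial (Fin 3) k) : Prop :=
  ∃ s t c, eval v s ≠ 0 ∧ s * g = M ^ n * t + f * c

/-- vanishing order at least `n`, as in `ordAt` -/
def OO (f : MvPolynomial (Fin 3) k) (v : Fin 3 → k) (l : MvPolynomial (Fin 3) k) (n : ℕ)
    (g : MvPolynomial (Fin 3) k) : Prop :=
  ∃ h : MvPolynomial (Fin 3) k, eval v h ≠ 0 ∧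
    h * g ∈ Ideal.span {f, l - 1} + (RingHom.ker (eval v)) ^ n

variable {f : MvPolynomial (Fin 3) k} {v : Fin 3 → k} {l M T u w : MvPolynomial (Fin 3) k}

theorem sup_pow_le' {R : Type*} [CommRing R] (Q N : Ideal R) (n : ℕ) : (Q ⊔ N) ^ n ≤ Q ⊔ N ^ n := by
  induction n with
  | zero => simp
  | succ n ih =>
    calc (Q ⊔ N) ^ (n + 1) = (Q ⊔ N) ^ n * (Q ⊔ N) := pow_succ _ _
      _ ≤ (Q ⊔ N ^ n) * (Q ⊔ N) := Ideal.mul_mono_left ih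
      _ ≤ Q ⊔ N ^ (n + 1) := by
        rw [Ideal.mul_le]
        intro r hr s hs
        obtain ⟨a, ha, b, hb, rfl⟩ := Submodule.mem_sup.1 hr
        obtain ⟨c, hc, e, he, rfl⟩ := Submodule.mem_sup.1 hs
        have : (a + b) * (c + e) = (a * (c + e) + b * c) + b * e := by ring
        rw [this, pow_succ]
        exact Submodule.add_mem_sup
          (add_mem (Ideal.mul_mem_right _ _ ha) (Ideal.mul_mem_left _ _ hc))
          (Ideal.mul_mem_mul hb he)

theorem Loc.ker_le (L : Loc f v l M T u w) :
    Ideal.span {u} * RingHom.ker (eval v) ≤ Ideal.span {f, l - 1} ⊔ Ideal.span {M} := by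
  rw [Ideal.span_singleton_mul_le_iff]
  intro r hr
  have h1 := L.red1 r
  rw [RingHom.mem_ker.1 hr, C_0, sub_zero] at h1
  obtain ⟨a, b, hb, rfl⟩ := Ideal.mem_span_insert.1 h1
  obtain ⟨c, e, rfl⟩ := Ideal.mem_span_pair.1 hb
  have : u * (a * (l - 1) + (c * T + e * M))
    = (c * f + (u * a) * (l - 1)) + (c * w + u * e) * M := by
    linear_combination c * L.hu
  rw [this]
  exact Submodule.add_mem_sup (Ideal.mem_span_pair.2 ⟨_, _, rfl⟩)
    (Ideal.mul_mem_left _ _ (Ideal.mem_span_singleton_self M))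

theorem Loc.W_of_OO [Infinite k] {d : ℕ} (hf : f.IsHomogeneous d) (L : Loc f v l M T u w) {e n : ℕ}
    {g : MvPolynomial (Fin 3) k} (hg : g.IsHomogeneous e) (h : OO f v l n g) : W f v M n g := by
  obtain ⟨s, hs, hsg⟩ := h
  have h1 : u ^ n * (s * g) ∈ Ideal.span {f, l - 1} ⊔ Ideal.span {M ^ n} := by
    obtain ⟨x, hx, y, hy, hxy⟩ := Submodule.mem_sup.1 hsg
    rw [← hxy, mul_add]
    refine add_mem (Ideal.mul_mem_left _ _ (Ideal.mem_sup_left hx)) ?_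
    have h2 : u ^ n * y ∈ (Ideal.span {u} * RingHom.ker (eval v)) ^ n := by
      rw [mul_pow]
      exact Ideal.mul_mem_mul (Ideal.pow_mem_pow (Ideal.mem_span_singleton_self u) n) hy
    have h3 := sup_pow_le' _ _ _ (Ideal.pow_right_mono L.ker_le n h2)
    rwa [Ideal.span_singleton_pow] at h3
  obtain ⟨x, hx, y, hy, hxy⟩ := Submodule.mem_sup.1 h1
  obtain ⟨a, b, rfl⟩ := Ideal.mem_span_pair.1 hx
  obtain ⟨c, rfl⟩ := Ideal.mem_span_singleton.1 hy
  obtain ⟨N1, hN1⟩ := exists_homogenize L.hl (u ^ n * s)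
  obtain ⟨N2, hN2⟩ := exists_homogenize L.hl a
  obtain ⟨N3, hN3⟩ := exists_homogenize L.hl c
  obtain ⟨s', hs', r1, hr1⟩ := hN1 (N1 + N2 + N3 + d + n) (by omega)
  obtain ⟨a', ha', r2, hr2⟩ := hN2 (N1 + N2 + N3 + n + e) (by omega)
  obtain ⟨c', hc', r3, hr3⟩ := hN3 (N1 + N2 + N3 + d + e) (by omega)
  have hz : s' * g - a' * f - M ^ n * c' = 0 := by
    have hl0 : l ≠ 0 := by
      intro h0; have := L.hlv; rw [h0, map_zero] at this; exact zero_ne_one this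
    apply hom_dvd_zero (N := N1 + N2 + N3 + d + n + e) L.hl hl0
    · refine ((hs'.mul hg).sub ?_).sub ?_
      · exact (show N1 + N2 + N3 + n + e + d = N1 + N2 + N3 + d + n + e by omega) ▸ ha'.mul hf
      · exact (show 1 * n + (N1 + N2 + N3 + d + e) = N1 + N2 + N3 + d + n + e by omega) ▸ (L.hM.pow n).mul hc'
    · refine ⟨r1 * g - r2 * f - M ^ n * r3 + b, ?_⟩
      linear_combination g * hr1 - f * hr2 - M ^ n * hr3 - hxy
  refine ⟨s', c', a', ?_, by linear_combination hz⟩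
  have h5 := congrArg (eval v) hr1
  simp only [map_sub, map_mul, map_pow, L.hlv, map_one, sub_self, zero_mul] at h5
  rw [sub_eq_zero.1 h5]
  exact mul_ne_zero (pow_ne_zero _ L.huv) hs

theorem Loc.OO_of_W (L : Loc f v l M T u w) {n : ℕ}
    {g : MvPolynomial (Fin 3) k} (h : W f v M n g) : OO f v l n g := by
  obtain ⟨s, t, c, hs, h⟩ := h
  refine ⟨s, hs, ?_⟩
  rw [h, add_comm (M ^ n * t)]
  rw [Submodule.add_eq_sup]
  refine Submodule.add_mem_sup (Ideal.mul_mem_right _ _ (Ideal.subset_span (Set.mem_insert _ _))) ?_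
  exact Ideal.mul_mem_right _ _ (Ideal.pow_mem_pow (RingHom.mem_ker.2 L.hMv) n)

/-- `a` restricted to the line spanned by `v` -/
noncomputable def res (v : Fin 3 → k) : MvPolynomial (Fin 3) k →ₐ[k] Polynomial k :=
  aeval (fun i => Polynomial.X * Polynomial.C (v i))

theorem eval_res (a : MvPolynomial (Fin 3) k) (c : k) : (res v a).eval c = eval (c • v) a := by
  have : (Polynomial.aeval c).comp (res v) = aeval (c • v) := by
    apply MvPolynomial.algHom_ext
    intro i
    rw [AlgHom.comp_apply, res, aeval_X, aeval_X, map_mul, Polynomial.aeval_X,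
      Polynomial.aeval_C]
    rfl
  have h := congrArg (fun φ => φ a) this
  simp only [AlgHom.comp_apply] at h
  rw [Polynomial.coe_aeval_eq_eval] at h
  exact h

theorem res_hom {e : ℕ} {a : MvPolynomial (Fin 3) k} (ha : a.IsHomogeneous e) :
    res v a = Polynomial.X ^ e * Polynomial.C (eval v a) := by
  rw [res, eval_smul_hom ha]
  congr 1
  have : (aeval (fun i => (Polynomial.C (v i) : Polynomial k)))
      = (Algebra.ofId k (Polynomial k)).comp (aeval v) := by
    apply MvPolynomial.algHom_ext
    intro i
    simp [Algebra.ofId_apply, Polynomial.algebraMap_eq]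
  exact congrArg (fun φ => φ a) this

theorem res_ne {s : MvPolynomial (Fin 3) k} (hs : eval v s ≠ 0) : res v s ≠ 0 := by
  intro h
  have := eval_res (v := v) s 1
  rw [h, one_smul, Polynomial.eval_zero] at this
  exact hs this.symm

theorem Loc.res_eq_zero (L : Loc f v l M T u w) {a : MvPolynomial (Fin 3) k} (h : res v a = 0) :
    a ∈ Ideal.span {T, M} := by
  have h1 := L.red a
  have : aeval (fun i => C (v i) * l) a = 0 := by
    have h2 : (Polynomial.aeval l).comp (res v) = aeval (fun i => C (v i) * l) := by
      apply MvPolynomial.algHom_ext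
      intro i
      rw [AlgHom.comp_apply, res, aeval_X, aeval_X, map_mul, Polynomial.aeval_X,
        Polynomial.aeval_C, MvPolynomial.algebraMap_eq, mul_comm]
    rw [← h2, AlgHom.comp_apply, h, map_zero]
  rwa [this, sub_zero] at h1

theorem Loc.exists_exact (L : Loc f v l M T u w) {n : ℕ}
    {g : MvPolynomial (Fin 3) k} (h : W f v M n g) (h' : ¬ W f v M (n + 1) g) :
    ∃ s t c, eval v s ≠ 0 ∧ s * g = M ^ n * t + f * c ∧ res v t ≠ 0 := by
  obtain ⟨s, t, c, hs, h⟩ := h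
  refine ⟨s, t, c, hs, h, fun ht => h' ?_⟩
  obtain ⟨x, y, hxy⟩ := Ideal.mem_span_pair.1 (L.res_eq_zero ht)
  refine ⟨u * s, x * w + u * y, u * c + M ^ n * x, ?_, ?_⟩
  · rw [map_mul]; exact mul_ne_zero L.huv hs
  · rw [← hxy] at h
    linear_combination u * h + M ^ n * x * L.hu

theorem Loc.not_W (L : Loc f v l M T u w) (hfp : Prime f) (hfM : ¬ f ∣ M) (hfr : res v f = 0) {n : ℕ}
    {g s t c : MvPolynomial (Fin 3) k} (h : s * g = M ^ n * t + f * c) (ht : res v t ≠ 0) :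
    ¬ W f v M (n + 1) g := by
  rintro ⟨s', t', c', hs', h'⟩
  have h1 : f ∣ M ^ n * (s' * t - s * M * t') :=
    ⟨s * c' - s' * c, by linear_combination s * h' - s' * h⟩
  have h2 : f ∣ s' * t - s * M * t' :=
    (hfp.dvd_or_dvd h1).resolve_left fun h => hfM (hfp.dvd_of_dvd_pow h)
  obtain ⟨r, hr⟩ := h2
  have hM : res v M = 0 := by rw [res_hom L.hM, L.hMv]; simp
  have h3 := congrArg (res v) hr
  simp only [map_sub, map_mul, hM, hfr, zero_mul, mul_zero, sub_zero] at h3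
  exact mul_ne_zero (res_ne hs') ht h3

theorem Loc.W_mul (L : Loc f v l M T u w) (hfp : Prime f) (hfM : ¬ f ∣ M) (hfr : res v f = 0)
    {n m : ℕ} {g h : MvPolynomial (Fin 3) k} (h1 : W f v M n g) (h1' : ¬ W f v M (n + 1) g)
    (h2 : W f v M m h) (h2' : ¬ W f v M (m + 1) h) :
    W f v M (n + m) (g * h) ∧ ¬ W f v M (n + m + 1) (g * h) := by
  obtain ⟨s, t, c, hs, e, ht⟩ := L.exists_exact h1 h1'
  obtain ⟨s', t', c', hs', e', ht'⟩ := L.exists_exact h2 h2'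
  have key : (s * s') * (g * h) = M ^ (n + m) * (t * t')
      + f * (c * (s' * h) + M ^ n * t * c') := by
    rw [pow_add]
    linear_combination (s' * h) * e + M ^ n * t * e'
  refine ⟨⟨_, _, _, ?_, key⟩, L.not_W hfp hfM hfr key ?_⟩
  · rw [map_mul]; exact mul_ne_zero hs hs'
  · rw [map_mul]; exact mul_ne_zero ht ht'

/-- Local form of the Noether condition. -/
theorem Loc.noether (L : Loc f v l M T u w) {d e b : ℕ} (hf : f.IsHomogeneous d) {n : ℕ}
    {g h : MvPolynomial (Fin 3) k} (hg : g.IsHomogeneous e) (hh : h.IsHomogeneous b)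
    (h1 : W f v M n g) (h2 : W f v M n h) (h2' : ¬ W f v M (n + 1) h) :
    ∃ s N, s.IsHomogeneous N ∧ eval v s ≠ 0 ∧ s * g ∈ Ideal.span {f, h} := by
  obtain ⟨s, t, c, hs, e⟩ := h1
  obtain ⟨s', t', c', hs', e', ht'⟩ := L.exists_exact h2 h2'
  have key : (t' * s) * g ∈ Ideal.span {f, h} := by
    rw [Ideal.mem_span_pair]
    refine ⟨t' * c - t * c', t * s', ?_⟩
    linear_combination t * e' - t' * e
  have hne : res v (t' * s) ≠ 0 := by
    rw [map_mul]; exact mul_ne_zero ht' (res_ne hs)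
  obtain ⟨i, hi⟩ : ∃ i, eval v (homogeneousComponent i (t' * s)) ≠ 0 := by
    by_contra hcon
    push Not at hcon
    apply hne
    rw [← sum_homogeneousComponent (t' * s), map_sum]
    refine Finset.sum_eq_zero fun i _ => ?_
    rw [res_hom (homogeneousComponent_isHomogeneous i _), hcon i]; simp
  exact ⟨_, i, homogeneousComponent_isHomogeneous i _, hi, span_pair_comp hf hh hg key i⟩

theorem Loc.codim (L : Loc f v l M T u w) {n : ℕ}
    {g g' : MvPolynomial (Fin 3) k} (h1 : W f v M n g)
    (h2 : W f v M n g') (h2' : ¬ OO f v l (n + 1) g') :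
    ∃ a : k, OO f v l (n + 1) (g - C a * g') := by
  obtain ⟨s, t, c, hs, e⟩ := h1
  obtain ⟨s', t', c', hs', e'⟩ := h2
  have mem : ∀ x y z q : MvPolynomial (Fin 3) k, x * q = M ^ n * y + f * z → eval v y = 0 → 
      x * q ∈ Ideal.span {f, l - 1} + (RingHom.ker (eval v)) ^ (n + 1) := by
    intro x y z q h hy
    rw [h, add_comm (M ^ n * y)]
    rw [Submodule.add_eq_sup]
    refine Submodule.add_mem_sup (Ideal.mul_mem_right _ _ (Ideal.subset_span (Set.mem_insert _ _))) ?_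
    rw [pow_succ]
    exact Ideal.mul_mem_mul (Ideal.pow_mem_pow (RingHom.mem_ker.2 L.hMv) n) (RingHom.mem_ker.2 hy)
  have ht' : eval v t' ≠ 0 := fun h0 => h2' ⟨s', hs', mem _ _ _ _ e' h0⟩
  refine ⟨(eval v t / eval v s) / (eval v t' / eval v s'), s * s', ?_,
    mem _ (s' * t - C ((eval v t / eval v s) / (eval v t' / eval v s')) * s * t')
      (s' * c - C ((eval v t / eval v s) / (eval v t' / eval v s')) * s * c') _ ?_ ?_⟩
  · rw [map_mul]; exact mul_ne_zero hs hs'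
  · linear_combination s' * e - C ((eval v t / eval v s) / (eval v t' / eval v s')) * s * e'
  · simp only [map_sub, map_mul, eval_C]
    field_simp
    ring

end Local
end PCurve
namespace PCurve
open MvPolynomial

section Global
variable {k : Type*} [Field k]

/-- A smooth irreducible plane curve. -/
structure Curve (d : ℕ) (f : MvPolynomial (Fin 3) k) : Prop where
  hd : 4 ≤ d
  hf : f.IsHomogeneous d
  hp : Prime f
  hsm : ∀ v : Fin 3 → k, eval v f = 0 → (∀ i : Fin 3, eval v (pderiv i f) = 0) → v = 0

/-- vanishing to order at least `n` at `P` -/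
def O {f : MvPolynomial (Fin 3) k} (P : PlanePoint f) (n : ℕ) (g : MvPolynomial (Fin 3) k) : Prop :=
  ∃ h : MvPolynomial (Fin 3) k, eval P.1.rep h ≠ 0 ∧
    h * g ∈ Ideal.span {f, slicePoly P.1.rep} + (RingHom.ker (eval P.1.rep)) ^ n

variable {d : ℕ} {f : MvPolynomial (Fin 3) k}

theorem Curve.loc (hC : Curve d f) (P : PlanePoint f) :
    ∃ l M T u w, Loc f P.1.rep l M T u w ∧ slicePoly P.1.rep = l - 1 := by
  have hv : ∃ i, P.1.rep i ≠ 0 := by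
    by_contra h
    push Not at h
    exact P.1.rep_nonzero (funext h)
  have hs : ∃ i, eval P.1.rep (pderiv i f) ≠ 0 := by
    by_contra h
    push Not at h
    exact P.1.rep_nonzero (hC.hsm _ P.2 h)
  obtain ⟨M, T, u, w, L⟩ := exists_loc hC.hf P.2 hs hv.choose_spec
  refine ⟨_, M, T, u, w, L, ?_⟩
  rw [slicePoly, dif_pos hv]

theorem Curve.not_dvd (hC : Curve d f) {g : MvPolynomial (Fin 3) k} {e : ℕ} (hg : g.IsHomogeneous e)
    (hg0 : g ≠ 0) (he : e < d) : ¬ f ∣ g := not_dvd_of_deg hC.hf hg hg0 he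

theorem O_iff_OO {P : PlanePoint f} {l : MvPolynomial (Fin 3) k} (hl : slicePoly P.1.rep = l - 1)
    {n : ℕ} {g : MvPolynomial (Fin 3) k} : O P n g ↔ OO f P.1.rep l n g := by
  rw [O, OO, hl]

theorem O_zero (P : PlanePoint f) (g : MvPolynomial (Fin 3) k) : O P 0 g :=
  ⟨1, by simp, by simp⟩

theorem O_mono {P : PlanePoint f} {n m : ℕ} (h : n ≤ m) {g : MvPolynomial (Fin 3) k} (hg : O P m g) :
    O P n g := by
  obtain ⟨s, hs, h'⟩ := hg
  refine ⟨s, hs, ?_⟩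
  rw [Submodule.add_eq_sup] at h' ⊢
  obtain ⟨x, hx, y, hy, hxy⟩ := Submodule.mem_sup.1 h'
  rw [← hxy]
  exact Submodule.add_mem_sup hx (Ideal.pow_le_pow_right h hy)

theorem O_add {P : PlanePoint f} {n : ℕ} {g h : MvPolynomial (Fin 3) k} (hg : O P n g)
    (hh : O P n h) : O P n (g + h) := by
  obtain ⟨s, hs, h1⟩ := hg
  obtain ⟨t, ht, h2⟩ := hh
  refine ⟨s * t, by rw [map_mul]; exact mul_ne_zero hs ht, ?_⟩
  have : s * t * (g + h) = t * (s * g) + s * (t * h) := by ring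
  rw [this]
  exact add_mem (Ideal.mul_mem_left _ _ h1) (Ideal.mul_mem_left _ _ h2)

theorem O_mul_left {P : PlanePoint f} {n : ℕ} {g : MvPolynomial (Fin 3) k} (hg : O P n g)
    (a : MvPolynomial (Fin 3) k) : O P n (a * g) := by
  obtain ⟨s, hs, h1⟩ := hg
  refine ⟨s, hs, ?_⟩
  rw [mul_left_comm]
  exact Ideal.mul_mem_left _ _ h1

theorem O_of_dvd (P : PlanePoint f) (n : ℕ) {g : MvPolynomial (Fin 3) k} (hg : f ∣ g) : O P n g := by
  obtain ⟨r, rfl⟩ := hg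
  refine ⟨1, by simp, ?_⟩
  rw [Submodule.add_eq_sup, one_mul]
  exact Ideal.mem_sup_left (Ideal.mul_mem_right _ _ (Ideal.subset_span (Set.mem_insert _ _)))

theorem O_congr {P : PlanePoint f} {n : ℕ} {g h : MvPolynomial (Fin 3) k} (hgh : f ∣ g - h)
    (hg : O P n g) : O P n h := by
  have : h = g + -1 * (g - h) := by ring
  rw [this]
  exact O_add hg (O_mul_left (O_of_dvd P n hgh) _)

variable [IsAlgClosed k]

theorem Curve.O_iff_W (hC : Curve d f) {P : PlanePoint f} {l M T u w : MvPolynomial (Fin 3) k}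
    (L : Loc f P.1.rep l M T u w) (hl : slicePoly P.1.rep = l - 1) {e n : ℕ}
    {g : MvPolynomial (Fin 3) k} (hg : g.IsHomogeneous e) : O P n g ↔ W f P.1.rep M n g := by
  haveI : Infinite k := IsAlgClosed.instInfinite
  rw [O_iff_OO hl]
  exact ⟨L.W_of_OO hC.hf hg, L.OO_of_W⟩

theorem Curve.res_f (hC : Curve d f) (P : PlanePoint f) : res P.1.rep f = 0 := by
  rw [res_hom hC.hf, P.2]; simp

theorem Curve.O_one (hC : Curve d f) {P : PlanePoint f} {e : ℕ}
    {g : MvPolynomial (Fin 3) k} (hg : g.IsHomogeneous e) : O P 1 g ↔ eval P.1.rep g = 0 := by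
  obtain ⟨l, M, T, u, w, L, hl⟩ := hC.loc P
  constructor
  · rw [hC.O_iff_W L hl hg]
    rintro ⟨s, t, c, hs, h⟩
    have h1 := congrArg (eval P.1.rep) h
    have h2 : eval P.1.rep f = 0 := P.2
    rw [map_mul, map_add, map_mul, map_mul, map_pow, L.hMv, h2] at h1
    simp only [pow_one, zero_mul, add_zero] at h1
    exact (mul_eq_zero.1 h1).resolve_left hs
  · intro h
    refine ⟨1, by simp, ?_⟩
    rw [Submodule.add_eq_sup, one_mul, pow_one]
    exact Ideal.mem_sup_right (RingHom.mem_ker.2 h)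

theorem Curve.O_mul (hC : Curve d f) {P : PlanePoint f} {e e' n m : ℕ}
    {g h : MvPolynomial (Fin 3) k} (hg : g.IsHomogeneous e) (hh : h.IsHomogeneous e')
    (h1 : O P n g) (h2 : O P m h) : O P (n + m) (g * h) := by
  obtain ⟨l, M, T, u, w, L, hl⟩ := hC.loc P
  rw [hC.O_iff_W L hl (hg.mul hh)]
  rw [hC.O_iff_W L hl hg] at h1
  rw [hC.O_iff_W L hl hh] at h2
  obtain ⟨s, t, c, hs, e1⟩ := h1
  obtain ⟨s', t', c', hs', e2⟩ := h2
  refine ⟨s * s', t * t', c * (s' * h) + M ^ n * t * c', ?_, ?_⟩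
  · rw [map_mul]; exact mul_ne_zero hs hs'
  · rw [pow_add]
    linear_combination (s' * h) * e1 + M ^ n * t * e2

theorem Curve.not_O_mul (hC : Curve d f) {P : PlanePoint f} {e e' n m : ℕ}
    {g h : MvPolynomial (Fin 3) k} (hg : g.IsHomogeneous e) (hh : h.IsHomogeneous e')
    (h1 : O P n g) (h1' : ¬ O P (n + 1) g) (h2 : O P m h) (h2' : ¬ O P (m + 1) h) :
    ¬ O P (n + m + 1) (g * h) := by
  obtain ⟨l, M, T, u, w, L, hl⟩ := hC.loc P
  rw [hC.O_iff_W L hl (hg.mul hh)]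
  rw [hC.O_iff_W L hl hg] at h1 h1'
  rw [hC.O_iff_W L hl hh] at h2 h2'
  exact (L.W_mul hC.hp (hC.not_dvd L.hM L.hM0 (by have := hC.hd; omega)) (hC.res_f P)
    h1 h1' h2 h2').2

theorem Curve.O_codim (hC : Curve d f) {P : PlanePoint f} {e n : ℕ}
    {g h : MvPolynomial (Fin 3) k} (hg : g.IsHomogeneous e) (hh : h.IsHomogeneous e)
    (h1 : O P n g) (h2 : O P n h) (h2' : ¬ O P (n + 1) h) : ∃ a : k, O P (n + 1) (g - C a * h) := by
  obtain ⟨l, M, T, u, w, L, hl⟩ := hC.loc P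
  rw [hC.O_iff_W L hl hg] at h1
  rw [hC.O_iff_W L hl hh] at h2
  rw [O_iff_OO hl] at h2'
  obtain ⟨a, ha⟩ := L.codim h1 h2 h2'
  exact ⟨a, (O_iff_OO hl).2 ha⟩

theorem Curve.O_noether (hC : Curve d f) {P : PlanePoint f} {e b n : ℕ}
    {g h : MvPolynomial (Fin 3) k} (hg : g.IsHomogeneous e) (hh : h.IsHomogeneous b)
    (h1 : O P n g) (h2 : O P n h) (h2' : ¬ O P (n + 1) h) :
    ∃ s N, s.IsHomogeneous N ∧ eval P.1.rep s ≠ 0 ∧ s * g ∈ Ideal.span {f, h} := by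
  obtain ⟨l, M, T, u, w, L, hl⟩ := hC.loc P
  rw [hC.O_iff_W L hl hg] at h1
  rw [hC.O_iff_W L hl hh] at h2 h2'
  exact L.noether hC.hf hg hh h1 h2 h2'

theorem Curve.transversal (hC : Curve d f) (P : PlanePoint f) :
    ∃ M : MvPolynomial (Fin 3) k, M.IsHomogeneous 1 ∧ M ≠ 0 ∧ O P 1 M ∧ ¬ O P 2 M := by
  obtain ⟨l, M, T, u, w, L, hl⟩ := hC.loc P
  refine ⟨M, L.hM, L.hM0, (hC.O_one L.hM).2 L.hMv, ?_⟩
  rw [hC.O_iff_W L hl L.hM]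
  apply L.not_W hC.hp (hC.not_dvd L.hM L.hM0 (by have := hC.hd; omega)) (hC.res_f P) (s := 1) (t := 1)
    (c := 0) (n := 1)
  · ring
  · simp

theorem Curve.avoid (hC : Curve d f) (P : PlanePoint f) :
    ∃ M : MvPolynomial (Fin 3) k, M.IsHomogeneous 1 ∧ ¬ O P 1 M := by
  have hv : ∃ i, P.1.rep i ≠ 0 := by
    by_contra h
    push Not at h
    exact P.1.rep_nonzero (funext h)
  obtain ⟨i, hi⟩ := hv
  refine ⟨X i, isHomogeneous_X k i, ?_⟩
  rw [hC.O_one (isHomogeneous_X k i)]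
  simpa using hi

theorem Curve.separate (hC : Curve d f) {P Q : PlanePoint f} (hPQ : P ≠ Q) :
    ∃ M : MvPolynomial (Fin 3) k, M.IsHomogeneous 1 ∧ O Q 1 M ∧ ¬ O P 1 M := by
  obtain ⟨i, j, hij⟩ : ∃ i j, P.1.rep i * Q.1.rep j ≠ P.1.rep j * Q.1.rep i := by
    by_contra hcon
    push Not at hcon
    have hv : ∃ i, Q.1.rep i ≠ 0 := by
      by_contra h
      push Not at h
      exact Q.1.rep_nonzero (funext h)
    obtain ⟨j, hj⟩ := hv
    apply hPQ
    apply Subtype.ext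
    rw [← P.1.mk_rep, ← Q.1.mk_rep, Projectivization.mk_eq_mk_iff']
    refine ⟨P.1.rep j / Q.1.rep j, ?_⟩
    funext i
    have := hcon i j
    simp only [Pi.smul_apply, smul_eq_mul]
    field_simp
    linear_combination -this
  have hM : (C (Q.1.rep j) * X i - C (Q.1.rep i) * X j : MvPolynomial (Fin 3) k).IsHomogeneous 1 := by
    refine IsHomogeneous.sub ?_ ?_
    · simpa using (isHomogeneous_X k i).C_mul (Q.1.rep j)
    · simpa using (isHomogeneous_X k j).C_mul (Q.1.rep i)
  refine ⟨_, hM, ?_, ?_⟩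
  · rw [hC.O_one hM]; simp; ring
  · rw [hC.O_one hM]
    simp only [map_sub, map_mul, eval_C, eval_X]
    intro h
    apply hij
    linear_combination h

theorem Curve.step_line (hC : Curve d f) (P Q : PlanePoint f) :
    ∃ M : MvPolynomial (Fin 3) k, M.IsHomogeneous 1 ∧
      (∀ R, O R (Finsupp.single Q 1 R) M) ∧ ¬ O P (Finsupp.single Q 1 P + 1) M := by
  classical
  have key : ∀ M : MvPolynomial (Fin 3) k, O Q 1 M → ∀ R, O R (Finsupp.single Q 1 R) M := by
    intro M hM R
    rw [Finsupp.single_apply]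
    split_ifs with h
    · subst h; exact hM
    · exact O_zero _ _
  by_cases hPQ : P = Q
  · subst hPQ
    obtain ⟨M, h1, _, h2, h3⟩ := hC.transversal P
    exact ⟨M, h1, key M h2, by simpa using h3⟩
  · obtain ⟨M, h1, h2, h3⟩ := hC.separate hPQ
    refine ⟨M, h1, key M h2, ?_⟩
    rw [Finsupp.single_eq_of_ne hPQ]; simpa using h3

theorem finsupp_step {α : Type*} {A : α →₀ ℕ} {Q : α} (h : A Q ≠ 0) :
    ∃ A', A = A' + Finsupp.single Q 1 ∧ A.degree = A'.degree + 1 := by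
  have h1 : A = (A - Finsupp.single Q 1) + Finsupp.single Q 1 := by
    rw [tsub_add_cancel_of_le]
    rw [Finsupp.single_le_iff]; omega
  refine ⟨_, h1, ?_⟩
  conv_lhs => rw [h1]
  rw [map_add, Finsupp.degree_single]

theorem finsupp_ne {α : Type*} {A : α →₀ ℕ} {n : ℕ} (h : A.degree = n + 1) : ∃ Q, A Q ≠ 0 := by
  by_contra hcon
  push Not at hcon
  have : A = 0 := Finsupp.ext hcon
  rw [this] at h; simp at h

/-- Forms of degree `m ≥ deg A` through `A`, exact at `P`. -/
theorem Curve.exists_form (hC : Curve d f) (P : PlanePoint f) (m : ℕ) :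
    ∀ (n : ℕ) (A : PlanePoint f →₀ ℕ), A.degree = n → n ≤ m →
    ∃ q : MvPolynomial (Fin 3) k, q.IsHomogeneous m ∧ (∀ R, O R (A R) q) ∧ ¬ O P (A P + 1) q := by
  induction m with
  | zero =>
    intro n A hA hn
    have : A = 0 := by
      rw [← Finsupp.degree_eq_zero_iff]; omega
    subst this
    refine ⟨1, isHomogeneous_one _ _, fun R => by simpa using O_zero R _, ?_⟩
    rw [Finsupp.zero_apply, zero_add, hC.O_one (isHomogeneous_one _ _)]
    simp
  | succ m ih =>
    intro n A hA hn
    rcases Nat.lt_or_ge m n with h | h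
    · have hn' : n = m + 1 := by omega
      subst hn'
      obtain ⟨Q, hQ⟩ := finsupp_ne hA
      obtain ⟨A', rfl, hdeg⟩ := finsupp_step hQ
      obtain ⟨q, h1, h2, h3⟩ := ih m A' (by omega) le_rfl
      obtain ⟨M, g1, g2, g3⟩ := hC.step_line P Q
      refine ⟨q * M, h1.mul g1, fun R => ?_, ?_⟩
      · rw [Finsupp.add_apply]; exact hC.O_mul h1 g1 (h2 R) (g2 R)
      · rw [Finsupp.add_apply]; exact hC.not_O_mul h1 g1 (h2 P) h3 (g2 P) g3
    · obtain ⟨q, h1, h2, h3⟩ := ih n A hA h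
      obtain ⟨M, g1, g2⟩ := hC.avoid P
      refine ⟨q * M, h1.mul g1, fun R => ?_, ?_⟩
      · have := hC.O_mul h1 g1 (h2 R) (O_zero R M)
        rwa [add_zero] at this
      · have := hC.not_O_mul h1 g1 (h2 P) h3 (O_zero P M) (by rwa [zero_add])
        rwa [add_zero] at this

end Global
end PCurve
namespace PCurve
open MvPolynomial

section Dimension
variable {k : Type*} [Field k]

/-- forms of degree `m` -/
abbrev HS (k : Type*) [Field k] (m : ℕ) : Submodule k (MvPolynomial (Fin 3) k) :=
  homogeneousSubmodule (Fin 3) k m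

instance HS_fin (m : ℕ) : Module.Finite k (HS k m) :=
  Module.Finite.iff_fg.2 (homogeneousSubmodule_fg _ _ m)

theorem finrank_HS (m : ℕ) : 2 * Module.finrank k (HS k m) = (m + 1) * (m + 2) := by
  have e : HS k m ≃ₗ[k] ({x : Fin 3 →₀ ℕ | x.degree = m} →₀ k) :=
    (LinearEquiv.ofEq _ _ (homogeneousSubmodule_eq_finsupp_supported _ _ m)).trans
      (AddMonoidAlgebra.supportedEquivFinsupp _)
  have hs : {x : Fin 3 →₀ ℕ | x.degree = m} = ((Finset.univ : Finset (Fin 3)).finsuppAntidiag m : Set _) := by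
    ext x
    simp [Finset.mem_finsuppAntidiag, Finsupp.degree_eq_sum]
  rw [e.finrank_eq, hs]
  have : Module.finrank k ((((Finset.univ : Finset (Fin 3)).finsuppAntidiag m : Set (Fin 3 →₀ ℕ)) : Type) →₀ k)
      = ((Finset.univ : Finset (Fin 3)).finsuppAntidiag m).card := by
    rw [Module.finrank_finsupp_self]
    exact Fintype.card_coe _
  rw [this, Finset.card_finsuppAntidiag_nat_eq_choose]
  simp only [Finset.card_univ, Fintype.card_fin]
  have h2 : 3 + m - 1 = m + 2 := by omega
  rw [h2, Nat.choose_symm_add, Nat.choose_two_right, Nat.mul_div_cancel' (Nat.even_mul_pred_self _).two_dvd]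
  have h4 : m + 2 - 1 = m + 1 := by omega
  rw [h4]; ring

theorem dvd_hom {d M : ℕ} {f a : MvPolynomial (Fin 3) k} (hf : f.IsHomogeneous d)
    (ha : a.IsHomogeneous (M + d)) (h : f ∣ a) : ∃ c, c.IsHomogeneous M ∧ a = c * f := by
  obtain ⟨r, rfl⟩ := h
  refine ⟨homogeneousComponent M r, homogeneousComponent_isHomogeneous _ _, ?_⟩
  rw [← hcomp_mul hf, mul_comm r f, (homogeneousComponent_of_mem ha : _ = _), if_pos rfl]

variable {d : ℕ} {f : MvPolynomial (Fin 3) k}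

theorem O_smul {P : PlanePoint f} {n : ℕ} {g : MvPolynomial (Fin 3) k} (c : k) (hg : O P n g) :
    O P n (c • g) := by
  rw [smul_eq_C_mul]; exact O_mul_left hg _

/-- forms of degree `m` vanishing on `A` -/
def VV (m : ℕ) (A : PlanePoint f →₀ ℕ) : Submodule k (MvPolynomial (Fin 3) k) where
  carrier := {g | g.IsHomogeneous m ∧ ∀ P, O P (A P) g}
  zero_mem' := ⟨isHomogeneous_zero _ _ _, fun P => O_of_dvd P _ (dvd_zero _)⟩
  add_mem' := fun ha hb => ⟨ha.1.add hb.1, fun P => O_add (ha.2 P) (hb.2 P)⟩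
  smul_mem' := fun c _ hx => ⟨(HS k m).smul_mem c hx.1, fun P => O_smul c (hx.2 P)⟩

theorem mem_VV {m : ℕ} {A : PlanePoint f →₀ ℕ} {g : MvPolynomial (Fin 3) k} :
    g ∈ VV m A ↔ g.IsHomogeneous m ∧ ∀ P, O P (A P) g := Iff.rfl

theorem VV_le_HS {m : ℕ} {A : PlanePoint f →₀ ℕ} : VV m A ≤ HS k m := fun _ h => h.1

instance VV_fin (m : ℕ) (A : PlanePoint f →₀ ℕ) : Module.Finite k (VV m A) :=
  Submodule.finiteDimensional_of_le (VV_le_HS (m := m) (A := A))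

theorem VV_mono {m : ℕ} {A B : PlanePoint f →₀ ℕ} (h : A ≤ B) : VV m B ≤ VV m A :=
  fun _ hx => ⟨hx.1, fun P => O_mono (h P) (hx.2 P)⟩

theorem VV_zero (m : ℕ) : VV (f := f) m ((0 : PlanePoint f →₀ ℕ)) = HS k m := by
  ext g
  exact ⟨fun h => h.1, fun h => ⟨h, fun P => O_zero P g⟩⟩

variable [IsAlgClosed k]

theorem Curve.VV_upper (hC : Curve d f) (m : ℕ) : ∀ (n : ℕ) (A : PlanePoint f →₀ ℕ), A.degree = n → n ≤ m →
    Module.finrank k (VV m A) + n ≤ Module.finrank k (HS k m) := by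
  intro n
  induction n with
  | zero =>
    intro A hA _
    rw [Finsupp.degree_eq_zero_iff] at hA
    rw [hA, VV_zero]
    rfl
  | succ n ih =>
    intro A hA hn
    obtain ⟨Q, hQ⟩ := finsupp_ne hA
    obtain ⟨A', rfl, hdeg⟩ := finsupp_step hQ
    have h1 := ih A' (by omega) (by omega)
    obtain ⟨q, hq1, hq2, hq3⟩ := hC.exists_form Q m n A' (by omega) (by omega)
    have hlt : VV m (A' + Finsupp.single Q 1) < VV m A' := by
      refine lt_of_le_of_ne (VV_mono (fun P => by simp)) ?_
      intro heq
      have : q ∈ VV m (A' + Finsupp.single Q 1) := by rw [heq]; exact ⟨hq1, hq2⟩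
      have := this.2 Q
      rw [Finsupp.add_apply, Finsupp.single_eq_same] at this
      exact hq3 this
    have := Submodule.finrank_lt_finrank_of_lt hlt
    omega

theorem Curve.VV_codim (hC : Curve d f) (m : ℕ) (A : PlanePoint f →₀ ℕ) (Q : PlanePoint f) :
    Module.finrank k (VV m A) ≤ Module.finrank k (VV m (A + Finsupp.single Q 1)) + 1 := by
  classical
  by_cases h : VV m A ≤ VV m (A + Finsupp.single Q 1)
  · have := Submodule.finrank_mono h
    omega
  · obtain ⟨q, hq, hq'⟩ := SetLike.not_le_iff_exists.1 h
    have key : ∀ g : MvPolynomial (Fin 3) k, g ∈ VV m A → O Q (A Q + 1) g →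
        g ∈ VV m (A + Finsupp.single Q 1) := by
      intro g hg hg'
      refine ⟨hg.1, fun R => ?_⟩
      rw [Finsupp.add_apply, Finsupp.single_apply]
      split_ifs with hRQ
      · rw [← hRQ]; exact hg'
      · exact hg.2 R
    have hle : VV m A ≤ VV m (A + Finsupp.single Q 1) ⊔ Submodule.span k {q} := by
      intro g hg
      obtain ⟨a, ha⟩ := hC.O_codim hg.1 hq.1 (hg.2 Q) (hq.2 Q) (fun h => hq' (key q hq h))
      rw [← smul_eq_C_mul] at ha
      have h2 := key (g - a • q) (Submodule.sub_mem _ hg (Submodule.smul_mem _ _ hq)) ha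
      have : g = (g - a • q) + a • q := by abel
      rw [this]
      exact Submodule.add_mem_sup h2 (Submodule.smul_mem _ _ (Submodule.mem_span_singleton_self q))
    have h1 := Submodule.finrank_mono hle
    have h2 := Submodule.finrank_add_le_finrank_add_finrank (VV m (A + Finsupp.single Q 1)) (Submodule.span k {q})
    have h3 : Module.finrank k (Submodule.span k {q}) ≤ 1 := (finrank_span_le_card {q}).trans (by simp)
    omega

theorem Curve.VV_lower (hC : Curve d f) (m : ℕ) : ∀ (n : ℕ) (A : PlanePoint f →₀ ℕ), A.degree = n →
    Module.finrank k (HS k m) ≤ Module.finrank k (VV m A) + n := by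
  intro n
  induction n with
  | zero =>
    intro A hA
    rw [Finsupp.degree_eq_zero_iff] at hA
    rw [hA, VV_zero]
    rfl
  | succ n ih =>
    intro A hA
    obtain ⟨Q, hQ⟩ := finsupp_ne hA
    obtain ⟨A', rfl, hdeg⟩ := finsupp_step hQ
    have h1 := ih A' (by omega)
    have h2 := hC.VV_codim m A' Q
    omega

end Dimension
end PCurve
namespace PCurve
open MvPolynomial

section Bezout
variable {k : Type*} [Field k]
variable {d : ℕ} {f : MvPolynomial (Fin 3) k}

/-- `(a,b) ↦ g a + f b` on forms -/
noncomputable def phi (f g : MvPolynomial (Fin 3) k) (a b : ℕ) : (HS k a × HS k b) →ₗ[k] MvPolynomial (Fin 3) k :=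
  LinearMap.coprod ((LinearMap.mulLeft k g).comp (HS k a).subtype)
    ((LinearMap.mulLeft k f).comp (HS k b).subtype)

theorem phi_apply (f g : MvPolynomial (Fin 3) k) (a b : ℕ) (x : HS k a × HS k b) :
    phi f g a b x = g * x.1.1 + f * x.2.1 := by
  simp [phi]

/-- `c ↦ (f c, - g c)` -/
noncomputable def psi {f g : MvPolynomial (Fin 3) k} {d e : ℕ} (hf : f.IsHomogeneous d) (hg : g.IsHomogeneous e) (M : ℕ) :
    HS k M →ₗ[k] (HS k (M + d) × HS k (M + e)) where
  toFun c := (⟨c.1 * f, IsHomogeneous.mul c.2 hf⟩, ⟨-(c.1 * g), (HS k (M + e)).neg_mem (IsHomogeneous.mul c.2 hg)⟩)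
  map_add' x y := by
    ext1 <;> apply Subtype.ext
    · simp [add_mul]
    · simp [add_mul]; ring
  map_smul' c x := by
    ext1 <;> apply Subtype.ext
    · simp
    · simp

theorem Curve.finrank_phi (hC : Curve d f) {e : ℕ} {g : MvPolynomial (Fin 3) k} (hg : g.IsHomogeneous e)
    (hfg : ¬ f ∣ g) (M : ℕ) :
    Module.finrank k (LinearMap.range (phi f g (M + d) (M + e))) + Module.finrank k (HS k M)
      = Module.finrank k (HS k (M + d)) + Module.finrank k (HS k (M + e)) := by
  have h1 := LinearMap.finrank_range_add_finrank_ker (phi f g (M + d) (M + e))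
  rw [Module.finrank_prod] at h1
  rw [← h1]
  have hinj : Function.Injective (psi hC.hf hg M) := by
    intro x y hxy
    have := congrArg (fun z => z.1.1) hxy
    simp only [psi, LinearMap.coe_mk, AddHom.coe_mk] at this
    exact Subtype.ext (mul_right_cancel₀ hC.hp.ne_zero this)
  have hker : LinearMap.ker (phi f g (M + d) (M + e)) = LinearMap.range (psi hC.hf hg M) := by
    ext x
    rw [LinearMap.mem_ker, phi_apply, LinearMap.mem_range]
    constructor
    · intro h
      have hdvd : f ∣ g * x.1.1 := ⟨- x.2.1, by linear_combination h⟩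
      have h2 := (hC.hp.dvd_mul.1 hdvd).resolve_left hfg
      obtain ⟨c, hc, hcx⟩ := dvd_hom hC.hf x.1.2 h2
      refine ⟨⟨c, hc⟩, ?_⟩
      ext1 <;> apply Subtype.ext
      · exact hcx.symm
      · change -(c * g) = x.2.1
        apply mul_left_cancel₀ hC.hp.ne_zero
        rw [hcx] at h
        linear_combination -h
    · rintro ⟨c, rfl⟩
      simp only [psi, LinearMap.coe_mk, AddHom.coe_mk]
      ring
  rw [hker, LinearMap.finrank_range_of_inj hinj]

theorem choose_arith {M d e n1 n2 n3 n4 : ℕ} (h1 : 2 * n1 = (M + d + 1) * (M + d + 2))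
    (h2 : 2 * n2 = (M + e + 1) * (M + e + 2)) (h3 : 2 * n3 = (M + 1) * (M + 2))
    (h4 : 2 * n4 = (M + d + e + 1) * (M + d + e + 2)) : n4 + n3 = n1 + n2 + d * e := by
  nlinarith

variable [IsAlgClosed k]

theorem Curve.bezout_le (hC : Curve d f) {e : ℕ} {g : MvPolynomial (Fin 3) k} (hg : g.IsHomogeneous e)
    (hfg : ¬ f ∣ g) (A : PlanePoint f →₀ ℕ) (hA : ∀ P, O P (A P) g) : A.degree ≤ d * e := by
  have h1 := hC.finrank_phi hg hfg A.degree
  set M := A.degree with hM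
  have h2 := hC.VV_upper (M + d + e) M A rfl (by omega)
  have h3 : LinearMap.range (phi f g (M + d) (M + e)) ≤ VV (M + d + e) A := by
    rintro _ ⟨x, rfl⟩
    rw [phi_apply]
    refine ⟨?_, fun P => O_add ?_ ?_⟩
    · refine IsHomogeneous.add ?_ ?_
      · exact (show e + (M + d) = M + d + e by omega) ▸ hg.mul x.1.2
      · exact (show d + (M + e) = M + d + e by omega) ▸ hC.hf.mul x.2.2
    · rw [mul_comm]; exact O_mul_left (hA P) _
    · exact O_of_dvd _ _ (dvd_mul_right _ _)
  have h4 := Submodule.finrank_mono h3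
  have := choose_arith (finrank_HS (k := k) (M + d)) (finrank_HS (k := k) (M + e)) (finrank_HS (k := k) M)
    (finrank_HS (k := k) (M + d + e))
  omega

/-- `B` is the divisor of `g` -/
def IsDiv (g : MvPolynomial (Fin 3) k) (B : PlanePoint f →₀ ℕ) : Prop :=
  ∀ P n, O P n g ↔ n ≤ B P

theorem IsDiv.ordAt {g : MvPolynomial (Fin 3) k} {B : PlanePoint f →₀ ℕ} (h : IsDiv g B) (P : PlanePoint f) :
    ordAt f P g = B P := by
  have : {n : ℕ | O P n g} = Set.Iic (B P) := by
    ext n; exact h P n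
  change sSup {n : ℕ | O P n g} = _
  rw [this, csSup_Iic]

theorem Curve.exists_div_aux (hC : Curve d f) {e : ℕ} {g : MvPolynomial (Fin 3) k} (hg : g.IsHomogeneous e)
    (hfg : ¬ f ∣ g) : ∃ B : PlanePoint f →₀ ℕ, IsDiv g B := by
  classical
  have hb : ∀ P : PlanePoint f, ∀ n, O P n g → n ≤ d * e := by
    intro P n hn
    have := hC.bezout_le hg hfg (Finsupp.single P n) (by
      intro R
      rw [Finsupp.single_apply]
      split_ifs with h
      · rw [← h]; exact hn
      · exact O_zero _ _)
    rwa [Finsupp.degree_single] at this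
  have hex : ∀ P : PlanePoint f, ∃ b, ∀ n, O P n g ↔ n ≤ b := by
    intro P
    refine ⟨Nat.findGreatest (fun n => O P n g) (d * e), fun n => ⟨fun h => Nat.le_findGreatest (hb P n h) h, fun h => ?_⟩⟩
    refine O_mono h ?_
    exact Nat.findGreatest_spec (P := fun n => O P n g) (Nat.zero_le _) (O_zero P g)
  choose b hbn using hex
  have hfin : (Function.support b).Finite := by
    by_contra hinf
    obtain ⟨s, hs, hcard⟩ := (show (Function.support b).Infinite from hinf).exists_subset_card_eq (d * e + 1)
    have := hC.bezout_le hg hfg (∑ P ∈ s, Finsupp.single P 1) (by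
      intro R
      rw [hbn]
      simp only [Finsupp.coe_finsetSum, Finset.sum_apply, Finsupp.single_apply]
      rw [Finset.sum_ite_eq']
      split_ifs with h
      · exact Nat.one_le_iff_ne_zero.2 (hs h)
      · exact Nat.zero_le _)
    rw [map_sum] at this
    simp only [Finsupp.degree_single, Finset.sum_const, smul_eq_mul, mul_one] at this
    omega
  exact ⟨Finsupp.ofSupportFinite b hfin, fun P n => hbn P n⟩

theorem Curve.noether (hC : Curve d f) {e b : ℕ} {g h : MvPolynomial (Fin 3) k} (hg : g.IsHomogeneous (e + b))
    (hh : h.IsHomogeneous b) (hfh : ¬ f ∣ h) {B : PlanePoint f →₀ ℕ} (hB : IsDiv h B)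
    (hgB : ∀ P, O P (B P) g) : ∃ c : MvPolynomial (Fin 3) k, c.IsHomogeneous e ∧ f ∣ g - c * h := by
  apply span_pair_hom hC.hf hh hg
  let I : Ideal (MvPolynomial (Fin 3) k) := (Ideal.span {f, h}).colon {g}
  have hI : ∀ s, s ∈ I ↔ s * g ∈ Ideal.span {f, h} := by
    intro s
    simp only [I, Submodule.mem_colon_singleton, smul_eq_mul]
  have hz : zeroLocus k I ⊆ {0} := by
    intro w hw
    rw [mem_zeroLocus_iff] at hw
    by_contra hw0
    rw [Set.mem_singleton_iff] at hw0
    obtain ⟨a, ha⟩ := Projectivization.exists_smul_eq_mk_rep k w hw0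
    have key : ∀ (s : MvPolynomial (Fin 3) k) (N : ℕ), s.IsHomogeneous N → s ∈ I →
        eval (Projectivization.mk k w hw0).rep s = 0 := by
      intro s N hs hsI
      have h1 := eval_smul_hom hs (a : k) w
      rw [hw s hsI, mul_zero] at h1
      rw [← ha]
      exact h1
    have hfI : f ∈ I := by
      rw [hI]; exact Ideal.mul_mem_right _ _ (Ideal.subset_span (by simp))
    let P : PlanePoint f := ⟨Projectivization.mk k w hw0, key f d hC.hf hfI⟩
    obtain ⟨s, N, hs, hs0, hsg⟩ := hC.O_noether (P := P) (n := B P) hg hh (hgB P) ((hB P _).2 le_rfl)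
      (fun h => by have := (hB P _).1 h; omega)
    exact hs0 (key s N hs ((hI s).2 hsg))
  have hX : ∀ i, X i ∈ I.radical := by
    intro i
    rw [← vanishingIdeal_zeroLocus_eq_radical (K := k), mem_vanishingIdeal_iff]
    intro x hx
    have := hz hx
    rw [Set.mem_singleton_iff] at this
    rw [this]; simp
  obtain ⟨a0, h0⟩ := hX 0
  obtain ⟨a1, h1⟩ := hX 1
  obtain ⟨a2, h2⟩ := hX 2
  exact koszul_pow hC.hp hfh _ a0 a1 a2 le_rfl g ((hI _).1 h0) ((hI _).1 h1) ((hI _).1 h2)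

theorem Curve.div_degree (hC : Curve d f) {e : ℕ} {g : MvPolynomial (Fin 3) k} (hg : g.IsHomogeneous e)
    (hfg : ¬ f ∣ g) {B : PlanePoint f →₀ ℕ} (hB : IsDiv g B) : B.degree = d * e := by
  apply le_antisymm (hC.bezout_le hg hfg B fun P => (hB P _).2 le_rfl)
  have h1 := hC.finrank_phi hg hfg 0
  have h2 := hC.VV_lower (0 + d + e) B.degree B rfl
  have h3 : VV (0 + d + e) B ≤ LinearMap.range (phi f g (0 + d) (0 + e)) := by
    intro p hp
    obtain ⟨c, hc, hcp⟩ := hC.noether (e := 0 + d) hp.1 hg hfg hB hp.2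
    obtain ⟨r, hr, hrp⟩ := dvd_hom (M := 0 + e) hC.hf
      ((show 0 + d + e = 0 + e + d by omega) ▸ IsHomogeneous.sub hp.1 (hc.mul hg)) hcp
    refine ⟨(⟨c, hc⟩, ⟨r, hr⟩), ?_⟩
    rw [phi_apply]
    linear_combination -hrp
  have h4 := Submodule.finrank_mono h3
  have := choose_arith (finrank_HS (k := k) (0 + d)) (finrank_HS (k := k) (0 + e)) (finrank_HS (k := k) 0)
    (finrank_HS (k := k) (0 + d + e))
  omega

theorem Curve.exists_div (hC : Curve d f) {e : ℕ} {g : MvPolynomial (Fin 3) k} (hg : g.IsHomogeneous e)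
    (hfg : ¬ f ∣ g) : ∃ B : PlanePoint f →₀ ℕ, IsDiv g B ∧ B.degree = d * e := by
  obtain ⟨B, hB⟩ := hC.exists_div_aux hg hfg
  exact ⟨B, hB, hC.div_degree hg hfg hB⟩

theorem Curve.isDiv_mul (hC : Curve d f) {e e' : ℕ} {g h : MvPolynomial (Fin 3) k} (hg : g.IsHomogeneous e)
    (hh : h.IsHomogeneous e') {A B : PlanePoint f →₀ ℕ} (hA : IsDiv g A) (hB : IsDiv h B) :
    IsDiv (g * h) (A + B) := by
  intro P n
  rw [Finsupp.add_apply]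
  constructor
  · intro h1
    by_contra h2
    refine hC.not_O_mul hg hh ((hA P _).2 le_rfl) (fun h => ?_) ((hB P _).2 le_rfl) (fun h => ?_)
      (O_mono (by omega) h1)
    · have := (hA P _).1 h; omega
    · have := (hB P _).1 h; omega
  · intro h1
    exact O_mono h1 (hC.O_mul hg hh ((hA P _).2 le_rfl) ((hB P _).2 le_rfl))

end Bezout
end PCurve
namespace PCurve
open MvPolynomial

section Geometry
variable {k : Type*} [Field k]
variable {d : ℕ} {f : MvPolynomial (Fin 3) k}

theorem hom_zero_C {c : MvPolynomial (Fin 3) k} (hc : c.IsHomogeneous 0) : ∃ r, c = C r :=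
  ⟨_, (totalDegree_eq_zero_iff_eq_C).1 (Nat.le_zero.1 hc.totalDegree_le)⟩

theorem prime_line {L : MvPolynomial (Fin 3) k} (hL : L.IsHomogeneous 1) (hL0 : L ≠ 0) : Prime L := by
  apply Irreducible.prime
  have hdeg := hL.totalDegree hL0
  apply irreducible_of_totalDegree_eq_one hdeg
  intro x hx
  by_contra hx0
  have h0 : x = 0 := by simpa using hx0
  apply hL0
  ext i
  simpa [h0] using hx i

theorem line_span {L M : MvPolynomial (Fin 3) k} (hL : L.IsHomogeneous 1) (hM : M.IsHomogeneous 1)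
    (h : L ∣ M) : M ∈ Submodule.span k {L} := by
  obtain ⟨c, hc, rfl⟩ := dvd_hom (M := 0) hL hM h
  obtain ⟨r, rfl⟩ := hom_zero_C hc
  rw [← smul_eq_C_mul]
  exact Submodule.smul_mem _ _ (Submodule.mem_span_singleton_self _)

theorem finrank_HS_one : Module.finrank k (HS k 1) = 3 := by
  have := finrank_HS (k := k) 1
  omega

variable [IsAlgClosed k]

theorem Curve.cayley_bacharach (hC : Curve d f) {m : ℕ} {G H q : MvPolynomial (Fin 3) k}
    {A E' : PlanePoint f →₀ ℕ} {P : PlanePoint f} (hG : G.IsHomogeneous m) (hfG : ¬ f ∣ G)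
    (hdiv : IsDiv G (A + (E' + Finsupp.single P 1))) (hH : H ∈ VV m A) (hHP : ¬ O P (A P + 1) H)
    (hq : q ∈ VV (d - 3) E') : O P (E' P + 1) q := by
  by_contra hqP
  have hd := hC.hd
  obtain ⟨L, hL, hL0, hL1, hL2⟩ := hC.transversal P
  have hfL := hC.not_dvd hL hL0 (by omega)
  obtain ⟨B, hB, -⟩ := hC.exists_div hL hfL
  have hBP : B P = 1 := by
    have h1 := (hB P 1).1 hL1
    have h2 : ¬ 2 ≤ B P := fun h => hL2 ((hB P 2).2 h)
    omega
  have hO : ∀ R, O R (A R + (B R + E' R)) (H * (L * q)) := fun R =>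
    hC.O_mul hH.1 (hL.mul hq.1) (hH.2 R) (hC.O_mul hL hq.1 ((hB R _).2 le_rfl) (hq.2 R))
  obtain ⟨K, hK, hKdvd⟩ := hC.noether (e := d - 2) (b := m) (g := H * (L * q))
    ((show m + (1 + (d - 3)) = d - 2 + m by omega) ▸ hH.1.mul (hL.mul hq.1)) hG hfG hdiv (by
      classical
      intro R
      refine O_mono ?_ (hO R)
      simp only [Finsupp.add_apply, Finsupp.single_apply]
      split_ifs with h
      · rw [← h, hBP]; omega
      · omega)
  have hKP : ¬ O P 1 K := by
    intro h1
    have h2 := hC.O_mul hK hG h1 ((hdiv P _).2 le_rfl)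
    have h3 : O P (A P + (1 + E' P) + 1) (H * (L * q)) := by
      refine O_congr (g := K * G) ?_ (O_mono ?_ h2)
      · rw [dvd_sub_comm]; exact hKdvd
      · simp only [Finsupp.add_apply, Finsupp.single_eq_same]; omega
    exact hC.not_O_mul hH.1 (hL.mul hq.1) (hH.2 P) hHP (hC.O_mul hL hq.1 hL1 (hq.2 P))
      (hC.not_O_mul hL hq.1 hL1 hL2 (hq.2 P) hqP) h3
  have hfK : ¬ f ∣ K := fun h => hKP (O_of_dvd P 1 h)
  obtain ⟨BK, hBK, -⟩ := hC.exists_div hK hfK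
  have hKG := hC.isDiv_mul hK hG hBK hdiv
  have hKL : ∀ R, R ≠ P → B R ≤ BK R := by
    intro R hR
    have h1 := (hKG R _).1 (O_congr hKdvd (hO R))
    simp only [Finsupp.add_apply, Finsupp.single_eq_of_ne hR] at h1
    omega
  obtain ⟨M, hM, hML⟩ : ∃ M ∈ VV 1 (Finsupp.single P 1), M ∉ Submodule.span k {L} := by
    rw [← SetLike.not_le_iff_exists]
    intro hle
    have h1 := Submodule.finrank_mono hle
    have h2 : Module.finrank k (Submodule.span k {L}) ≤ 1 := (finrank_span_le_card {L}).trans (by simp)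
    have h3 := hC.VV_lower 1 1 (Finsupp.single P 1) (Finsupp.degree_single _ _)
    rw [finrank_HS_one] at h3
    omega
  obtain ⟨c, hc, hcdvd⟩ := hC.noether (e := d - 2) (b := 1) (g := M * K)
    ((show 1 + (d - 2) = d - 2 + 1 by omega) ▸ hM.1.mul hK) hL hfL hB (by
      intro R
      by_cases hR : R = P
      · subst hR
        have := hM.2 R
        rw [Finsupp.single_eq_same] at this
        rw [mul_comm, hBP]; exact O_mul_left this _
      · exact O_mul_left ((hBK R _).2 (hKL R hR)) _)
  have heq : M * K - c * L = 0 := by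
    by_contra hne
    refine hC.not_dvd (e := 1 + (d - 2)) (IsHomogeneous.sub (hM.1.mul hK) ?_) hne (by omega) hcdvd
    exact (show d - 2 + 1 = 1 + (d - 2) by omega) ▸ hc.mul hL
  have hdv : L ∣ M * K := ⟨c, by linear_combination heq⟩
  rcases (prime_line hL hL0).dvd_mul.1 hdv with h | h
  · exact hML (line_span hL hM.1 h)
  · obtain ⟨r, rfl⟩ := h
    apply hKP
    rw [mul_comm]
    exact O_mul_left hL1 _

theorem Curve.pencil (hC : Curve d f) {m : ℕ} {G H : MvPolynomial (Fin 3) k} (hG : G.IsHomogeneous m)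
    (hfG : ¬ f ∣ G) (hGH : ∀ c, ¬ f ∣ H - C c * G) :
    ∀ (n : ℕ) (A E : PlanePoint f →₀ ℕ), n ≤ d - 1 → E.degree = n → IsDiv G (A + E) → H ∈ VV m A →
    n = d - 1 ∧ ∃ L : MvPolynomial (Fin 3) k, L.IsHomogeneous 1 ∧ L ≠ 0 ∧ ∀ R, O R (E R) L := by
  classical
  have hd := hC.hd
  intro n
  induction n with
  | zero =>
    intro A E _ hE hdiv hH
    exfalso
    rw [Finsupp.degree_eq_zero_iff] at hE
    subst hE
    rw [add_zero] at hdiv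
    obtain ⟨c, hc, hcd⟩ := hC.noether (e := 0) (b := m) (by rw [zero_add]; exact hH.1) hG hfG hdiv hH.2
    obtain ⟨r, rfl⟩ := hom_zero_C hc
    exact hGH r hcd
  | succ n ih =>
    intro A E hn hE hdiv hH
    by_cases hex : ∃ P, E P ≠ 0 ∧ O P (A P + 1) H
    · exfalso
      obtain ⟨P, hP, hHP⟩ := hex
      obtain ⟨E', rfl, hE'⟩ := finsupp_step hP
      have := ih (A + Finsupp.single P 1) E' (by omega) (by omega)
        (by rwa [add_assoc, add_comm (Finsupp.single P 1)]) ⟨hH.1, fun R => by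
          rw [Finsupp.add_apply, Finsupp.single_apply]
          split_ifs with h
          · rw [← h]; exact hHP
          · exact hH.2 R⟩
      omega
    · push Not at hex
      have CB : ∀ E' P, E = E' + Finsupp.single P 1 → ∀ q ∈ VV (d - 3) E', O P (E' P + 1) q := by
        intro E' P hEE q hq
        subst hEE
        exact hC.cayley_bacharach hG hfG hdiv hH (hex P (by simp)) hq
      rcases Nat.lt_or_ge (n + 1) (d - 1) with hlt | hge
      · exfalso
        obtain ⟨P, hP⟩ := finsupp_ne hE
        obtain ⟨E', hEE, hE'⟩ := finsupp_step hP
        obtain ⟨q, hq1, hq2, hq3⟩ := hC.exists_form P (d - 3) n E' (by omega) (by omega)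
        exact hq3 (CB E' P hEE q ⟨hq1, hq2⟩)
      · refine ⟨by omega, ?_⟩
        obtain ⟨P0, hP0⟩ := finsupp_ne hE
        obtain ⟨E', hEE, hE'⟩ := finsupp_step hP0
        obtain ⟨P1, hP1⟩ := finsupp_ne (n := n - 1) (A := E') (by omega)
        obtain ⟨E'', hEE', hE''⟩ := finsupp_step hP1
        have hEdec : E = E'' + (Finsupp.single P1 1 + Finsupp.single P0 1) := by
          rw [hEE, hEE', add_assoc]
        obtain ⟨L, hL, hL0⟩ : ∃ L ∈ VV 1 (Finsupp.single P1 1 + Finsupp.single P0 1), L ≠ 0 := by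
          have h3 := hC.VV_lower 1 2 (Finsupp.single P1 1 + Finsupp.single P0 1)
            (by rw [map_add, Finsupp.degree_single, Finsupp.degree_single])
          rw [finrank_HS_one] at h3
          apply Submodule.exists_mem_ne_zero_of_ne_bot
          intro hbot
          rw [hbot, finrank_bot] at h3
          omega
        have hfL := hC.not_dvd hL.1 hL0 (by omega)
        obtain ⟨B, hB, -⟩ := hC.exists_div hL.1 hfL
        refine ⟨L, hL.1, hL0, ?_⟩
        by_contra hcon
        push Not at hcon
        obtain ⟨P, hP⟩ := hcon
        rw [hB] at hP
        push Not at hP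
        let T := E ⊓ B
        have hT2 : 2 ≤ T.degree := by
          have hle : Finsupp.single P1 1 + Finsupp.single P0 1 ≤ T := by
            refine le_inf ?_ ?_
            · rw [hEdec]; exact le_add_self
            · intro R; exact (hB R _).1 (hL.2 R)
          have := Finsupp.degree_mono hle
          rwa [map_add, Finsupp.degree_single, Finsupp.degree_single] at this
        obtain ⟨U, hU⟩ := exists_add_of_le (show T ≤ E from inf_le_left)
        have hTP : T P = B P := by
          simp only [T, Finsupp.inf_apply]; omega
        have hEP : E P = T P + U P := by rw [hU]; rfl
        obtain ⟨U', hUU, hU'⟩ := finsupp_step (A := U) (Q := P) (by omega)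
        have hdegs : E.degree = T.degree + U.degree := by rw [hU, map_add]
        obtain ⟨q, hq1, hq2, hq3⟩ := hC.exists_form P (d - 4) (U'.degree + 0) U' rfl (by omega)
        have h1 := CB (T + U') P (by rw [hU, hUU, add_assoc]) (L * q) ⟨?_, ?_⟩
        · refine hC.not_O_mul hL.1 hq1 ((hB P _).2 le_rfl) (fun h => ?_) (hq2 P) hq3 ?_
          · have := (hB P _).1 h; omega
          · rwa [Finsupp.add_apply, hTP] at h1
        · exact (show 1 + (d - 4) = d - 3 by omega) ▸ hL.1.mul hq1
        · intro R
          refine O_mono ?_ (hC.O_mul hL.1 hq1 ((hB R _).2 le_rfl) (hq2 R))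
          rw [Finsupp.add_apply]
          have : T R ≤ B R := by simp only [T, Finsupp.inf_apply]; omega
          omega

end Geometry
end PCurve
namespace PCurve
open MvPolynomial

section Main
variable {k : Type*} [Field k]
variable {d : ℕ} {f : MvPolynomial (Fin 3) k}

/-- multiples of `f` of degree `m` -/
noncomputable def JJ (f : MvPolynomial (Fin 3) k) (m : ℕ) : Submodule k (MvPolynomial (Fin 3) k) :=
  HS k m ⊓ (Ideal.span {f}).restrictScalars k

theorem mem_JJ {m : ℕ} {g : MvPolynomial (Fin 3) k} : g ∈ JJ f m ↔ g.IsHomogeneous m ∧ f ∣ g := by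
  rw [JJ, Submodule.mem_inf, Submodule.restrictScalars_mem, Ideal.mem_span_singleton]
  rfl

theorem JJ_le_VV (m : ℕ) (A : PlanePoint f →₀ ℕ) : JJ f m ≤ VV m A := by
  intro g hg
  rw [mem_JJ] at hg
  exact ⟨hg.1, fun P => O_of_dvd P _ hg.2⟩

instance JJ_fin (m : ℕ) : Module.Finite k (JJ f m) :=
  Submodule.finiteDimensional_of_le (inf_le_left : JJ f m ≤ HS k m)

theorem exists_one {m : ℕ} {A : PlanePoint f →₀ ℕ}
    (h : Module.finrank k (JJ f m) + 1 ≤ Module.finrank k (VV m A)) : ∃ G ∈ VV m A, ¬ f ∣ G := by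
  by_contra hcon
  push Not at hcon
  have := Submodule.finrank_mono (show VV m A ≤ JJ f m from fun g hg => mem_JJ.2 ⟨hg.1, hcon g hg⟩)
  omega

theorem exists_two {m : ℕ} {A : PlanePoint f →₀ ℕ}
    (h : Module.finrank k (JJ f m) + 2 ≤ Module.finrank k (VV m A)) (G : MvPolynomial (Fin 3) k)
    (hG : G.IsHomogeneous m) : ∃ H ∈ VV m A, ∀ c, ¬ f ∣ H - C c * G := by
  by_contra hcon
  push Not at hcon
  have h1 := Submodule.finrank_mono (show VV m A ≤ JJ f m ⊔ Submodule.span k {G} from fun g hg => by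
    obtain ⟨c, hc⟩ := hcon g hg
    rw [← smul_eq_C_mul] at hc
    have : g = (g - c • G) + c • G := by abel
    rw [this]
    exact Submodule.add_mem_sup (mem_JJ.2 ⟨IsHomogeneous.sub hg.1 ((HS k m).smul_mem c hG), hc⟩)
      (Submodule.smul_mem _ _ (Submodule.mem_span_singleton_self _)))
  have h2 := Submodule.finrank_add_le_finrank_add_finrank (JJ f m) (Submodule.span k {G})
  have h3 : Module.finrank k (Submodule.span k {G}) ≤ 1 := (finrank_span_le_card {G}).trans (by simp)
  omega

variable [IsAlgClosed k]

theorem Curve.exists_point (hC : Curve d f) : Nonempty (PlanePoint f) := by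
  have hd := hC.hd
  have h0 : (X 0 : MvPolynomial (Fin 3) k) ≠ 0 := X_ne_zero 0
  have h1 := isHomogeneous_X k (0 : Fin 3)
  obtain ⟨B, -, hB⟩ := hC.exists_div h1 (hC.not_dvd h1 h0 (by omega))
  obtain ⟨P, -⟩ := finsupp_ne (n := d - 1) (A := B) (by omega)
  exact ⟨P⟩

theorem Curve.pencil' (hC : Curve d f) {m : ℕ} {G : MvPolynomial (Fin 3) k} (hG : G.IsHomogeneous m)
    (hfG : ¬ f ∣ G) {A E : PlanePoint f →₀ ℕ} (hdiv : IsDiv G (A + E)) (hE : E.degree ≤ d - 1)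
    (h : Module.finrank k (JJ f m) + 2 ≤ Module.finrank k (VV m A)) :
    E.degree = d - 1 ∧ ∃ L : MvPolynomial (Fin 3) k, L.IsHomogeneous 1 ∧ L ≠ 0 ∧ ∀ R, O R (E R) L := by
  obtain ⟨H, hH, hGH⟩ := exists_two h G hG
  exact hC.pencil hG hfG hGH _ A E hE rfl hdiv hH

theorem Curve.exists_div_ge (hC : Curve d f) {e : ℕ} {g : MvPolynomial (Fin 3) k} (hg : g.IsHomogeneous e)
    (hfg : ¬ f ∣ g) {A : PlanePoint f →₀ ℕ} (hA : ∀ P, O P (A P) g) :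
    ∃ E, IsDiv g (A + E) ∧ A.degree + E.degree = d * e := by
  obtain ⟨B, hB, hBd⟩ := hC.exists_div hg hfg
  obtain ⟨E, rfl⟩ := exists_add_of_le (show A ≤ B from fun P => (hB P _).1 (hA P))
  exact ⟨E, hB, by rw [← map_add, hBd]⟩

theorem Curve.line_unique (hC : Curve d f) {T : PlanePoint f →₀ ℕ} (hT : 2 ≤ T.degree)
    {L L' : MvPolynomial (Fin 3) k} (hL : L.IsHomogeneous 1) (hL' : L'.IsHomogeneous 1) (hL0 : L' ≠ 0)
    (h : ∀ R, O R (T R) L) (h' : ∀ R, O R (T R) L') : ∃ c : k, L = c • L' := by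
  obtain ⟨P, hP⟩ := finsupp_ne (n := T.degree - 1) (A := T) (by omega)
  obtain ⟨T', rfl, hT'⟩ := finsupp_step hP
  obtain ⟨Q, hQ⟩ := finsupp_ne (n := T'.degree - 1) (A := T') (by omega)
  obtain ⟨T'', rfl, hT''⟩ := finsupp_step hQ
  let W := VV 1 (Finsupp.single Q 1 + Finsupp.single P 1)
  have hmem : ∀ M : MvPolynomial (Fin 3) k, M.IsHomogeneous 1 →
      (∀ R, O R ((T'' + Finsupp.single Q 1 + Finsupp.single P 1 : PlanePoint f →₀ ℕ) R) M) → M ∈ W := by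
    intro M hM hR
    refine ⟨hM, fun R => O_mono ?_ (hR R)⟩
    rw [add_assoc]
    simp only [Finsupp.add_apply]; omega
  have hle : Module.finrank k W ≤ 1 := by
    have h1 := hC.VV_upper 1 1 (Finsupp.single Q 1) (Finsupp.degree_single _ _) le_rfl
    rw [finrank_HS_one] at h1
    obtain ⟨q, hq1, hq2, hq3⟩ := hC.exists_form P 1 1 (Finsupp.single Q 1) (Finsupp.degree_single _ _) le_rfl
    have hlt : W < VV 1 (Finsupp.single Q 1) := by
      refine lt_of_le_of_ne (VV_mono (fun P => by simp)) ?_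
      intro heq
      have : q ∈ W := by rw [heq]; exact ⟨hq1, hq2⟩
      have := this.2 P
      rw [Finsupp.add_apply, Finsupp.single_eq_same (a := P)] at this
      exact hq3 this
    have := Submodule.finrank_lt_finrank_of_lt hlt
    omega
  have hspan : Submodule.span k {L'} = W := by
    apply Submodule.eq_of_le_of_finrank_le
    · rw [Submodule.span_singleton_le_iff_mem]; exact hmem L' hL' h'
    · rw [finrank_span_singleton hL0]; exact hle
  have : L ∈ Submodule.span k {L'} := by rw [hspan]; exact hmem L hL h
  obtain ⟨c, hc⟩ := Submodule.mem_span_singleton.1 this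
  exact ⟨c, hc.symm⟩

theorem Curve.geo (hC : Curve d f) {m : ℕ} {A : PlanePoint f →₀ ℕ} (hA : A.degree + d = d * m)
    (h3 : Module.finrank k (JJ f m) + 3 ≤ Module.finrank k (VV m A)) :
    Module.finrank k (VV m A) = Module.finrank k (JJ f m) + 3 ∧
    ∃ (L G : MvPolynomial (Fin 3) k) (B : PlanePoint f →₀ ℕ), L.IsHomogeneous 1 ∧ L ≠ 0 ∧ G.IsHomogeneous m ∧
      ¬ f ∣ G ∧ IsDiv L B ∧ IsDiv G (A + B) := by
  classical
  have hd := hC.hd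
  obtain ⟨P⟩ := hC.exists_point
  let A1 := A + Finsupp.single P 1
  let A2 := A1 + Finsupp.single P 1
  have hA1 : A1.degree = A.degree + 1 := by simp only [A1, map_add, Finsupp.degree_single]
  have hA2 : A2.degree = A.degree + 2 := by simp only [A2, map_add, Finsupp.degree_single, hA1]
  have c1 : Module.finrank k (VV m A) ≤ Module.finrank k (VV m A1) + 1 := hC.VV_codim m A P
  have c2 : Module.finrank k (VV m A1) ≤ Module.finrank k (VV m A2) + 1 := hC.VV_codim m A1 P
  have hn2 : ¬ Module.finrank k (JJ f m) + 2 ≤ Module.finrank k (VV m A2) := by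
    intro h2
    obtain ⟨G, hG, hfG⟩ := exists_one (f := f) (m := m) (A := A2) (by omega)
    obtain ⟨E, hE, hEd⟩ := hC.exists_div_ge hG.1 hfG hG.2
    have := hC.pencil' hG.1 hfG hE (by omega) h2
    omega
  refine ⟨by omega, ?_⟩
  obtain ⟨G, hG, hG2⟩ : ∃ G ∈ VV m A1, G ∉ VV m A2 := by
    rw [← SetLike.not_le_iff_exists]
    intro hle
    have := Submodule.finrank_mono hle
    omega
  have hfG : ¬ f ∣ G := fun h => hG2 (JJ_le_VV m A2 (mem_JJ.2 ⟨hG.1, h⟩))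
  obtain ⟨E, hE, hEd⟩ := hC.exists_div_ge hG.1 hfG hG.2
  have hEP : E P = 0 := by
    by_contra hne
    apply hG2
    refine ⟨hG.1, fun R => (hE R _).2 ?_⟩
    simp only [A2, Finsupp.add_apply, Finsupp.single_apply]
    split_ifs with h
    · subst h; omega
    · omega
  obtain ⟨hEd1, L, hL, hL0, hLE⟩ := hC.pencil' hG.1 hfG hE (by omega) (by omega)
  obtain ⟨P', hP'⟩ := finsupp_ne (n := d - 2) (A := E) (by omega)
  obtain ⟨T, rfl, hT⟩ := finsupp_step hP'
  have hPP : P' ≠ P := by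
    rintro rfl; exact hP' hEP
  have hTP : T P = 0 := by
    rw [Finsupp.add_apply] at hEP; omega
  have c3 := hC.VV_codim m A P'
  obtain ⟨-, L', hL', hL0', hLE'⟩ := hC.pencil' (A := A + Finsupp.single P' 1) (E := T + Finsupp.single P 1) hG.1 hfG
    (by
      have : A + Finsupp.single P' 1 + (T + Finsupp.single P 1) = A1 + (T + Finsupp.single P' 1) := by
        simp only [A1]; abel
      rwa [this])
    (by rw [map_add, Finsupp.degree_single]; omega) (by omega)
  obtain ⟨c, hc⟩ := hC.line_unique (T := T) (by omega) hL hL' hL0'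
    (fun R => O_mono (by simp) (hLE R)) (fun R => O_mono (by simp) (hLE' R))
  obtain ⟨X, hX, hXd⟩ := hC.exists_div_ge (A := T + Finsupp.single P' 1 + Finsupp.single P 1) hL
    (hC.not_dvd hL hL0 (by omega)) (by
      intro R
      rw [Finsupp.add_apply, Finsupp.single_apply]
      split_ifs with h
      · subst h
        have := hLE' P
        rw [Finsupp.add_apply, Finsupp.single_eq_same, hTP] at this
        rw [hEP, hc]
        exact O_smul c this
      · exact hLE R)
  have hX0 : X = 0 := by
    rw [← Finsupp.degree_eq_zero_iff]
    rw [map_add, Finsupp.degree_single] at hXd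
    omega
  rw [hX0, add_zero] at hX
  refine ⟨L, G, _, hL, hL0, hG.1, hfG, hX, ?_⟩
  have : A + (T + Finsupp.single P' 1 + Finsupp.single P 1) = A1 + (T + Finsupp.single P' 1) := by
    simp only [A1]; abel
  rwa [this]

end Main
end PCurve
namespace PCurve
open MvPolynomial

section Final
variable {k : Type*} [Field k]
variable {d : ℕ} {f : MvPolynomial (Fin 3) k}

theorem curve_of (hd : 4 ≤ d) (hf : f.IsHomogeneous d)
    (hsm : ∀ v : Fin 3 → k, MvPolynomial.eval v f = 0 →
      (∀ i : Fin 3, MvPolynomial.eval v (MvPolynomial.pderiv i f) = 0) → v = 0)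
    (F : Type*) [Field F]
    [Algebra (MvPolynomial (Fin 3) k ⧸ Ideal.span {f}) F]
    [IsFractionRing (MvPolynomial (Fin 3) k ⧸ Ideal.span {f}) F] : Curve d f := by
  refine ⟨hd, hf, ?_, hsm⟩
  have hdom : IsDomain (MvPolynomial (Fin 3) k ⧸ Ideal.span {f}) :=
    (IsFractionRing.injective (MvPolynomial (Fin 3) k ⧸ Ideal.span {f}) F).isDomain
      (algebraMap (MvPolynomial (Fin 3) k ⧸ Ideal.span {f}) F)
  have hpr := (Ideal.Quotient.isDomain_iff_prime _).1 hdom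
  refine (Ideal.span_singleton_prime ?_).1 hpr
  rintro rfl
  have := congrFun (hsm (fun _ => 1) (by simp) (by simp)) 0
  simp at this

theorem degree_int {α : Type*} (D : α →₀ ℤ) :
    ((D.mapRange Int.toNat rfl).degree : ℤ) - ((D.mapRange (fun n => (-n).toNat) rfl).degree : ℤ)
      = D.sum (fun _ n => n) := by
  classical
  have h1 : ∀ (g : ℤ → ℕ) (hg : g 0 = 0), (D.mapRange g hg).degree = ∑ i ∈ D.support, g (D i) := by
    intro g hg
    rw [Finsupp.degree_apply]
    rw [Finset.sum_subset Finsupp.support_mapRange]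
    · rfl
    · intro x _ hx
      simpa using hx
  rw [h1, h1, Finsupp.sum]
  push_cast
  rw [← Finset.sum_sub_distrib]
  refine Finset.sum_congr rfl fun i _ => ?_
  omega

variable [IsAlgClosed k]

/-- the map `g ↦ g / G` -/
noncomputable def theta (f G : MvPolynomial (Fin 3) k) (F : Type*) [Field F]
    [Algebra (MvPolynomial (Fin 3) k ⧸ Ideal.span {f}) F]
    [Algebra k F] [IsScalarTower k (MvPolynomial (Fin 3) k ⧸ Ideal.span {f}) F] :
    MvPolynomial (Fin 3) k →ₗ[k] F :=
  (LinearMap.mulRight k (algebraMap (MvPolynomial (Fin 3) k ⧸ Ideal.span {f}) F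
    (Ideal.Quotient.mk (Ideal.span {f}) G))⁻¹).comp
  ((IsScalarTower.toAlgHom k (MvPolynomial (Fin 3) k ⧸ Ideal.span {f}) F).toLinearMap.comp
    (Ideal.Quotient.mkₐ k (Ideal.span {f})).toLinearMap)

section
variable {F : Type*} [Field F]
    [Algebra (MvPolynomial (Fin 3) k ⧸ Ideal.span {f}) F]
    [IsFractionRing (MvPolynomial (Fin 3) k ⧸ Ideal.span {f}) F]

theorem al_eq_zero (g : MvPolynomial (Fin 3) k) :
    algebraMap (MvPolynomial (Fin 3) k ⧸ Ideal.span {f}) F (Ideal.Quotient.mk (Ideal.span {f}) g) = 0 ↔ f ∣ g := by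
  rw [map_eq_zero_iff _ (IsFractionRing.injective (MvPolynomial (Fin 3) k ⧸ Ideal.span {f}) F),
    Ideal.Quotient.eq_zero_iff_mem, Ideal.mem_span_singleton]

theorem al_eq {g h : MvPolynomial (Fin 3) k} (hgh : f ∣ g - h) :
    algebraMap (MvPolynomial (Fin 3) k ⧸ Ideal.span {f}) F (Ideal.Quotient.mk (Ideal.span {f}) g)
    = algebraMap (MvPolynomial (Fin 3) k ⧸ Ideal.span {f}) F (Ideal.Quotient.mk (Ideal.span {f}) h) := by
  rw [← sub_eq_zero, ← map_sub, ← map_sub]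
  exact (al_eq_zero _).2 hgh

variable [Algebra k F] [IsScalarTower k (MvPolynomial (Fin 3) k ⧸ Ideal.span {f}) F]

theorem theta_apply (G g : MvPolynomial (Fin 3) k) : theta f G F g =
    algebraMap (MvPolynomial (Fin 3) k ⧸ Ideal.span {f}) F (Ideal.Quotient.mk (Ideal.span {f}) g) *
    (algebraMap (MvPolynomial (Fin 3) k ⧸ Ideal.span {f}) F (Ideal.Quotient.mk (Ideal.span {f}) G))⁻¹ := rfl

theorem Curve.RR_eq (hC : Curve d f) {m : ℕ} {G : MvPolynomial (Fin 3) k} (hG : G.IsHomogeneous m)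
    (hfG : ¬ f ∣ G) {A B : PlanePoint f →₀ ℕ} (hB : IsDiv G B) {D : PlanePoint f → ℤ}
    (hD : ∀ P, (B P : ℤ) = A P + D P) :
    RRspace F f D = ((VV m A).map (theta f G F) : Set F) := by
  have hG0 := fun h => hfG ((al_eq_zero (F := F) G).1 h)
  ext φ
  constructor
  · rintro (rfl | ⟨e, g, h, hg, hh, hfg, hfh, hφ, hord⟩)
    · exact Submodule.zero_mem _
    · obtain ⟨Bg, hBg, -⟩ := hC.exists_div hg hfg
      obtain ⟨Bh, hBh, -⟩ := hC.exists_div hh hfh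
      have hord' : ∀ P, Bh P + A P ≤ Bg P + B P := by
        intro P
        have h1 := hord P
        rw [hBg.ordAt, hBh.ordAt] at h1
        have h2 := hD P
        omega
      have hgG := hC.isDiv_mul hg hG hBg hB
      obtain ⟨c, hc, hcd⟩ := hC.noether (e := m) (b := e) (g := g * G)
        ((show e + m = m + e by omega) ▸ hg.mul hG) hh hfh hBh (fun P => (hgG P _).2 (by
          rw [Finsupp.add_apply]; have := hord' P; omega))
      have hfc : ¬ f ∣ c := by
        intro h1
        have h2 : f ∣ g * G := by
          have := dvd_add hcd (Dvd.dvd.mul_right h1 h)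
          rwa [sub_add_cancel] at this
        rcases hC.hp.dvd_mul.1 h2 with h3 | h3
        · exact hfg h3
        · exact hfG h3
      obtain ⟨Bc, hBc, -⟩ := hC.exists_div hc hfc
      have hch := hC.isDiv_mul hc hh hBc hBh
      have hcV : c ∈ VV m A := by
        refine ⟨hc, fun P => (hBc P _).2 ?_⟩
        have h1 := (hch P _).1 (O_congr hcd ((hgG P _).2 le_rfl))
        simp only [Finsupp.add_apply] at h1
        have := hord' P
        omega
      refine ⟨c, hcV, ?_⟩
      rw [theta_apply, ← div_eq_mul_inv, div_eq_iff hG0]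
      have hh0 := fun h' => hfh ((al_eq_zero (F := F) h).1 h')
      apply mul_right_cancel₀ hh0
      have h1 := al_eq (F := F) hcd
      simp only [map_mul] at h1
      rw [← h1, mul_right_comm, hφ]
  · rintro ⟨g, hg, rfl⟩
    by_cases hfg : f ∣ g
    · left
      rw [theta_apply, (al_eq_zero g).2 hfg, zero_mul]
    · right
      refine ⟨m, g, G, hg.1, hG, hfg, hfG, ?_, ?_⟩
      · rw [theta_apply, inv_mul_cancel_right₀ hG0]
      · intro P
        obtain ⟨Bg, hBg, -⟩ := hC.exists_div hg.1 hfg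
        rw [hBg.ordAt, hB.ordAt]
        have h1 := (hBg P _).1 (hg.2 P)
        have h2 := hD P
        omega

theorem Curve.h0_eq (hC : Curve d f) {m : ℕ} {G : MvPolynomial (Fin 3) k} (hG : G.IsHomogeneous m)
    (hfG : ¬ f ∣ G) {A B : PlanePoint f →₀ ℕ} (hB : IsDiv G B) {D : PlanePoint f → ℤ}
    (hD : ∀ P, (B P : ℤ) = A P + D P) :
    h0 F f D + Module.finrank k (JJ f m) = Module.finrank k (VV m A) := by
  have hG0 := fun h => hfG ((al_eq_zero (F := F) G).1 h)
  rw [h0, hC.RR_eq hG hfG hB hD, Submodule.span_eq]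
  have h1 := LinearMap.finrank_range_add_finrank_ker ((theta f G F).domRestrict (VV m A))
  rw [← h1, LinearMap.range_domRestrict]
  congr 1
  have h2 : (LinearMap.ker ((theta f G F).domRestrict (VV m A))).map (VV m A).subtype = JJ f m := by
    ext g
    rw [mem_JJ, Submodule.mem_map]
    constructor
    · rintro ⟨x, hx, rfl⟩
      refine ⟨x.2.1, ?_⟩
      rw [LinearMap.mem_ker, LinearMap.domRestrict_apply, theta_apply, mul_eq_zero] at hx
      exact (al_eq_zero (F := F) _).1 (hx.resolve_right (inv_ne_zero hG0))
    · rintro ⟨hg, hfg⟩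
      refine ⟨⟨g, JJ_le_VV m A (mem_JJ.2 ⟨hg, hfg⟩)⟩, ?_, rfl⟩
      rw [LinearMap.mem_ker, LinearMap.domRestrict_apply, theta_apply, (al_eq_zero g).2 hfg, zero_mul]
  rw [← h2]
  exact (Submodule.equivSubtypeMap _ _).finrank_eq.symm

end

end Final
end PCurve
/-- A smooth plane curve `C ⊆ ℙ²_k` of degree `d ≥ 4` over an algebraically closed field has
at most one `g²_d`, which is the complete linear series of the plane embedding: every divisor
`D` of degree `d` with `ℓ(D) ≥ 3` satisfies `ℓ(D) = 3` and is linearly equivalent to the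
intersection divisor of `C` with a line (i.e. the corresponding line bundle is `O_C(1)`). -/
theorem unique_g2d
    (k : Type*) [Field k] [IsAlgClosed k]
    (d : ℕ) (hd : 4 ≤ d) (f : MvPolynomial (Fin 3) k) (hf : f.IsHomogeneous d)
    (hsm : ∀ v : Fin 3 → k, MvPolynomial.eval v f = 0 →
      (∀ i : Fin 3, MvPolynomial.eval v (MvPolynomial.pderiv i f) = 0) → v = 0)
    (F : Type*) [Field F]
    [Algebra (MvPolynomial (Fin 3) k ⧸ Ideal.span {f}) F]
    [IsFractionRing (MvPolynomial (Fin 3) k ⧸ Ideal.span {f}) F]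
    [Algebra k F] [IsScalarTower k (MvPolynomial (Fin 3) k ⧸ Ideal.span {f}) F]
    (D : PlanePoint f →₀ ℤ) (hdeg : D.sum (fun _ n => n) = (d : ℤ))
    (h3 : 3 ≤ h0 F f (fun q => D q)) :
    h0 F f (fun q => D q) = 3 ∧
    ∃ (l g h : MvPolynomial (Fin 3) k) (e : ℕ),
      l.IsHomogeneous 1 ∧ l ≠ 0 ∧
      g.IsHomogeneous e ∧ h.IsHomogeneous e ∧ ¬ f ∣ g ∧ ¬ f ∣ h ∧
      ∀ q : PlanePoint f,
        (D q : ℤ) - (ordAt f q l : ℤ) = (ordAt f q g : ℤ) - (ordAt f q h : ℤ) := by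
  classical
  have hC : PCurve.Curve d f := PCurve.curve_of hd hf hsm F
  obtain ⟨P⟩ := hC.exists_point
  let Dp : PlanePoint f →₀ ℕ := D.mapRange Int.toNat rfl
  let Dm : PlanePoint f →₀ ℕ := D.mapRange (fun n => (-n).toNat) rfl
  have hDeg : (Dp.degree : ℤ) - (Dm.degree : ℤ) = d := by
    rw [← hdeg]; exact PCurve.degree_int D
  obtain ⟨G0, hG0, hG0D, hG0P⟩ := hC.exists_form P Dp.degree Dp.degree Dp rfl le_rfl
  have hfG0 : ¬ f ∣ G0 := fun h => hG0P (PCurve.O_of_dvd P _ h)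
  obtain ⟨E, hE, hEd⟩ := hC.exists_div_ge hG0 hfG0 hG0D
  have hD : ∀ R, (((Dp + E) R : ℕ) : ℤ) = ((E + Dm) R : ℕ) + D R := by
    intro R
    have h1 : Dp R = (D R).toNat := rfl
    have h2 : Dm R = (-(D R)).toNat := rfl
    rw [Finsupp.add_apply, Finsupp.add_apply, h1, h2]
    omega
  have hh : h0 F f (fun q => D q) + Module.finrank k (PCurve.JJ f Dp.degree)
      = Module.finrank k (PCurve.VV Dp.degree (E + Dm)) := hC.h0_eq (F := F) hG0 hfG0 hE hD
  have hAdeg : (E + Dm).degree + d = d * Dp.degree := by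
    rw [map_add]
    omega
  obtain ⟨h4, L, G, B, hL, hL0, hG, hfG, hBL, hBG⟩ := hC.geo hAdeg (by omega)
  refine ⟨by omega, L, G0, G, _, hL, hL0, hG0, hG, hfG0, hfG, fun q => ?_⟩
  rw [hBL.ordAt, hE.ordAt, hBG.ordAt, hD q, Finsupp.add_apply (E + Dm) B]
  push_cast
  ring
end
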